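/- Let n ≥ 3, s₁, s₂ ∈ (0,1), a₁, a₂ ≥ 0, and let Ω ⊂ ℝⁿ be a bounded C² domain that is strictly star-shaped. Let α, β, p, q > 1 and λ₁, λ₂, δ ∈ ℝ, and set 2* = 2n/(n−2). Suppose u, v ∈ C²(Ω) ∩ C(ℝⁿ) solve the system −Δu + a₁(−Δ)^{s₁}u = λ₁|u|^{p−2}u + δα|u|^{α−2}u|v|^{β} in Ω, −Δv + a₂(−Δ)^{s₂}v = λ₂|v|^{q−2}v + δβ|u|^{α}|v|^{β−2}v in Ω, with u = 0 and v = 0 in Ωᶜ. Assume δ[(α+β) − 2*] ≥ 0, λ₁(p − 2*) ≥ 0, and λ₂(q − 2*) ≥ 0. If moreover λ₁(p − 2*) > 0 and λ₂(q − 2*) > 0, then u ≡ 0 and v ≡ 0 in ℝⁿ. Furthermore, under the non-strict inequalities, neither u nor v can be strictly positive in Ω. -/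

import Mathlib

open MeasureTheory Real Set Metric Bornology Filter
open scoped RealInnerProductSpace ENNReal NNReal Pointwise

noncomputable section

abbrev En (n : ℕ) : Type := EuclideanSpace ℝ (Fin n)

/-- The normalizing constant `c_{n,s}`. -/
def cK (n : ℕ) (s : ℝ) : ℝ :=
  s * (2 : ℝ) ^ (2 * s) * Real.Gamma (((n : ℝ) + 2 * s) / 2) /
    (Real.pi ^ ((n : ℝ) / 2) * Real.Gamma (1 - s))

/-- The fractional Laplacian `(-Δ)ˢ u (x)`. -/
def fracLap (n : ℕ) (s : ℝ) (u : En n → ℝ) (x : En n) : ℝ :=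
  (cK n s / 2) * ∫ y : En n, (2 * u x - u (x + y) - u (x - y)) / ‖y‖ ^ ((n : ℝ) + 2 * s)

/-- `(-Δ)^{s/2} u (x)`, defined via the non-symmetrized integral. -/
def fracHalf (n : ℕ) (s : ℝ) (u : En n → ℝ) (x : En n) : ℝ :=
  cK n (s / 2) * ∫ z : En n, (u x - u (x + z)) / ‖z‖ ^ ((n : ℝ) + s)

/-- The squared Gagliardo-type seminorm `[u]_s²`. -/
def seminormSsq (n : ℕ) (s : ℝ) (u : En n → ℝ) : ℝ :=
  (cK n s / 2) * ∫ p : En n × En n, (u p.1 - u p.2) ^ 2 / ‖p.1 - p.2‖ ^ ((n : ℝ) + 2 * s)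

/-- The squared seminorm `[u]₁² = ∫_Ω |∇u|²`. -/
def seminorm1sq (n : ℕ) (Ω : Set (En n)) (u : En n → ℝ) : ℝ :=
  ∫ x in Ω, ‖gradient u x‖ ^ 2

/-- The Laplacian as the trace of the Hessian. -/
def lap (n : ℕ) (u : En n → ℝ) (x : En n) : ℝ :=
  ∑ i : Fin n, fderiv ℝ (fun y => fderiv ℝ u y (EuclideanSpace.single i 1)) x
    (EuclideanSpace.single i 1)

/-- The Hessian `D²u(x)` as a continuous bilinear-type map; `‖hess n u x‖` is its operator
norm. -/
def hess (n : ℕ) (u : En n → ℝ) (x : En n) : En n →L[ℝ] En n →L[ℝ] ℝ :=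
  fderiv ℝ (fderiv ℝ u) x

/-- A bounded C² domain `Ω ⊆ ℝⁿ`: a bounded open connected set whose boundary is a C²
hypersurface, described by a global C² defining function with nonvanishing gradient
on the boundary. -/
structure C2Domain (n : ℕ) where
  carrier : Set (En n)
  phi : En n → ℝ
  phi_smooth : ContDiff ℝ 2 phi
  carrier_eq : carrier = {x | phi x < 0}
  grad_ne : ∀ x ∈ frontier carrier, gradient phi x ≠ 0
  bounded : IsBounded carrier
  connected : IsConnected carrier

/-- The outward unit normal `ν` on `∂Ω`. -/
def C2Domain.nu {n : ℕ} (D : C2Domain n) (x : En n) : En n :=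
  ‖gradient D.phi x‖⁻¹ • gradient D.phi x

/-- The normal derivative `∂u/∂ν` at a boundary point (the derivative from inside). -/
def normalDeriv {n : ℕ} (D : C2Domain n) (u : En n → ℝ) (x : En n) : ℝ :=
  fderivWithin ℝ u (closure D.carrier) x (D.nu x)

/-- `Ω` is strictly star-shaped with respect to `z₀`. -/
def C2Domain.StrictlyStarShapedAt {n : ℕ} (D : C2Domain n) (z₀ : En n) : Prop :=
  z₀ ∈ D.carrier ∧ ∀ x ∈ frontier D.carrier, 0 < ⟪x - z₀, D.nu x⟫

/-- `Ω` is strictly star-shaped. -/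
def C2Domain.StrictlyStarShaped {n : ℕ} (D : C2Domain n) : Prop :=
  ∃ z₀, D.StrictlyStarShapedAt z₀

/-- The Pohozaev boundary term `∫_{∂Ω} (∂u/∂ν)² (x·ν(x)) dS`, with `dS` the
`(n-1)`-dimensional Hausdorff measure on `∂Ω`. -/
def pohozaevBoundary {n : ℕ} (D : C2Domain n) (u : En n → ℝ) : ℝ :=
  ∫ x in frontier D.carrier, (normalDeriv D u x) ^ 2 * ⟪x, D.nu x⟫ ∂ μH[(n : ℝ) - 1]

/-- Condition (★). -/
def StarCond (n : ℕ) (s : ℝ) (Ω : Set (En n)) (u : En n → ℝ) : Prop :=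
  ∃ C > 0, ∃ γ ∈ Set.Ioo (0:ℝ) 1, ∀ x ∈ Ω,
    ‖hess n u x‖ ≤ C * infDist x (frontier Ω) ^ (γ - 1) ∧
    |u x| ≤ C * infDist x (frontier Ω) ∧
    |fracLap n s u x| ≤ C * (1 + (if s < 1/2 then 1 else 0)
      + (if s = 1/2 then |Real.log (infDist x (frontier Ω))| else 0)
      + (if 1/2 < s then infDist x (frontier Ω) ^ (1 - 2*s) else 0))

section Part1
open scoped Topology

/-- The basic translation form. -/
def bb {n : ℕ} (u w : En n → ℝ) (y : En n) : ℝ := ∫ x, (u (x + y) - u x) * (w (x + y) - w x)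

lemma cc_shift {n : ℕ} {u : En n → ℝ} (cu : HasCompactSupport u) (y : En n) :
    HasCompactSupport (fun x => u (x + y)) :=
  cu.comp_homeomorph (Homeomorph.addRight y)

lemma cc_int {n : ℕ} {u : En n → ℝ} (hu : Continuous u) (cu : HasCompactSupport u) :
    Integrable u := hu.integrable_of_hasCompactSupport cu

lemma cc_mul_int {n : ℕ} {u w : En n → ℝ} (hu : Continuous u) (hw : Continuous w)
    (cw : HasCompactSupport w) : Integrable (fun x => u x * w x) :=
  (hu.mul hw).integrable_of_hasCompactSupport (cw.mul_left)

lemma bb_int {n : ℕ} {u w : En n → ℝ} (hu : Continuous u) (hw : Continuous w)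
    (cw : HasCompactSupport w) (y : En n) :
    Integrable (fun x => (u (x + y) - u x) * (w (x + y) - w x)) := by
  refine cc_mul_int (u := fun x => u (x + y) - u x) (w := fun x => w (x + y) - w x)
    (by fun_prop) (by fun_prop) ?_
  exact (cc_shift cw y).sub cw

lemma int3 {X : Type*} [MeasurableSpace X] {μ : Measure X} {f g h : X → ℝ} (hf : Integrable f μ)
    (hg : Integrable g μ) (hh : Integrable h μ) (a b c : ℝ) {F : X → ℝ}
    (hF : ∀ x, F x = a * f x + b * g x + c * h x) :
    ∫ x, F x ∂μ = a * (∫ x, f x ∂μ) + b * (∫ x, g x ∂μ) + c * ∫ x, h x ∂μ := by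
  have h1 : Integrable (fun x => a * f x + b * g x) μ := (hf.const_mul a).add (hg.const_mul b)
  simp_rw [hF]
  rw [integral_add h1 (hh.const_mul c), integral_add (hf.const_mul a) (hg.const_mul b)]
  simp only [integral_const_mul]

lemma bb_eq {n : ℕ} {u w : En n → ℝ} (hu : Continuous u) (hw : Continuous w)
    (cw : HasCompactSupport w) (y : En n) :
    ∫ x, (2 * u x - u (x + y) - u (x - y)) * w x = bb u w y := by
  have i1 : Integrable (fun x => u x * w x) := cc_mul_int hu hw cw
  have i2 : Integrable (fun x => u (x + y) * w x) :=
    cc_mul_int (u := fun x => u (x + y)) (by fun_prop) hw cw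
  have i3 : Integrable (fun x => u (x - y) * w x) :=
    cc_mul_int (u := fun x => u (x - y)) (by fun_prop) hw cw
  have i4 : Integrable (fun x => u x * w (x + y)) :=
    cc_mul_int (w := fun x => w (x + y)) hu (by fun_prop) (cc_shift cw y)
  have i5 : Integrable (fun x => u (x + y) * w (x + y)) := i1.comp_add_right y
  have e5 : ∫ x, u (x + y) * w (x + y) = ∫ x, u x * w x :=
    integral_add_right_eq_self (fun x => u x * w x) y
  have e4 : ∫ x, u x * w (x + y) = ∫ x, u (x - y) * w x := by
    rw [← integral_add_right_eq_self (fun x => u (x - y) * w x) y]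
    simp
  have l : ∫ x, (2 * u x - u (x + y) - u (x - y)) * w x
      = 2 * (∫ x, u x * w x) - (∫ x, u (x + y) * w x) - ∫ x, u (x - y) * w x := by
    rw [int3 i1 i2 i3 2 (-1) (-1) (fun x => by ring)]; ring
  have r : bb u w y = (∫ x, u (x + y) * w (x + y)) - (∫ x, u (x + y) * w x)
      - (∫ x, u x * w (x + y)) + ∫ x, u x * w x := by
    have h1 : Integrable (fun x => u (x + y) * w (x + y) + u x * w x) := i5.add i1
    unfold bb
    rw [int3 h1 i2 i4 1 (-1) (-1) (fun x => by ring), integral_add i5 i1]; ring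
  rw [l, r, e5, e4]; ring

lemma bb_nonneg {n : ℕ} (u : En n → ℝ) (y : En n) : 0 ≤ bb u u y :=
  integral_nonneg fun _ => mul_self_nonneg _

lemma bb_sub {n : ℕ} {u w : En n → ℝ} (hu : Continuous u) (cu : HasCompactSupport u)
    (hw : Continuous w) (cw : HasCompactSupport w) (c : ℝ) (y : En n) :
    bb (fun x => u x - c * w x) (fun x => u x - c * w x) y
      = bb u u y - 2 * c * bb u w y + c ^ 2 * bb w w y := by
  unfold bb
  rw [int3 (bb_int hu hu cu y) (bb_int hu hw cw y) (bb_int hw hw cw y) 1 (-(2 * c)) (c ^ 2)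
    (fun x => by ring)]
  ring

lemma bb_double {n : ℕ} {w : En n → ℝ} (hw : Continuous w) (cw : HasCompactSupport w)
    (y : En n) : bb w w ((2:ℝ) • y) ≤ 4 * bb w w y := by
  have i0 := bb_int hw hw cw y
  have e : ∫ x, (w (x + y + y) - w (x + y)) * (w (x + y + y) - w (x + y)) = bb w w y :=
    integral_add_right_eq_self (fun x => (w (x + y) - w x) * (w (x + y) - w x)) y
  have : 4 * bb w w y = ∫ x, (2 * ((w (x + y + y) - w (x + y)) * (w (x + y + y) - w (x + y)))
      + 2 * ((w (x + y) - w x) * (w (x + y) - w x))) := by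
    rw [integral_add ((i0.comp_add_right y).const_mul 2) (i0.const_mul 2), integral_const_mul,
      integral_const_mul, e]
    unfold bb; ring
  rw [this]
  refine integral_mono (bb_int hw hw cw _)
    (((i0.comp_add_right y).const_mul 2).add (i0.const_mul 2)) fun x => ?_
  have : x + (2:ℝ) • y = x + y + y := by rw [two_smul, add_assoc]
  simp only [this]
  nlinarith [sq_nonneg ((w (x + y + y) - w (x + y)) - (w (x + y) - w x))]

lemma bb_scale {n : ℕ} (u : En n → ℝ) {l : ℝ} (hl : 0 < l) (y : En n) :
    bb (fun x => u (l • x)) (fun x => u (l • x)) y = (l ^ n)⁻¹ * bb u u (l • y) := by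
  unfold bb
  have := Measure.integral_comp_smul (volume : Measure (En n))
    (fun x => (u (x + l • y) - u x) * (u (x + l • y) - u x)) l
  simp only [finrank_euclideanSpace, Fintype.card_fin, smul_eq_mul] at this
  rw [abs_of_pos (by positivity)] at this
  rw [← this]
  simp [smul_add]

lemma bb_meas {n : ℕ} {u w : En n → ℝ} (hu : Continuous u) (hw : Continuous w) :
    StronglyMeasurable (bb u w) := by
  have : StronglyMeasurable (fun p : En n × En n =>
      (u (p.2 + p.1) - u p.2) * (w (p.2 + p.1) - w p.2)) := by
    apply Continuous.stronglyMeasurable; fun_prop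
  exact this.integral_prod_right' (ν := volume)

/-- soft thresholding -/
def soft (e t : ℝ) : ℝ := t - max (-e) (min e t)

lemma soft_cont (e : ℝ) : Continuous (soft e) := by unfold soft; fun_prop

lemma soft_zero {e : ℝ} {t : ℝ} (h : |t| ≤ e) : soft e t = 0 := by
  rw [abs_le] at h
  unfold soft
  rw [min_eq_right h.2, max_eq_right h.1]; ring

lemma soft_close {e : ℝ} (he : 0 ≤ e) (t : ℝ) : |soft e t - t| ≤ e := by
  unfold soft
  rw [abs_le]; constructor
  · have : max (-e) (min e t) ≤ e := max_le (by linarith) (min_le_left _ _)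
    linarith
  · have := le_max_left (-e) (min e t)
    linarith

lemma soft_mono {e : ℝ} (a b : ℝ) :
    (soft e a - soft e b) * (soft e a - soft e b) ≤ (a - b) * (soft e a - soft e b) := by
  unfold soft
  set p := max (-e) (min e a)
  set q := max (-e) (min e b)
  have hpq : 0 ≤ (p - q) * ((a - b) - (p - q)) := by
    rcases le_total a b with h | h
    · have h1 : p ≤ q := max_le_max le_rfl (min_le_min le_rfl h)
      have h2 : a - b ≤ p - q := by
        simp only [p, q]
        rcases max_cases (-e) (min e a) with ⟨h3, _⟩ | ⟨h3, _⟩ <;>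
        rcases max_cases (-e) (min e b) with ⟨h4, _⟩ | ⟨h4, _⟩ <;>
        rcases min_cases e a with ⟨h5, _⟩ | ⟨h5, _⟩ <;>
        rcases min_cases e b with ⟨h6, _⟩ | ⟨h6, _⟩ <;> linarith
      nlinarith
    · have h1 : q ≤ p := max_le_max le_rfl (min_le_min le_rfl h)
      have h2 : p - q ≤ a - b := by
        simp only [p, q]
        rcases max_cases (-e) (min e a) with ⟨h3, _⟩ | ⟨h3, _⟩ <;>
        rcases max_cases (-e) (min e b) with ⟨h4, _⟩ | ⟨h4, _⟩ <;>
        rcases min_cases e a with ⟨h5, _⟩ | ⟨h5, _⟩ <;>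
        rcases min_cases e b with ⟨h6, _⟩ | ⟨h6, _⟩ <;> linarith
      nlinarith
  nlinarith

lemma soft_cc {n : ℕ} {u : En n → ℝ} (cu : HasCompactSupport u) {e : ℝ} (he : 0 ≤ e) :
    HasCompactSupport (fun x => soft e (u x)) :=
  cu.comp_left (soft_zero (by simpa using he))

lemma bb_soft {n : ℕ} {u : En n → ℝ} (hu : Continuous u) (cu : HasCompactSupport u)
    {e : ℝ} (he : 0 ≤ e) (y : En n) :
    bb (fun x => soft e (u x)) (fun x => soft e (u x)) y ≤ bb u (fun x => soft e (u x)) y := by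
  have hw : Continuous (fun x => soft e (u x)) := (soft_cont e).comp hu
  exact integral_mono (bb_int hw hw (soft_cc cu he) y) (bb_int hu hw (soft_cc cu he) y)
    fun x => soft_mono _ _

/-- convergence of `bb` under soft thresholding -/
lemma bb_soft_tendsto {n : ℕ} {u : En n → ℝ} (hu : Continuous u) (cu : HasCompactSupport u)
    {e : ℕ → ℝ} (he : ∀ k, 0 ≤ e k) (h0 : Tendsto e atTop (𝓝 0)) (y : En n) :
    Tendsto (fun k => bb (fun x => soft (e k) (u x)) (fun x => soft (e k) (u x)) y) atTop
      (𝓝 (bb u u y)) := by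
  unfold bb
  have hlim : ∀ t : ℝ, Tendsto (fun k => soft (e k) t) atTop (𝓝 t) := by
    intro t
    rw [tendsto_iff_norm_sub_tendsto_zero]
    exact squeeze_zero (fun _ => norm_nonneg _) (fun k => soft_close (he k) t) h0
  have hle' : ∀ k t, |soft (e k) t| ≤ |t| := by
    intro k t
    have := soft_mono (e := e k) t 0
    rw [soft_zero (e := e k) (t := 0) (by simpa using he k)] at this
    simp only [sub_zero] at this
    have h2 : |soft (e k) t| * |soft (e k) t| ≤ |t| * |soft (e k) t| := by
      rw [abs_mul_abs_self, ← abs_mul]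
      exact this.trans (le_abs_self _)
    rcases (abs_nonneg (soft (e k) t)).eq_or_lt with h | h
    · rw [← h]; exact abs_nonneg t
    · exact le_of_mul_le_mul_right h2 h
  refine tendsto_integral_of_dominated_convergence
    (fun x => (|u (x + y)| + |u x|) * (|u (x + y)| + |u x|)) ?_ ?_ ?_ ?_
  · intro k
    have := soft_cont (e k)
    apply Continuous.aestronglyMeasurable; fun_prop
  · refine cc_mul_int (u := fun x => |u (x + y)| + |u x|) (w := fun x => |u (x + y)| + |u x|)
      (by fun_prop) (by fun_prop) ?_
    exact HasCompactSupport.add ((cc_shift cu y).abs) cu.abs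
  · intro k
    refine Eventually.of_forall fun x => ?_
    rw [norm_mul]
    have : ‖soft (e k) (u (x + y)) - soft (e k) (u x)‖ ≤ |u (x + y)| + |u x| := by
      refine (norm_sub_le _ _).trans ?_
      exact add_le_add (hle' _ _) (hle' _ _)
    gcongr
  · refine Eventually.of_forall fun x => ?_
    exact ((hlim _).sub (hlim _)).mul ((hlim _).sub (hlim _))

end Part1

section Part2
open scoped Topology

lemma c2_diff {n : ℕ} {Ω : Set (En n)} (ho : IsOpen Ω) {u : En n → ℝ}
    (hu : ContDiffOn ℝ 2 u Ω) {x : En n} (hx : x ∈ Ω) : HasFDerivAt u (fderiv ℝ u x) x :=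
  ((hu.differentiableOn (by norm_num)).differentiableAt (ho.mem_nhds hx)).hasFDerivAt

lemma c2_fderiv {n : ℕ} {Ω : Set (En n)} (ho : IsOpen Ω) {u : En n → ℝ}
    (hu : ContDiffOn ℝ 2 u Ω) : ContDiffOn ℝ 1 (fderiv ℝ u) Ω :=
  hu.fderiv_of_isOpen ho (by norm_num)

lemma c2_diff2 {n : ℕ} {Ω : Set (En n)} (ho : IsOpen Ω) {u : En n → ℝ}
    (hu : ContDiffOn ℝ 2 u Ω) {x : En n} (hx : x ∈ Ω) :
    HasFDerivAt (fderiv ℝ u) (fderiv ℝ (fderiv ℝ u) x) x :=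
  (((c2_fderiv ho hu).differentiableOn (by norm_num)).differentiableAt
    (ho.mem_nhds hx)).hasFDerivAt

lemma second_diff_bound {n : ℕ} {Ω K : Set (En n)} (ho : IsOpen Ω) {u : En n → ℝ}
    (hu : ContDiffOn ℝ 2 u Ω) (hK : IsCompact K) (hKΩ : K ⊆ Ω) :
    ∃ ρ > 0, ∃ C ≥ 0, ∀ x ∈ K, ∀ y : En n, ‖y‖ ≤ ρ →
      |2 * u x - u (x + y) - u (x - y)| ≤ C * ‖y‖ ^ 2 := by
  obtain ⟨ρ, hρ, hsub⟩ := hK.exists_cthickening_subset_open ho hKΩ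
  have hc : ContinuousOn (fderiv ℝ (fderiv ℝ u)) Ω :=
    (c2_fderiv ho hu).continuousOn_fderiv_of_isOpen ho (by norm_num)
  obtain ⟨C, hC⟩ := IsCompact.exists_bound_of_continuousOn
    (f := fderiv ℝ (fderiv ℝ u)) (hK.cthickening (r := ρ)) (hc.mono hsub)
  refine ⟨ρ, hρ, 2 * |C|, by positivity, fun x hx y hy => ?_⟩
  have hball : closedBall x ρ ⊆ cthickening ρ K := closedBall_subset_cthickening hx ρ
  have hlip : ∀ a ∈ closedBall x ρ, ∀ b ∈ closedBall x ρ,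
      ‖fderiv ℝ u a - fderiv ℝ u b‖ ≤ |C| * ‖a - b‖ := by
    intro a ha b hb
    refine (convex_closedBall x ρ).norm_image_sub_le_of_norm_hasFDerivWithin_le
      (f' := fderiv ℝ (fderiv ℝ u)) (fun z hz => ?_) (fun z hz => ?_) hb ha
    · exact (c2_diff2 ho hu (hsub (hball hz))).hasFDerivWithinAt
    · exact (hC z (hball hz)).trans (le_abs_self C)
  have hmem : ∀ t ∈ Icc (0:ℝ) 1, x + t • y ∈ closedBall x ρ ∧ x - t • y ∈ closedBall x ρ := by
    intro t ht
    have : ‖t • y‖ ≤ ρ := by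
      rw [norm_smul, Real.norm_eq_abs, abs_of_nonneg ht.1]
      nlinarith [ht.1, ht.2, norm_nonneg y]
    constructor <;> simpa [mem_closedBall, dist_eq_norm] using this
  have hd : ∀ t ∈ Icc (0:ℝ) 1, HasDerivWithinAt (fun t : ℝ => u (x + t • y) + u (x - t • y))
      (fderiv ℝ u (x + t • y) y - fderiv ℝ u (x - t • y) y) (Icc 0 1) t := by
    intro t ht
    have h1 : HasDerivAt (fun t : ℝ => x + t • y) y t := by
      simpa using ((hasDerivAt_id t).smul_const y).const_add x
    have h2 : HasDerivAt (fun t : ℝ => x - t • y) (-y) t := by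
      simpa using ((hasDerivAt_id t).smul_const y).const_sub x
    have h3 := (c2_diff ho hu (hsub (hball (hmem t ht).1))).comp_hasDerivAt t h1
    have h4 := (c2_diff ho hu (hsub (hball (hmem t ht).2))).comp_hasDerivAt t h2
    have := (h3.add h4).hasDerivWithinAt (s := Icc 0 1)
    refine this.congr_deriv ?_
    simp [sub_eq_add_neg]
  have hb : ∀ t ∈ Ico (0:ℝ) 1, ‖fderiv ℝ u (x + t • y) y - fderiv ℝ u (x - t • y) y‖
      ≤ 2 * |C| * ‖y‖ ^ 2 := by
    intro t ht
    have ht' : t ∈ Icc (0:ℝ) 1 := ⟨ht.1, ht.2.le⟩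
    have h1 := hlip _ (hmem t ht').1 _ (hmem t ht').2
    have h2 : ‖x + t • y - (x - t • y)‖ ≤ 2 * ‖y‖ := by
      have : x + t • y - (x - t • y) = (2 * t) • y := by
        rw [mul_smul, two_smul]; abel
      rw [this, norm_smul, Real.norm_eq_abs, abs_of_nonneg (by linarith [ht.1])]
      nlinarith [norm_nonneg y, ht.2]
    calc ‖fderiv ℝ u (x + t • y) y - fderiv ℝ u (x - t • y) y‖
        = ‖(fderiv ℝ u (x + t • y) - fderiv ℝ u (x - t • y)) y‖ := by simp
      _ ≤ ‖fderiv ℝ u (x + t • y) - fderiv ℝ u (x - t • y)‖ * ‖y‖ :=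
          ContinuousLinearMap.le_opNorm _ _
      _ ≤ (|C| * (2 * ‖y‖)) * ‖y‖ := by gcongr; exact h1.trans (by gcongr)
      _ = _ := by ring
  have := norm_image_sub_le_of_norm_deriv_le_segment_01' hd hb
  simp only [one_smul, zero_smul, add_zero, sub_zero] at this
  rw [Real.norm_eq_abs, abs_sub_comm] at this
  convert this using 2; ring

lemma second_diff_lim {n : ℕ} {Ω : Set (En n)} (ho : IsOpen Ω) {u : En n → ℝ}
    (hu : ContDiffOn ℝ 2 u Ω) {x : En n} (hx : x ∈ Ω) (e : En n) :
    Tendsto (fun h : ℝ => (2 * u x - u (x + h • e) - u (x - h • e)) / h ^ 2) (𝓝[>] 0)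
      (𝓝 (-(fderiv ℝ (fun y => fderiv ℝ u y e) x e))) := by
  have hp : ∀ t : ℝ, HasDerivAt (fun t : ℝ => x + t • e) e t := fun t => by
    simpa using ((hasDerivAt_id t).smul_const e).const_add x
  have hm : ∀ t : ℝ, HasDerivAt (fun t : ℝ => x - t • e) (-e) t := fun t => by
    simpa using ((hasDerivAt_id t).smul_const e).const_sub x
  have ev1 : ∀ᶠ t : ℝ in 𝓝 0, x + t • e ∈ Ω := by
    have : Tendsto (fun t : ℝ => x + t • e) (𝓝 0) (𝓝 x) := by
      simpa using (hp 0).continuousAt.tendsto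
    exact this (ho.mem_nhds hx)
  have ev2 : ∀ᶠ t : ℝ in 𝓝 0, x - t • e ∈ Ω := by
    have : Tendsto (fun t : ℝ => x - t • e) (𝓝 0) (𝓝 x) := by
      simpa using (hm 0).continuousAt.tendsto
    exact this (ho.mem_nhds hx)
  have hq : HasFDerivAt (fun y => fderiv ℝ u y e) (fderiv ℝ (fun y => fderiv ℝ u y e) x) x := by
    apply DifferentiableAt.hasFDerivAt
    exact (c2_diff2 ho hu hx).differentiableAt.clm_apply (differentiableAt_const e)
  set A := fderiv ℝ (fun y => fderiv ℝ u y e) x e with hA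
  have hr : HasDerivAt (fun t : ℝ => fderiv ℝ u (x - t • e) e - fderiv ℝ u (x + t • e) e)
      (-2 * A) 0 := by
    have hq1 : HasFDerivAt (fun y => fderiv ℝ u y e) (fderiv ℝ (fun y => fderiv ℝ u y e) x)
      (x + (0:ℝ) • e) := by simpa using hq
    have hq2 : HasFDerivAt (fun y => fderiv ℝ u y e) (fderiv ℝ (fun y => fderiv ℝ u y e) x)
      (x - (0:ℝ) • e) := by simpa using hq
    have h1 := hq1.comp_hasDerivAt (0:ℝ) (hp 0)
    have h2 := hq2.comp_hasDerivAt (0:ℝ) (hm 0)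
    have := h2.sub h1
    refine this.congr_deriv ?_
    simp [hA]; ring
  have hslope := hr.tendsto_slope_zero_right
  refine HasDerivAt.lhopital_zero_nhdsGT (f := fun h : ℝ => 2 * u x - u (x + h • e) - u (x - h • e))
    (g := fun h => h ^ 2)
    (f' := fun t => fderiv ℝ u (x - t • e) e - fderiv ℝ u (x + t • e) e) (g' := fun t => 2 * t)
    ?_ ?_ ?_ ?_ ?_ ?_
  · filter_upwards [nhdsWithin_le_nhds ev1, nhdsWithin_le_nhds ev2] with t h1 h2
    have h3 := (c2_diff ho hu h1).comp_hasDerivAt t (hp t)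
    have h4 := (c2_diff ho hu h2).comp_hasDerivAt t (hm t)
    have := (h3.const_sub (2 * u x)).sub h4
    refine this.congr_deriv ?_
    simp; ring
  · exact Eventually.of_forall fun t => by simpa using hasDerivAt_pow 2 t
  · filter_upwards [self_mem_nhdsWithin] with t ht
    have : (0:ℝ) < t := ht
    positivity
  · have h1 := (c2_diff ho hu hx).continuousAt
    have t1 : Tendsto (fun t : ℝ => x + t • e) (𝓝 0) (𝓝 x) := by
      simpa using (hp 0).continuousAt.tendsto
    have t2 : Tendsto (fun t : ℝ => x - t • e) (𝓝 0) (𝓝 x) := by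
      simpa using (hm 0).continuousAt.tendsto
    have := (tendsto_const_nhds (x := 2 * u x)).sub (h1.tendsto.comp t1) |>.sub
      (h1.tendsto.comp t2)
    refine Tendsto.mono_left ?_ nhdsWithin_le_nhds
    have h0 : 2 * u x - u x - u x = 0 := by ring
    rw [h0] at this
    exact this
  · refine Tendsto.mono_left ?_ nhdsWithin_le_nhds
    have : Continuous (fun h : ℝ => h ^ 2) := by fun_prop
    simpa using this.tendsto 0
  · have := hslope.const_mul (1 / 2)
    convert this using 2 with t
    · simp; field_simp
    · ring

end Part2

section Part3
open scoped Topology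

/-- The kernel of the fractional Laplacian. -/
def kk (n : ℕ) (s : ℝ) (y : En n) : ℝ := (‖y‖ ^ ((n : ℝ) + 2 * s))⁻¹

lemma kk_nonneg (n : ℕ) (s : ℝ) (y : En n) : 0 ≤ kk n s y := by unfold kk; positivity

lemma kk_meas (n : ℕ) (s : ℝ) : Measurable (kk n s) := by unfold kk; fun_prop

lemma cK_pos (n : ℕ) {s : ℝ} (hs : s ∈ Ioo (0:ℝ) 1) : 0 < cK n s := by
  unfold cK
  have h0 := hs.1
  have h1 := hs.2
  have : 0 < Real.Gamma (((n : ℝ) + 2 * s) / 2) := Real.Gamma_pos_of_pos (by positivity)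
  have : 0 < Real.Gamma (1 - s) := Real.Gamma_pos_of_pos (by linarith)
  positivity

lemma kern_int {n : ℕ} (hn : 0 < n) {s : ℝ} (hs : s ∈ Ioo (0:ℝ) 1) :
    Integrable (fun y : En n => min 1 (‖y‖ ^ 2) * kk n s y) := by
  have : Nonempty (Fin n) := ⟨⟨0, hn⟩⟩
  obtain ⟨hs0, hs1⟩ := hs
  unfold kk
  rw [integrable_fun_norm_addHaar (volume : Measure (En n))
    (f := fun r => min 1 (r ^ 2) * (r ^ ((n : ℝ) + 2 * s))⁻¹)]
  simp only [finrank_euclideanSpace, Fintype.card_fin, smul_eq_mul]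
  rw [← Ioc_union_Ioi_eq_Ioi (zero_le_one : (0:ℝ) ≤ 1)]
  have key : ∀ y : ℝ, 0 < y → y ^ (n - 1) * (y ^ ((n : ℝ) + 2 * s))⁻¹ = y ^ (-1 - 2 * s) := by
    intro y hy
    rw [← Real.rpow_natCast, ← Real.rpow_neg hy.le, ← Real.rpow_add hy]
    congr 1
    rw [Nat.cast_sub hn]; push_cast; ring
  refine IntegrableOn.union ?_ ?_
  · have h1 : IntegrableOn (fun y : ℝ => y ^ (1 - 2 * s)) (Ioc 0 1) := by
      have := intervalIntegral.intervalIntegrable_rpow' (a := 0) (b := 1) (r := 1 - 2 * s)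
        (by linarith)
      rwa [intervalIntegrable_iff_integrableOn_Ioc_of_le zero_le_one] at this
    refine h1.congr_fun (fun y hy => ?_) measurableSet_Ioc
    have hy0 : 0 < y := hy.1
    simp only
    rw [min_eq_right (by nlinarith [hy.2])]
    have : y ^ (n - 1) * (y ^ 2 * (y ^ ((n : ℝ) + 2 * s))⁻¹)
      = y ^ 2 * (y ^ (n - 1) * (y ^ ((n : ℝ) + 2 * s))⁻¹) := by ring
    rw [this, key y hy0, ← Real.rpow_natCast, ← Real.rpow_add hy0]
    congr 1; push_cast; ring
  · have h1 : IntegrableOn (fun y : ℝ => y ^ (-1 - 2 * s)) (Ioi 1) :=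
      integrableOn_Ioi_rpow_of_lt (by linarith) one_pos
    refine h1.congr_fun (fun y hy => ?_) measurableSet_Ioi
    have hy1 : (1:ℝ) < y := hy
    simp only
    rw [min_eq_left (by nlinarith), one_mul, key y (by linarith)]

section weak
variable {n : ℕ} {Ω : Set (En n)} {u w : En n → ℝ} {s : ℝ}

lemma second_diff_bound' (ho : IsOpen Ω) (hu : ContDiffOn ℝ 2 u Ω) (hc : Continuous u)
    (cu : HasCompactSupport u) {K : Set (En n)} (hK : IsCompact K) (hKΩ : K ⊆ Ω) :
    ∃ C ≥ 0, ∀ x ∈ K, ∀ y : En n,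
      |2 * u x - u (x + y) - u (x - y)| ≤ C * min 1 (‖y‖ ^ 2) := by
  obtain ⟨ρ, hρ, C, hC, hb⟩ := second_diff_bound ho hu hK hKΩ
  obtain ⟨M, hM⟩ := hc.bounded_above_of_compact_support cu
  have hM0 : 0 ≤ M := (norm_nonneg _).trans (hM 0)
  have hb2 : ∀ x y : En n, |2 * u x - u (x + y) - u (x - y)| ≤ 4 * M := by
    intro x y
    have h1 := abs_le.1 (hM x)
    have h2 := abs_le.1 (hM (x + y))
    have h3 := abs_le.1 (hM (x - y))
    rw [abs_le]; constructor <;> linarith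
  refine ⟨C + 4 * M + 4 * M / ρ ^ 2, by positivity, fun x hx y => ?_⟩
  have hq : 0 ≤ 4 * M / ρ ^ 2 := by positivity
  rw [mul_min_of_nonneg _ _ (by positivity)]
  refine le_min ?_ ?_
  · linarith [hb2 x y]
  · rcases le_total ‖y‖ ρ with h | h
    · refine (hb x hx y h).trans ?_
      gcongr
      linarith
    · have h1 : 4 * M ≤ 4 * M / ρ ^ 2 * ‖y‖ ^ 2 := by
        rw [div_mul_eq_mul_div, le_div_iff₀ (by positivity)]
        gcongr
      have h2 : 4 * M / ρ ^ 2 * ‖y‖ ^ 2 ≤ (C + 4 * M + 4 * M / ρ ^ 2) * ‖y‖ ^ 2 := by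
        gcongr; linarith
      linarith [hb2 x y]

lemma weak_prod_int (hn : 0 < n) (hs : s ∈ Ioo (0:ℝ) 1) (ho : IsOpen Ω)
    (hu : ContDiffOn ℝ 2 u Ω) (hc : Continuous u)
    (cu : HasCompactSupport u) (hw : Continuous w) (cw : HasCompactSupport w)
    (hwΩ : tsupport w ⊆ Ω) :
    Integrable (fun p : En n × En n =>
      (2 * u p.1 - u (p.1 + p.2) - u (p.1 - p.2)) * w p.1 * kk n s p.2)
      (volume.prod volume) := by
  obtain ⟨C, hC, hb⟩ := second_diff_bound' ho hu hc cu cw.isCompact hwΩ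
  have h1 : Integrable (fun p : En n × En n =>
      (C * |w p.1|) * (min 1 (‖p.2‖ ^ 2) * kk n s p.2)) (volume.prod volume) :=
    Integrable.mul_prod ((cc_int hw cw).abs.const_mul C) (kern_int hn hs)
  refine h1.mono' ?_ (Eventually.of_forall fun p => ?_)
  · have hm : Measurable (fun p : En n × En n => kk n s p.2) := (kk_meas n s).comp measurable_snd
    have hm2 : Measurable (fun p : En n × En n =>
      (2 * u p.1 - u (p.1 + p.2) - u (p.1 - p.2)) * w p.1) := by
      apply Continuous.measurable; fun_prop
    exact (hm2.mul hm).aestronglyMeasurable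
  · rw [norm_mul, norm_mul, Real.norm_eq_abs, Real.norm_eq_abs, Real.norm_eq_abs,
      abs_of_nonneg (kk_nonneg n s p.2)]
    by_cases hp : p.1 ∈ tsupport w
    · have := hb p.1 hp p.2
      calc _ ≤ C * min 1 (‖p.2‖ ^ 2) * |w p.1| * kk n s p.2 := by
            have := kk_nonneg n s p.2
            gcongr
        _ = _ := by ring
    · rw [image_eq_zero_of_notMem_tsupport hp]; simp

lemma weak_int (hn : 0 < n) (hs : s ∈ Ioo (0:ℝ) 1) (ho : IsOpen Ω)
    (hu : ContDiffOn ℝ 2 u Ω) (hc : Continuous u)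
    (cu : HasCompactSupport u) (hw : Continuous w) (cw : HasCompactSupport w)
    (hwΩ : tsupport w ⊆ Ω) : Integrable (fun y => bb u w y * kk n s y) := by
  have := (weak_prod_int hn hs ho hu hc cu hw cw hwΩ).integral_prod_right
  refine this.congr (Eventually.of_forall fun y => ?_)
  simp only
  rw [integral_mul_const, bb_eq hc hw cw]

lemma weak_frac (hn : 0 < n) (hs : s ∈ Ioo (0:ℝ) 1) (ho : IsOpen Ω)
    (hu : ContDiffOn ℝ 2 u Ω) (hc : Continuous u)
    (cu : HasCompactSupport u) (hw : Continuous w) (cw : HasCompactSupport w)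
    (hwΩ : tsupport w ⊆ Ω) :
    Integrable (fun x => fracLap n s u x * w x) ∧
    ∫ x, fracLap n s u x * w x = cK n s / 2 * ∫ y, bb u w y * kk n s y := by
  have hI := weak_prod_int hn hs ho hu hc cu hw cw hwΩ
  have e1 : ∀ x, fracLap n s u x * w x = cK n s / 2 *
      ∫ y, (2 * u x - u (x + y) - u (x - y)) * w x * kk n s y := by
    intro x
    unfold fracLap kk
    rw [mul_assoc, ← integral_mul_const]
    congr 2; ext y; rw [div_eq_mul_inv]; ring
  constructor
  · simp_rw [e1]
    exact hI.integral_prod_left.const_mul _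
  · simp_rw [e1]
    rw [integral_const_mul, integral_integral_swap hI]
    congr 2; ext y
    rw [integral_mul_const, bb_eq hc hw cw]

lemma weak_lap (ho : IsOpen Ω)
    (hu : ContDiffOn ℝ 2 u Ω) (hc : Continuous u)
    (hw : Continuous w) (cw : HasCompactSupport w)
    (hwΩ : tsupport w ⊆ Ω) :
    Tendsto (fun h : ℝ => (∑ i : Fin n, bb u w (h • EuclideanSpace.single i 1)) / h ^ 2) (𝓝[>] 0)
      (𝓝 (∫ x, -lap n u x * w x)) := by
  obtain ⟨ρ, hρ, C, hC, hb⟩ := second_diff_bound ho hu cw.isCompact hwΩ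
  have e1 : ∀ h : ℝ, (∑ i : Fin n, bb u w (h • EuclideanSpace.single i 1)) / h ^ 2
      = ∫ x, (∑ i : Fin n, (2 * u x - u (x + h • EuclideanSpace.single i 1)
        - u (x - h • EuclideanSpace.single i 1)) / h ^ 2) * w x := by
    intro h
    simp_rw [← bb_eq hc hw cw]
    rw [← integral_finsetSum, ← integral_div]
    · congr 1; ext x
      rw [Finset.sum_mul, Finset.sum_div]
      congr 1; ext i; ring
    · intro i _
      exact cc_mul_int (u := fun x => 2 * u x - u (x + h • EuclideanSpace.single i 1)
        - u (x - h • EuclideanSpace.single i 1)) (by fun_prop) hw cw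
  simp_rw [e1]
  refine tendsto_integral_filter_of_dominated_convergence (fun x => (n * C) * |w x|) ?_ ?_ ?_ ?_
  · refine Eventually.of_forall fun h => ?_
    apply Continuous.aestronglyMeasurable; fun_prop
  · have h2 : ∀ᶠ h : ℝ in 𝓝[>] 0, h < ρ := nhdsWithin_le_nhds (Iio_mem_nhds hρ)
    filter_upwards [self_mem_nhdsWithin, h2] with h h0 hlt
    have h0 : (0:ℝ) < h := h0
    refine Eventually.of_forall fun x => ?_
    by_cases hx : x ∈ tsupport w
    · rw [norm_mul, Real.norm_eq_abs, Real.norm_eq_abs]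
      gcongr
      refine (Finset.abs_sum_le_sum_abs _ _).trans ?_
      have : ∀ i ∈ (Finset.univ : Finset (Fin n)), |(2 * u x - u (x + h • EuclideanSpace.single i 1)
        - u (x - h • EuclideanSpace.single i 1)) / h ^ 2| ≤ C := by
        intro i _
        have hnorm : ‖h • (EuclideanSpace.single i 1 : En n)‖ = h := by
          rw [norm_smul]; simp [abs_of_pos h0]
        have := hb x hx (h • EuclideanSpace.single i 1) (by rw [hnorm]; exact hlt.le)
        rw [hnorm] at this
        rw [abs_div, abs_of_pos (by positivity : 0 < h ^ 2), div_le_iff₀ (by positivity)]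
        exact this
      refine (Finset.sum_le_sum this).trans ?_
      simp
    · rw [image_eq_zero_of_notMem_tsupport hx]; simp
  · exact (cc_int hw cw).abs.const_mul _
  · refine Eventually.of_forall fun x => ?_
    by_cases hx : x ∈ tsupport w
    · refine Tendsto.mul_const _ ?_
      unfold lap
      rw [← Finset.sum_neg_distrib]
      exact tendsto_finsetSum _ fun i _ => second_diff_lim ho hu (hwΩ hx) _
    · rw [image_eq_zero_of_notMem_tsupport hx]; simp

end weak
end Part3

section Part4
open scoped Topology

/-- A solution of a single scalar equation. -/
structure Sol (n : ℕ) (Ω : Set (En n)) (s a : ℝ) (u f : En n → ℝ) : Prop where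
  hn : 0 < n
  ho : IsOpen Ω
  hb : IsBounded Ω
  c2 : ContDiffOn ℝ 2 u Ω
  hc : Continuous u
  hz : ∀ x ∉ Ω, u x = 0
  hf : Continuous f
  hs : s ∈ Ioo (0:ℝ) 1
  ha : 0 ≤ a
  eq : ∀ x ∈ Ω, -lap n u x + a * fracLap n s u x = f x

/-- discrete Dirichlet form -/
def Bh {n : ℕ} (u w : En n → ℝ) (h : ℝ) : ℝ :=
  (∑ i : Fin n, bb u w (h • EuclideanSpace.single i 1)) / h ^ 2

lemma Bh_nonneg {n : ℕ} (u : En n → ℝ) (h : ℝ) : 0 ≤ Bh u u h := by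
  unfold Bh
  have : 0 ≤ ∑ i : Fin n, bb u u (h • EuclideanSpace.single i 1) :=
    Finset.sum_nonneg fun i _ => bb_nonneg u _
  positivity

lemma Bh_double {n : ℕ} {w : En n → ℝ} (hw : Continuous w) (cw : HasCompactSupport w)
    {h : ℝ} (hh : 0 < h) : Bh w w (2 * h) ≤ Bh w w h := by
  unfold Bh
  rw [div_le_div_iff₀ (by positivity) (by positivity)]
  have : ∑ i : Fin n, bb w w ((2 * h) • EuclideanSpace.single i 1)
      ≤ ∑ i : Fin n, 4 * bb w w (h • EuclideanSpace.single i 1) := by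
    refine Finset.sum_le_sum fun i _ => ?_
    rw [mul_smul]
    exact bb_double hw cw _
  rw [← Finset.mul_sum] at this
  nlinarith [sq_nonneg h]

lemma Bh_halve {n : ℕ} {w : En n → ℝ} (hw : Continuous w) (cw : HasCompactSupport w)
    {h : ℝ} (hh : 0 < h) (k : ℕ) : Bh w w h ≤ Bh w w (h / 2 ^ k) := by
  induction k with
  | zero => simp
  | succ k ih =>
    refine ih.trans ?_
    have := Bh_double hw cw (h := h / 2 ^ (k + 1)) (by positivity)
    have e : 2 * (h / 2 ^ (k + 1)) = h / 2 ^ k := by rw [pow_succ]; field_simp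
    rwa [e] at this

namespace Sol
variable {n : ℕ} {Ω : Set (En n)} {s a : ℝ} {u f w : En n → ℝ}

lemma cu (S : Sol n Ω s a u f) : HasCompactSupport u :=
  HasCompactSupport.intro S.hb.isCompact_closure fun x hx => S.hz x fun h => hx (subset_closure h)

/-- the constant in front of the fractional energy -/
def A (n : ℕ) (s a : ℝ) : ℝ := a * (cK n s / 2)

lemma A_nonneg (S : Sol n Ω s a u f) : 0 ≤ A n s a :=
  mul_nonneg S.ha (by have := cK_pos n S.hs; positivity)

lemma weak (S : Sol n Ω s a u f) (hw : Continuous w) (cw : HasCompactSupport w)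
    (hwΩ : tsupport w ⊆ Ω) :
    Tendsto (Bh u w) (𝓝[>] 0)
      (𝓝 ((∫ x, f x * w x) - A n s a * ∫ y, bb u w y * kk n s y)) := by
  have h1 := weak_lap S.ho S.c2 S.hc hw cw hwΩ
  obtain ⟨h2, h3⟩ := weak_frac S.hn S.hs S.ho S.c2 S.hc S.cu hw cw hwΩ
  have : ∫ x, -lap n u x * w x
      = (∫ x, f x * w x) - A n s a * ∫ y, bb u w y * kk n s y := by
    unfold A
    rw [mul_assoc, ← h3, ← integral_const_mul, ← integral_sub (cc_mul_int S.hf hw cw)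
      (h2.const_mul a)]
    congr 1; ext x
    by_cases hx : x ∈ tsupport w
    · rw [← S.eq x (hwΩ hx)]; ring
    · rw [image_eq_zero_of_notMem_tsupport hx]; ring
  rw [← this]
  exact h1

lemma soft_supp (S : Sol n Ω s a u f) {e : ℝ} (he : 0 < e) :
    tsupport (fun x => soft e (u x)) ⊆ Ω := by
  have hcl : IsClosed {x | e ≤ |u x|} := isClosed_le continuous_const S.hc.abs
  have h1 : tsupport (fun x => soft e (u x)) ⊆ {x | e ≤ |u x|} := by
    refine closure_minimal (fun x hx => ?_) hcl
    by_contra h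
    exact hx (soft_zero (not_le.1 h).le)
  intro x hx
  by_contra h
  have := h1 hx
  simp only [mem_ofPred_eq, S.hz x h, abs_zero] at this
  linarith

lemma energy_soft (S : Sol n Ω s a u f) {e : ℝ} (he : 0 < e) {h : ℝ} (hh : 0 < h) :
    Integrable (fun y => bb (fun x => soft e (u x)) (fun x => soft e (u x)) y * kk n s y) ∧
    Bh (fun x => soft e (u x)) (fun x => soft e (u x)) h + A n s a *
      (∫ y, bb (fun x => soft e (u x)) (fun x => soft e (u x)) y * kk n s y)
      ≤ ∫ x, f x * soft e (u x) := by
  set w : En n → ℝ := fun x => soft e (u x) with hwdef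
  have hw : Continuous w := (soft_cont e).comp S.hc
  have cw : HasCompactSupport w := soft_cc S.cu he.le
  have i1 := weak_int S.hn S.hs S.ho S.c2 S.hc S.cu hw cw (S.soft_supp he)
  have hle : ∀ y, bb w w y * kk n s y ≤ bb u w y * kk n s y := fun y =>
    mul_le_mul_of_nonneg_right (bb_soft S.hc S.cu he.le y) (kk_nonneg n s y)
  have i2 : Integrable (fun y => bb w w y * kk n s y) := by
    refine i1.mono' (((bb_meas hw hw).measurable.mul (kk_meas n s)).aestronglyMeasurable)
      (Eventually.of_forall fun y => ?_)
    rw [Real.norm_of_nonneg (mul_nonneg (bb_nonneg w y) (kk_nonneg n s y))]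
    exact hle y
  refine ⟨i2, ?_⟩
  have hI : A n s a * (∫ y, bb w w y * kk n s y) ≤ A n s a * ∫ y, bb u w y * kk n s y :=
    mul_le_mul_of_nonneg_left (integral_mono i2 i1 hle) S.A_nonneg
  have hlim := S.weak hw cw (S.soft_supp he)
  have hseq : Tendsto (fun k : ℕ => h / 2 ^ k) atTop (𝓝[>] 0) := by
    rw [tendsto_nhdsWithin_iff]
    refine ⟨?_, Eventually.of_forall fun k => ?_⟩
    · have := (tendsto_pow_atTop_nhds_zero_of_lt_one (r := (1/2 : ℝ)) (by norm_num)
        (by norm_num)).const_mul h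
      simpa [div_eq_mul_inv] using this
    · show 0 < h / 2 ^ k
      positivity
  have h3 := ge_of_tendsto' (hlim.comp hseq) (b := Bh w w h) (fun k => ?_)
  · linarith
  · refine (Bh_halve hw cw hh k).trans ?_
    simp only [Function.comp, Bh]
    gcongr with i
    exact bb_soft S.hc S.cu he.le _

lemma energy (S : Sol n Ω s a u f) {h : ℝ} (hh : 0 < h) :
    (0 < a → Integrable (fun y => bb u u y * kk n s y)) ∧
    Bh u u h + A n s a * (∫ y, bb u u y * kk n s y) ≤ ∫ x, f x * u x := by
  let e : ℕ → ℝ := fun k => 1 / ((k : ℝ) + 1)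
  have he : ∀ k, 0 < e k := fun k => by positivity
  have he0 : Tendsto e atTop (𝓝 0) := tendsto_one_div_add_atTop_nhds_zero_nat
  have hbb := bb_soft_tendsto S.hc S.cu (fun k => (he k).le) he0
  have hBh : Tendsto (fun k => Bh (fun x => soft (e k) (u x)) (fun x => soft (e k) (u x)) h) atTop
      (𝓝 (Bh u u h)) := by
    unfold Bh
    exact (tendsto_finsetSum _ fun i _ => hbb _).div_const _
  have hf : Tendsto (fun k => ∫ x, f x * soft (e k) (u x)) atTop (𝓝 (∫ x, f x * u x)) := by
    rw [tendsto_iff_norm_sub_tendsto_zero]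
    have hIon : IntegrableOn (fun x => |f x|) (closure Ω) :=
      S.hf.abs.continuousOn.integrableOn_compact S.hb.isCompact_closure
    have hcl : MeasurableSet (closure Ω) := isClosed_closure.measurableSet
    have hIi : Integrable (indicator (closure Ω) fun x => |f x|) := hIon.integrable_indicator hcl
    have : Tendsto (fun k => e k * ∫ x, indicator (closure Ω) (fun x => |f x|) x) atTop (𝓝 0) := by
      simpa using he0.mul_const _
    refine squeeze_zero (fun _ => norm_nonneg _) (fun k => ?_) this
    have hw : Continuous (fun x => soft (e k) (u x)) := (soft_cont _).comp S.hc
    rw [← integral_sub (cc_mul_int S.hf hw (soft_cc S.cu (he k).le)) (cc_mul_int S.hf S.hc S.cu),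
      ← integral_const_mul]
    refine norm_integral_le_of_norm_le (hIi.const_mul _) (Eventually.of_forall fun x => ?_)
    by_cases hx : x ∈ closure Ω
    · rw [indicator_of_mem hx, ← mul_sub, norm_mul, mul_comm, Real.norm_eq_abs, Real.norm_eq_abs]
      gcongr
      exact soft_close (he k).le _
    · have h0 : u x = 0 := S.hz x fun h => hx (subset_closure h)
      simp [h0, soft_zero (e := e k) (t := 0) (by simpa using (he k).le), indicator_of_notMem hx]
  have hA := S.A_nonneg
  have hR := hf.sub hBh
  set R := (∫ x, f x * u x) - Bh u u h with hRdef
  have hk : ∀ k, A n s a *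
      (∫ y, bb (fun x => soft (e k) (u x)) (fun x => soft (e k) (u x)) y * kk n s y)
      ≤ (∫ x, f x * soft (e k) (u x)) -
        Bh (fun x => soft (e k) (u x)) (fun x => soft (e k) (u x)) h := fun k => by
    linarith [(S.energy_soft (he k) hh).2]
  have hnn : ∀ k, 0 ≤ ∫ y, bb (fun x => soft (e k) (u x)) (fun x => soft (e k) (u x)) y * kk n s y :=
    fun k => integral_nonneg fun y => mul_nonneg (bb_nonneg _ y) (kk_nonneg n s y)
  have hR0 : 0 ≤ R := ge_of_tendsto' hR fun k => (mul_nonneg hA (hnn k)).trans (hk k)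
  rcases S.ha.eq_or_lt with ha | ha
  · refine ⟨fun h => by rw [← ha] at h; exact absurd h (lt_irrefl _), ?_⟩
    have : A n s a = 0 := by unfold A; rw [← ha]; ring
    rw [this]; linarith
  · have hApos : 0 < A n s a := mul_pos ha (by have := cK_pos n S.hs; positivity)
    have hm : Measurable (fun y => bb u u y * kk n s y) :=
      (bb_meas S.hc S.hc).measurable.mul (kk_meas n s)
    have hfat : ∫⁻ y, ENNReal.ofReal (bb u u y * kk n s y) ≤ ENNReal.ofReal (R / A n s a) := by
      have h1 : ∀ y, ENNReal.ofReal (bb u u y * kk n s y) = liminf (fun k => ENNReal.ofReal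
          (bb (fun x => soft (e k) (u x)) (fun x => soft (e k) (u x)) y * kk n s y)) atTop := by
        intro y
        refine (Tendsto.liminf_eq ?_).symm
        exact (ENNReal.continuous_ofReal.tendsto _).comp ((hbb y).mul_const _)
      simp_rw [h1]
      refine (lintegral_liminf_le fun k => ?_).trans ?_
      · have hw : Continuous (fun x => soft (e k) (u x)) := (soft_cont _).comp S.hc
        exact ((bb_meas hw hw).measurable.mul (kk_meas n s)).ennreal_ofReal
      · have hlim2 : Tendsto (fun k => ENNReal.ofReal (((∫ x, f x * soft (e k) (u x)) -
            Bh (fun x => soft (e k) (u x)) (fun x => soft (e k) (u x)) h) / A n s a)) atTop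
            (𝓝 (ENNReal.ofReal (R / A n s a))) :=
          (ENNReal.continuous_ofReal.tendsto _).comp (hR.div_const _)
        rw [← hlim2.liminf_eq]
        refine liminf_le_liminf (Eventually.of_forall fun k => ?_)
        rw [← ofReal_integral_eq_lintegral_ofReal (S.energy_soft (he k) hh).1
          (Eventually.of_forall fun y => mul_nonneg (bb_nonneg _ y) (kk_nonneg n s y))]
        apply ENNReal.ofReal_le_ofReal
        rw [le_div_iff₀ hApos, mul_comm]
        exact hk k
    have hnn' : 0 ≤ᵐ[volume] fun y => bb u u y * kk n s y :=
      Eventually.of_forall fun y => mul_nonneg (bb_nonneg _ y) (kk_nonneg n s y)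
    have hInt : Integrable (fun y => bb u u y * kk n s y) := by
      refine ⟨hm.aestronglyMeasurable, ?_⟩
      rw [hasFiniteIntegral_iff_ofReal hnn']
      exact hfat.trans_lt ENNReal.ofReal_lt_top
    refine ⟨fun _ => hInt, ?_⟩
    rw [← ofReal_integral_eq_lintegral_ofReal hInt hnn',
      ENNReal.ofReal_le_ofReal_iff (div_nonneg hR0 hApos.le), le_div_iff₀ hApos, mul_comm] at hfat
    linarith

end Sol
end Part4

section Part5
open scoped Topology

/-- squared length of the gradient -/
def G2 {n : ℕ} (u : En n → ℝ) (x : En n) : ℝ :=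
  ∑ i : Fin n, (fderiv ℝ u x (EuclideanSpace.single i 1)) ^ 2

lemma G2_nonneg {n : ℕ} (u : En n → ℝ) (x : En n) : 0 ≤ G2 u x :=
  Finset.sum_nonneg fun _ _ => sq_nonneg _

lemma Bh_fatou {n : ℕ} {Z : En n → ℝ} (hZ : Continuous Z) (cZ : HasCompactSupport Z)
    {U : Set (En n)} (hU : MeasurableSet U) (hd : ∀ x ∈ U, DifferentiableAt ℝ Z x)
    {m : ℝ → ℝ} {L : ℝ} (hm : ∀ h, 0 < h → Bh Z Z h ≤ m h) (hL : Tendsto m (𝓝[>] 0) (𝓝 L)) :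
    ∫⁻ x in U, ENNReal.ofReal (G2 Z x) ≤ ENNReal.ofReal L := by
  let hk : ℕ → ℝ := fun k => 1 / ((k : ℝ) + 1)
  have hpos : ∀ k, 0 < hk k := fun k => by positivity
  have h0 : Tendsto hk atTop (𝓝[>] 0) := by
    rw [tendsto_nhdsWithin_iff]
    exact ⟨tendsto_one_div_add_atTop_nhds_zero_nat, Eventually.of_forall hpos⟩
  let Q : ℕ → En n → ℝ := fun k x =>
    ∑ i : Fin n, (Z (x + hk k • EuclideanSpace.single i 1) - Z x) *
      (Z (x + hk k • EuclideanSpace.single i 1) - Z x) / hk k ^ 2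
  have hQm : ∀ k, Measurable (fun x => ENNReal.ofReal (Q k x)) := fun k => by
    refine ENNReal.measurable_ofReal.comp (Continuous.measurable ?_)
    fun_prop
  have hQint : ∀ k, Integrable (Q k) := fun k =>
    integrable_finsetSum _ fun i _ => (bb_int hZ hZ cZ _).div_const _
  have hQ0 : ∀ k x, 0 ≤ Q k x := fun k x => Finset.sum_nonneg fun i _ =>
    div_nonneg (mul_self_nonneg _) (sq_nonneg _)
  have hQI : ∀ k, ∫ x, Q k x = Bh Z Z (hk k) := fun k => by
    unfold Bh
    rw [integral_finsetSum _ fun i _ => (bb_int hZ hZ cZ _).div_const _, Finset.sum_div]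
    refine Finset.sum_congr rfl fun i _ => ?_
    rw [integral_div]; rfl
  have hlim : ∀ x ∈ U, ENNReal.ofReal (G2 Z x) = liminf (fun k => ENNReal.ofReal (Q k x)) atTop := by
    intro x hx
    refine (Tendsto.liminf_eq ?_).symm
    refine (ENNReal.continuous_ofReal.tendsto _).comp ?_
    refine tendsto_finsetSum _ fun i _ => ?_
    have hl := ((hd x hx).hasFDerivAt.hasLineDerivAt (EuclideanSpace.single i 1)).tendsto_slope_zero_right
    have := (hl.comp h0).pow 2
    refine this.congr fun k => ?_
    simp only [Function.comp, smul_eq_mul]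
    field_simp
  calc ∫⁻ x in U, ENNReal.ofReal (G2 Z x)
      = ∫⁻ x in U, liminf (fun k => ENNReal.ofReal (Q k x)) atTop :=
        setLIntegral_congr_fun hU hlim
    _ ≤ ∫⁻ x, liminf (fun k => ENNReal.ofReal (Q k x)) atTop := setLIntegral_le_lintegral _ _
    _ ≤ liminf (fun k => ∫⁻ x, ENNReal.ofReal (Q k x)) atTop := lintegral_liminf_le hQm
    _ ≤ liminf (fun k => ENNReal.ofReal (m (hk k))) atTop := by
        refine liminf_le_liminf (Eventually.of_forall fun k => ?_)
        rw [← ofReal_integral_eq_lintegral_ofReal (hQint k) (Eventually.of_forall (hQ0 k)), hQI]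
        exact ENNReal.ofReal_le_ofReal (hm _ (hpos k))
    _ = ENNReal.ofReal L := by
        refine Tendsto.liminf_eq ?_
        exact (ENNReal.continuous_ofReal.tendsto _).comp (hL.comp h0)

lemma Bh_scale {n : ℕ} (u : En n → ℝ) {l : ℝ} (hl : 0 < l) {h : ℝ} (hh : 0 < h) :
    Bh (fun x => u (l • x)) (fun x => u (l • x)) h = (l ^ n)⁻¹ * l ^ 2 * Bh u u (l * h) := by
  unfold Bh
  simp_rw [bb_scale u hl, smul_smul, ← Finset.mul_sum]
  field_simp

lemma kk_scale (n : ℕ) (s : ℝ) {l : ℝ} (hl : 0 < l) (z : En n) :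
    kk n s (l⁻¹ • z) = l ^ ((n:ℝ) + 2 * s) * kk n s z := by
  unfold kk
  rw [norm_smul, Real.norm_of_nonneg (inv_pos.2 hl).le, mul_rpow (inv_pos.2 hl).le (norm_nonneg _),
    mul_inv, inv_rpow hl.le, inv_inv]

lemma bbkk_scale {n : ℕ} (u : En n → ℝ) (s : ℝ) {l : ℝ} (hl : 0 < l) :
    (fun y => bb (fun x => u (l • x)) (fun x => u (l • x)) y * kk n s y)
      = fun y => (l ^ n)⁻¹ * l ^ ((n:ℝ) + 2 * s) * (bb u u (l • y) * kk n s (l • y)) := by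
  ext y
  have := kk_scale n s hl (l • y)
  rw [smul_smul, inv_mul_cancel₀ hl.ne', one_smul] at this
  rw [bb_scale u hl, this]; ring

namespace Sol
variable {n : ℕ} {Ω : Set (En n)} {s a : ℝ} {u f w : En n → ℝ}

/-- fractional energy -/
def Sf (n : ℕ) (s : ℝ) (u : En n → ℝ) : ℝ := ∫ y, bb u u y * kk n s y

lemma Sf_nonneg (n : ℕ) (s : ℝ) (u : En n → ℝ) : 0 ≤ Sf n s u :=
  integral_nonneg fun y => mul_nonneg (bb_nonneg _ y) (kk_nonneg n s y)

/-- The main inequality. -/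
lemma main_ineq (S : Sol n Ω s a u f) {l : ℝ} (hl : 1 < l)
    (hT : tsupport (fun x => u (l • x)) ⊆ Ω) :
    ∃ L, L ≤ 2 * ((∫ x, f x * u x) - l ^ (((n:ℝ) - 2) / 2) * ∫ x, f x * u (l • x))
        - A n s a * ((1 - l ^ (2 * s - 2)) * Sf n s u) ∧ 0 ≤ L ∧
      ∫⁻ x in {x | x ∈ Ω ∧ l • x ∉ closure Ω}, ENNReal.ofReal (G2 u x) ≤ ENNReal.ofReal L := by
  have hl0 : 0 < l := by linarith
  set c : ℝ := l ^ (((n:ℝ) - 2) / 2) with hc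
  have hc2 : c ^ 2 = l ^ n * (l ^ 2)⁻¹ := by
    rw [hc, ← rpow_natCast, ← rpow_mul hl0.le, ← rpow_natCast, ← rpow_natCast,
      ← rpow_neg hl0.le, ← rpow_add hl0]
    congr 1; push_cast; ring
  let w : En n → ℝ := fun x => u (l • x)
  have hw : Continuous w := S.hc.comp (continuous_const_smul l)
  have cw : HasCompactSupport w :=
    S.cu.comp_homeomorph (Homeomorph.smulOfNeZero l hl0.ne')
  let Z : En n → ℝ := fun x => u x - c * w x
  have hZ : Continuous Z := S.hc.sub (continuous_const.mul hw)
  have cZ : HasCompactSupport Z := S.cu.sub (cw.mul_left)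
  have hBZ : ∀ h, 0 < h → Bh Z Z h = Bh u u h - 2 * c * Bh u w h + Bh u u (l * h) := by
    intro h hh
    have e1 : Bh Z Z h = Bh u u h - 2 * c * Bh u w h + c ^ 2 * Bh w w h := by
      unfold Bh
      simp_rw [Z, bb_sub S.hc S.cu hw cw c, Finset.sum_add_distrib, Finset.sum_sub_distrib,
        ← Finset.mul_sum]
      ring
    rw [e1, Bh_scale u hl0 hh, hc2]
    have : l ^ n ≠ 0 := by positivity
    field_simp
  have hlim := S.weak hw cw hT
  set I : ℝ := ∫ y, bb u w y * kk n s y with hI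
  have hA := S.A_nonneg
  let m : ℝ → ℝ := fun h => 2 * ((∫ x, f x * u x) - A n s a * Sf n s u) - 2 * c * Bh u w h
  have hm : ∀ h, 0 < h → Bh Z Z h ≤ m h := by
    intro h hh
    rw [hBZ h hh]
    have h1 := (S.energy hh).2
    have h2 := (S.energy (mul_pos hl0 hh)).2
    simp only [m, Sf]
    linarith
  have hml : Tendsto m (𝓝[>] 0) (𝓝 (2 * ((∫ x, f x * u x) - A n s a * Sf n s u) - 2 * c *
      ((∫ x, f x * w x) - A n s a * I))) := (hlim.const_mul _).const_sub _
  -- fractional part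
  have hfr : A n s a * (2 * c * I) ≤ A n s a * ((1 + l ^ (2 * s - 2)) * Sf n s u) := by
    rcases S.ha.eq_or_lt with ha | ha
    · have : A n s a = 0 := by unfold A; rw [← ha]; ring
      rw [this]; simp
    refine mul_le_mul_of_nonneg_left ?_ hA
    have i1 := (S.energy one_pos).1 ha
    have i2 := weak_int S.hn S.hs S.ho S.c2 S.hc S.cu hw cw hT
    have i3 : Integrable (fun y => bb w w y * kk n s y) := by
      have := bbkk_scale u s hl0
      show Integrable (fun y => bb (fun x => u (l • x)) (fun x => u (l • x)) y * kk n s y)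
      rw [this]
      exact (i1.comp_smul hl0.ne').const_mul _
    have e3 : c ^ 2 * ∫ y, bb w w y * kk n s y = l ^ (2 * s - 2) * Sf n s u := by
      have := bbkk_scale u s hl0
      show c ^ 2 * ∫ y, (fun y => bb (fun x => u (l • x)) (fun x => u (l • x)) y * kk n s y) y = _
      rw [this, integral_const_mul, Measure.integral_comp_smul volume
        (fun y => bb u u y * kk n s y) l]
      rw [finrank_euclideanSpace_fin, hc2, abs_of_pos (by positivity), rpow_add hl0, rpow_natCast,
        rpow_sub hl0, smul_eq_mul]
      unfold Sf
      have : l ^ n ≠ 0 := by positivity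
      norm_cast
      field_simp
    have hnn : 0 ≤ ∫ y, bb Z Z y * kk n s y :=
      integral_nonneg fun y => mul_nonneg (bb_nonneg _ y) (kk_nonneg n s y)
    rw [int3 i1 i2 i3 1 (-2 * c) (c ^ 2) (fun y => by
      simp only [Z, bb_sub S.hc S.cu hw cw c]; ring)] at hnn
    rw [e3] at hnn
    unfold Sf at hnn ⊢
    linarith
  refine ⟨2 * ((∫ x, f x * u x) - A n s a * Sf n s u) - 2 * c * ((∫ x, f x * w x) - A n s a * I),
    ?_, ?_, ?_⟩
  · simp only [w] at hfr ⊢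
    nlinarith
  · refine ge_of_tendsto hml ?_
    filter_upwards [self_mem_nhdsWithin] with h hh
    exact (Bh_nonneg _ _).trans (hm h hh)
  · have hopen : IsOpen {x | x ∈ Ω ∧ l • x ∉ closure Ω} :=
      S.ho.inter (isClosed_closure.isOpen_compl.preimage (continuous_const_smul l))
    have heq : ∀ x ∈ {x | x ∈ Ω ∧ l • x ∉ closure Ω}, Z =ᶠ[𝓝 x] u := fun x hx => by
      filter_upwards [hopen.mem_nhds hx] with y hy
      simp only [Z, w]
      rw [S.hz (l • y) fun h => hy.2 (subset_closure h)]; ring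
    rw [setLIntegral_congr_fun hopen.measurableSet (g := fun x => ENNReal.ofReal (G2 Z x))]
    · refine Bh_fatou hZ cZ hopen.measurableSet (fun x hx => ?_) hm hml
      exact (c2_diff S.ho S.c2 hx.1).differentiableAt.congr_of_eventuallyEq (heq x hx)
    · intro x hx
      simp only [G2, (heq x hx).fderiv_eq]

lemma G2_lint (S : Sol n Ω s a u f) :
    ∫⁻ x in Ω, ENNReal.ofReal (G2 u x) ≤ ENNReal.ofReal (∫ x, f x * u x) := by
  refine Bh_fatou S.hc S.cu S.ho.measurableSet
    (fun x hx => (c2_diff S.ho S.c2 hx).differentiableAt) (m := fun _ => ∫ x, f x * u x)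
    (fun h hh => ?_) tendsto_const_nhds
  have := (S.energy hh).2
  have := mul_nonneg S.A_nonneg (Sf_nonneg n s u)
  unfold Sf at this
  linarith

lemma G2_cont (S : Sol n Ω s a u f) : ContinuousOn (G2 u) Ω := by
  refine continuousOn_finsetSum _ fun i _ => ContinuousOn.pow ?_ 2
  exact (c2_fderiv S.ho S.c2).continuousOn.clm_apply continuousOn_const

lemma G2_int (S : Sol n Ω s a u f) : IntegrableOn (G2 u) Ω := by
  refine ⟨S.G2_cont.aestronglyMeasurable S.ho.measurableSet, ?_⟩
  rw [hasFiniteIntegral_iff_ofReal (Eventually.of_forall (G2_nonneg u))]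
  exact S.G2_lint.trans_lt ENNReal.ofReal_lt_top

end Sol
end Part5

section Part6
open scoped Topology

/-- `Ω` is star-shaped with respect to all points of a ball around the origin. -/
structure StarDom {n : ℕ} (Ω : Set (En n)) (κ : ℝ) : Prop where
  ho : IsOpen Ω
  hb : IsBounded Ω
  hk : 0 < κ
  star : ∀ z, ‖z‖ < κ → ∀ x ∈ Ω, ∀ t ∈ Icc (0:ℝ) 1, z + t • (x - z) ∈ Ω

lemma C2Domain.isOpen {n : ℕ} (D : C2Domain n) : IsOpen D.carrier := by
  rw [D.carrier_eq]
  exact isOpen_lt D.phi_smooth.continuous continuous_const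

lemma C2Domain.front {n : ℕ} (D : C2Domain n) {x : En n} (hx : x ∈ frontier D.carrier) :
    D.phi x = 0 := by
  have hc : D.carrier ⊆ {x | D.phi x ≤ 0} := by
    rw [D.carrier_eq]; intro x hx; have h : D.phi x < 0 := hx; exact h.le
  have h1 : D.phi x ≤ 0 :=
    (closure_minimal hc (isClosed_le D.phi_smooth.continuous continuous_const)) hx.1
  have h2 : ¬ D.phi x < 0 := by
    intro h
    have : x ∈ D.carrier := by rw [D.carrier_eq]; exact h
    rw [frontier, D.isOpen.interior_eq] at hx
    exact hx.2 this
  linarith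

lemma C2Domain.star_aux {n : ℕ} (D : C2Domain n) {z₀ : En n} (h : D.StrictlyStarShapedAt z₀) :
    ∃ κ > 0, ∀ z, ‖z‖ < κ → ∀ x ∈ frontier D.carrier, 0 < fderiv ℝ D.phi x (x - (z₀ + z)) := by
  have hK : IsCompact (frontier D.carrier) :=
    (D.bounded.isCompact_closure).of_isClosed_subset isClosed_frontier frontier_subset_closure
  have hcf : Continuous (fderiv ℝ D.phi) := D.phi_smooth.continuous_fderiv (by norm_num)
  have hpos : ∀ x ∈ frontier D.carrier, 0 < fderiv ℝ D.phi x (x - z₀) := by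
    intro x hx
    have h1 := h.2 x hx
    unfold C2Domain.nu at h1
    rw [inner_smul_right, real_inner_comm, gradient, InnerProductSpace.toDual_symm_apply] at h1
    exact pos_of_mul_pos_right h1 (by positivity)
  obtain ⟨m, hm, hmx⟩ := hK.exists_forall_le' (f := fun x => fderiv ℝ D.phi x (x - z₀))
    (by fun_prop) hpos
  obtain ⟨M, hM⟩ := hK.exists_bound_of_continuousOn hcf.continuousOn
  have hM1 : 0 < |M| + 1 := by positivity
  refine ⟨m / (|M| + 1), by positivity, fun z hz x hx => ?_⟩
  have e : x - (z₀ + z) = (x - z₀) - z := by abel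
  rw [e, map_sub]
  have h1 := hmx x hx
  have h2 : |fderiv ℝ D.phi x z| ≤ (|M| + 1) * ‖z‖ := by
    refine ((fderiv ℝ D.phi x).le_opNorm z).trans ?_
    gcongr
    linarith [hM x hx, le_abs_self M]
  rw [lt_div_iff₀ hM1] at hz
  have := le_abs_self (fderiv ℝ D.phi x z)
  linarith

lemma C2Domain.star {n : ℕ} (D : C2Domain n) {z₀ : En n} (h : D.StrictlyStarShapedAt z₀) :
    ∃ κ, StarDom {x | x + z₀ ∈ D.carrier} κ := by
  obtain ⟨κ, hκ, hh⟩ := D.star_aux h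
  refine ⟨κ, ?_, ?_, hκ, ?_⟩
  · exact D.isOpen.preimage (continuous_add_const z₀)
  · obtain ⟨R, hR⟩ := D.bounded.exists_norm_le
    refine isBounded_iff_forall_norm_le.2 ⟨R + ‖z₀‖, fun x hx => ?_⟩
    have : x = (x + z₀) - z₀ := by abel
    rw [this]
    exact (norm_sub_le _ _).trans (by gcongr; exact hR _ hx)
  · intro z hz x hx t0 ht0
    by_contra hcon
    set p := z₀ + z with hp
    set x' := x + z₀ with hx'
    let γ : ℝ → En n := fun t => p + t • (x' - p)
    have hγ : Continuous γ := by fun_prop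
    have e0 : ∀ t, z + t • (x - z) + z₀ = γ t := fun t => by
      simp only [γ, hp, hx']; module
    have hx'Ω : x' ∈ D.carrier := hx
    have hcon' : γ t0 ∉ D.carrier := fun h => hcon (by
      show _ + z₀ ∈ D.carrier
      rw [e0]; exact h)
    have hcomp : IsCompact (Icc t0 1 ∩ γ ⁻¹' D.carrierᶜ) :=
      isCompact_Icc.inter_right (D.isOpen.isClosed_compl.preimage hγ)
    obtain ⟨t1, ht1, hmax⟩ := hcomp.exists_isMaxOn ⟨t0, ⟨le_rfl, ht0.2⟩, hcon'⟩
      (continuousOn_id)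
    have hγ1 : γ 1 = x' := by simp [γ]
    have ht1lt : t1 < 1 := by
      rcases ht1.1.2.lt_or_eq with h | h
      · exact h
      · exfalso; apply ht1.2; rw [h, hγ1]; exact hx'Ω
    have hin : ∀ t ∈ Ioo t1 1, γ t ∈ D.carrier := by
      intro t ht
      by_contra h
      have := hmax (show t ∈ _ from ⟨⟨ht1.1.1.trans ht.1.le, ht.2.le⟩, h⟩)
      simp only [id, mem_ofPred_eq] at this
      linarith [ht.1]
    have hev : ∀ᶠ t in 𝓝[>] t1, γ t ∈ D.carrier := by
      filter_upwards [Ioo_mem_nhdsGT ht1lt] with t ht using hin t ht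
    have hcl : γ t1 ∈ closure D.carrier :=
      mem_closure_of_tendsto ((hγ.tendsto t1).mono_left nhdsWithin_le_nhds) hev
    have hfr : γ t1 ∈ frontier D.carrier := by
      rw [frontier, D.isOpen.interior_eq]; exact ⟨hcl, ht1.2⟩
    have hpos := hh z hz _ hfr
    have e1 : γ t1 - (z₀ + z) = t1 • (x' - p) := by simp [γ, hp]
    rw [e1, map_smul, smul_eq_mul] at hpos
    have ht10 : 0 ≤ t1 := ht0.1.trans ht1.1.1
    have hd : 0 < fderiv ℝ D.phi (γ t1) (x' - p) := pos_of_mul_pos_right hpos ht10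
    have hγd : HasDerivAt γ (x' - p) t1 := by
      have := ((hasDerivAt_id t1).smul_const (x' - p)).const_add p
      rw [one_smul] at this
      exact this
    have hder : HasDerivAt (fun t => D.phi (γ t)) (fderiv ℝ D.phi (γ t1) (x' - p)) t1 :=
      ((D.phi_smooth.differentiable (by norm_num)) (γ t1)).hasFDerivAt.comp_hasDerivAt t1 hγd
    have hsl := (hasDerivAt_iff_tendsto_slope.1 hder).mono_left
      (nhdsWithin_mono t1 (show Ioi t1 ⊆ {t1}ᶜ from fun t ht => ne_of_gt ht))
    have : fderiv ℝ D.phi (γ t1) (x' - p) ≤ 0 := by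
      refine le_of_tendsto hsl ?_
      filter_upwards [hev, self_mem_nhdsWithin] with t ht htt
      rw [slope_def_field, D.front hfr]
      rw [D.carrier_eq] at ht
      have h1 : D.phi (γ t) < 0 := ht
      exact div_nonpos_of_nonpos_of_nonneg (by linarith) (by have : t1 < t := htt; linarith)
    linarith

namespace StarDom
variable {n : ℕ} {Ω : Set (En n)} {κ : ℝ}

lemma out (T : StarDom Ω κ) {l : ℝ} (hl : 1 < l) {x y : En n} (hy : y ∉ Ω)
    (hxy : ‖y - x‖ < κ * (1 - l⁻¹)) : l • x ∉ closure Ω := by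
  intro hx
  have hl0 : 0 < l := by linarith
  have hd : 0 < 1 - l⁻¹ := by have := inv_lt_one_of_one_lt₀ hl; linarith
  let Z : En n → En n := fun x' => (1 - l⁻¹)⁻¹ • (y - l⁻¹ • x')
  have hZ : Continuous Z := by fun_prop
  have hZx : ‖Z (l • x)‖ < κ := by
    simp only [Z, smul_smul, inv_mul_cancel₀ hl0.ne', one_smul, norm_smul]
    rw [Real.norm_of_nonneg (inv_pos.2 hd).le, inv_mul_lt_iff₀ hd, mul_comm]
    exact hxy
  have hop : IsOpen {x' | ‖Z x'‖ < κ} := isOpen_lt hZ.norm continuous_const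
  obtain ⟨x', hx'1, hx'2⟩ := mem_closure_iff.1 hx _ hop hZx
  have := T.star (Z x') hx'1 x' hx'2 l⁻¹ ⟨by positivity, by linarith⟩
  apply hy
  convert this using 1
  have : Z x' + l⁻¹ • (x' - Z x') = (1 - l⁻¹) • Z x' + l⁻¹ • x' := by module
  rw [this]
  simp only [Z, smul_smul, mul_inv_cancel₀ hd.ne', one_smul]
  abel

lemma shrink (T : StarDom Ω κ) {l : ℝ} (hl : 1 < l) {x : En n} (hx : l • x ∈ closure Ω) : x ∈ Ω := by
  by_contra h
  have hd : 0 < 1 - l⁻¹ := by have := inv_lt_one_of_one_lt₀ hl; linarith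
  exact T.out hl (x := x) h (by simpa using mul_pos T.hk hd) hx

lemma supp (T : StarDom Ω κ) {l : ℝ} (hl : 1 < l) {u : En n → ℝ} (hz : ∀ x ∉ Ω, u x = 0) :
    tsupport (fun x => u (l • x)) ⊆ Ω := by
  have hcl : IsClosed {x : En n | l • x ∈ closure Ω} :=
    isClosed_closure.preimage (continuous_const_smul l)
  have h1 : tsupport (fun x => u (l • x)) ⊆ {x : En n | l • x ∈ closure Ω} := by
    refine closure_minimal (fun x hx => ?_) hcl
    by_contra h
    exact hx (hz _ fun h' => h (subset_closure h'))
  exact fun x hx => T.shrink hl (h1 hx)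

/-- the boundary layer -/
def layer (Ω : Set (En n)) (l : ℝ) : Set (En n) := {x | x ∈ Ω ∧ l • x ∉ closure Ω}

lemma layer_open (T : StarDom Ω κ) (l : ℝ) : IsOpen (layer Ω l) :=
  T.ho.inter (isClosed_closure.isOpen_compl.preimage (continuous_const_smul l))

lemma vol_lt (T : StarDom Ω κ) : volume Ω < ⊤ := T.hb.measure_lt_top

lemma layer_vol (T : StarDom Ω κ) {l : ℝ} (hl : 1 < l) :
    volume.real (layer Ω l) ≤ (1 - (l ^ n)⁻¹) * volume.real Ω := by
  have hl0 : 0 < l := by linarith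
  have h1 : volume.real (l⁻¹ • Ω) = (l ^ n)⁻¹ * volume.real Ω := by
    rw [measureReal_def, Measure.addHaar_smul, finrank_euclideanSpace_fin, ENNReal.toReal_mul,
      ENNReal.toReal_ofReal (abs_nonneg _), abs_of_pos (by positivity), inv_pow]; rfl
  have hsub : l⁻¹ • Ω ⊆ Ω := by
    rintro _ ⟨x, hx, rfl⟩
    refine T.shrink hl ?_
    simp only [smul_smul, mul_inv_cancel₀ hl0.ne', one_smul]
    exact subset_closure hx
  have hdis : Disjoint (l⁻¹ • Ω) (layer Ω l) := by
    rw [Set.disjoint_left]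
    rintro _ ⟨x, hx, rfl⟩ h
    apply h.2
    simp only [smul_smul, mul_inv_cancel₀ hl0.ne', one_smul]
    exact subset_closure hx
  have hfin : volume Ω ≠ ⊤ := T.vol_lt.ne
  have h2 : volume.real (l⁻¹ • Ω) + volume.real (layer Ω l) ≤ volume.real Ω := by
    rw [← measureReal_union hdis (T.layer_open l).measurableSet
      (measure_ne_top_of_subset hsub hfin) (measure_ne_top_of_subset (fun x hx => hx.1) hfin)]
    exact measureReal_mono (union_subset hsub fun x hx => hx.1) hfin
  rw [h1] at h2
  linarith

end StarDom
end Part6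

section Part7
open scoped Topology

lemma clm_norm_le {n : ℕ} (T : En n →L[ℝ] ℝ) :
    ‖T‖ ≤ √(∑ i : Fin n, (T (EuclideanSpace.single i 1)) ^ 2) := by
  refine T.opNorm_le_bound (sqrt_nonneg _) fun y => ?_
  have e : T y = ∑ i, y i * T (EuclideanSpace.single i 1) := by
    conv_lhs => rw [← (EuclideanSpace.basisFun (Fin n) ℝ).sum_repr y]
    simp [map_sum]
  rw [e, EuclideanSpace.norm_eq, ← sqrt_mul (Finset.sum_nonneg fun _ _ => sq_nonneg _)]
  apply abs_le_sqrt
  refine (Finset.sum_mul_sq_le_sq_mul_sq _ _ _).trans ?_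
  simp [mul_comm]

lemma fderiv_norm_le {n : ℕ} (u : En n → ℝ) (x : En n) : ‖fderiv ℝ u x‖ ≤ √(G2 u x) :=
  clm_norm_le _

lemma fderiv_norm_le' {n : ℕ} (u : En n → ℝ) (x : En n) : ‖fderiv ℝ u x‖ ≤ 1 + G2 u x := by
  refine (fderiv_norm_le u x).trans ?_
  rw [sqrt_le_left (by linarith [G2_nonneg u x])]
  nlinarith [G2_nonneg u x]

namespace Sol
variable {n : ℕ} {Ω : Set (En n)} {s a κ : ℝ} {u f w : En n → ℝ}

/-- norm of the gradient, extended by zero -/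
def HH (Ω : Set (En n)) (u : En n → ℝ) : En n → ℝ≥0∞ := indicator Ω fun x => ‖fderiv ℝ u x‖ₑ

lemma HH_meas (ho : IsOpen Ω) : Measurable (HH Ω u) :=
  ((measurable_fderiv ℝ u).enorm).indicator ho.measurableSet

lemma HH_fin (S : Sol n Ω s a u f) : ∫⁻ x, HH Ω u x < ⊤ := by
  unfold HH
  rw [lintegral_indicator S.ho.measurableSet]
  have h1 : IntegrableOn (fun x => 1 + G2 u x) Ω :=
    (integrableOn_const (C := (1:ℝ)) S.hb.measure_lt_top.ne).add S.G2_int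
  have h2 : IntegrableOn (fderiv ℝ u) Ω := by
    refine h1.mono' ((measurable_fderiv ℝ u).stronglyMeasurable.aestronglyMeasurable)
      (Eventually.of_forall fun x => fderiv_norm_le' u x)
  exact h2.2

lemma exit (T : StarDom Ω κ) (S : Sol n Ω s a u f) {l : ℝ} (hl : 1 < l) {x : En n} (hx : x ∈ Ω) :
    ∃ τ ∈ Ioc 1 l, (∀ t ∈ Ico 1 τ, t • x ∈ Ω) ∧ u (τ • x) = u (l • x) := by
  have hc : Continuous (fun t : ℝ => t • x) := by fun_prop
  by_cases h : ∀ t ∈ Ico 1 l, t • x ∈ Ω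
  · exact ⟨l, ⟨hl, le_rfl⟩, h, rfl⟩
  push Not at h
  obtain ⟨t0, ht0, ht0x⟩ := h
  have hcomp : IsCompact (Icc 1 l ∩ (fun t : ℝ => t • x) ⁻¹' Ωᶜ) :=
    isCompact_Icc.inter_right (S.ho.isClosed_compl.preimage hc)
  obtain ⟨τ, hτ, hmin⟩ := hcomp.exists_isMinOn ⟨t0, ⟨ht0.1, ht0.2.le⟩, ht0x⟩ continuousOn_id
  refine ⟨τ, ⟨?_, hτ.1.2⟩, fun t ht => ?_, ?_⟩
  · rcases hτ.1.1.lt_or_eq with h | h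
    · exact h
    · exfalso; apply hτ.2; simpa [← h] using hx
  · by_contra h
    have := hmin (show t ∈ _ from ⟨⟨ht.1, ht.2.le.trans hτ.1.2⟩, h⟩)
    simp only [id, mem_ofPred_eq] at this
    linarith [ht.2]
  · rw [S.hz _ hτ.2, S.hz]
    intro h
    apply hτ.2
    have hτ0 : 0 < τ := by linarith [hτ.1.1]
    have := T.star 0 (by simpa using T.hk) _ h (τ / l) ⟨by positivity, by
      rw [div_le_one (by linarith)]; exact hτ.1.2⟩
    have hl0 : l ≠ 0 := by linarith
    simpa [smul_smul, div_mul_cancel₀ _ hl0] using this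

lemma ray_bound (T : StarDom Ω κ) (S : Sol n Ω s a u f) {R : ℝ} (hR : ∀ x ∈ Ω, ‖x‖ ≤ R) {l : ℝ}
    (hl : 1 < l) (x : En n) :
    ‖u (l • x) - u x‖ₑ ≤ ENNReal.ofReal R * ∫⁻ t in Icc 1 l, HH Ω u (t • x) := by
  by_cases hx : x ∈ Ω
  swap
  · rw [S.hz x hx, S.hz]
    · simp
    · exact fun h => hx (T.shrink hl (subset_closure h))
  obtain ⟨τ, hτ, hin, hval⟩ := S.exit T hl hx
  have hc : Continuous (fun t : ℝ => u (t • x)) := S.hc.comp (by fun_prop)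
  have hlim : Tendsto (fun t : ℝ => ‖u (t • x) - u x‖ₑ) (𝓝[<] τ) (𝓝 ‖u (l • x) - u x‖ₑ) := by
    rw [← hval]
    exact ((hc.sub continuous_const).enorm.tendsto τ).mono_left nhdsWithin_le_nhds
  refine le_of_tendsto hlim ?_
  filter_upwards [Ioo_mem_nhdsLT hτ.1] with t ht
  have hder : ∀ r ∈ Icc 1 t, HasDerivAt (fun t : ℝ => u (t • x)) (fderiv ℝ u (r • x) x) r := by
    intro r hr
    have h1 := c2_diff S.ho S.c2 (hin r ⟨hr.1, hr.2.trans_lt ht.2⟩)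
    have h2 : HasDerivAt (fun t : ℝ => t • x) x r := by
      simpa using (hasDerivAt_id r).smul_const x
    exact h1.comp_hasDerivAt r h2
  have hcd : ContDiffOn ℝ 1 (fun t : ℝ => u (t • x)) (Icc 1 t) := by
    refine (S.c2.of_le (by norm_num)).comp (ContDiff.contDiffOn (by fun_prop)) fun r hr => ?_
    exact hin r ⟨hr.1, hr.2.trans_lt ht.2⟩
  have := enorm_sub_le_lintegral_deriv_of_contDiffOn_Icc hcd ht.1.le
  simp only [one_smul] at this
  refine this.trans ?_
  rw [← lintegral_const_mul' _ _ ENNReal.ofReal_ne_top]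
  refine (setLIntegral_mono' (g := fun t => ENNReal.ofReal R * HH Ω u (t • x)) measurableSet_Icc
    fun r hr => ?_).trans (lintegral_mono_set (Icc_subset_Icc le_rfl (ht.2.le.trans hτ.2)))
  rw [(hder r hr).deriv, HH, indicator_of_mem (hin r ⟨hr.1, hr.2.trans_lt ht.2⟩)]
  rw [mul_comm]
  refine ((fderiv ℝ u (r • x)).le_opENorm x).trans ?_
  gcongr
  rw [← ofReal_norm]
  exact ENNReal.ofReal_le_ofReal (hR x hx)

lemma L1_rate (T : StarDom Ω κ) (S : Sol n Ω s a u f) :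
    ∃ C, 0 ≤ C ∧ ∀ l, 1 < l → ∫ x, |u (l • x) - u x| ≤ C * (l - 1) := by
  obtain ⟨R, hR⟩ := S.hb.exists_norm_le
  refine ⟨(ENNReal.ofReal R * ∫⁻ x, HH Ω u x).toReal, ENNReal.toReal_nonneg, fun l hl => ?_⟩
  have hm := HH_meas (u := u) S.ho
  have hm2 : Measurable (fun p : En n × ℝ => HH Ω u (p.2 • p.1)) :=
    hm.comp (by fun_prop)
  have key : ∫⁻ x, ‖u (l • x) - u x‖ₑ ≤ ENNReal.ofReal (l - 1) *
      (ENNReal.ofReal R * ∫⁻ x, HH Ω u x) := by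
    calc ∫⁻ x, ‖u (l • x) - u x‖ₑ
        ≤ ∫⁻ x, ENNReal.ofReal R * ∫⁻ t in Icc 1 l, HH Ω u (t • x) :=
          lintegral_mono (S.ray_bound T hR hl)
      _ = ENNReal.ofReal R * ∫⁻ t in Icc 1 l, ∫⁻ x, HH Ω u (t • x) := by
          rw [lintegral_const_mul' _ _ ENNReal.ofReal_ne_top, lintegral_lintegral_swap]
          exact hm2.aemeasurable
      _ ≤ ENNReal.ofReal R * ∫⁻ t in Icc 1 l, ∫⁻ x, HH Ω u x := by
          gcongr 1
          refine setLIntegral_mono' measurableSet_Icc fun t ht => ?_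
          have ht0 : 0 < t := by linarith [ht.1]
          rw [← lintegral_map (μ := volume) (g := fun x : En n => t • x) hm (by fun_prop),
            Measure.map_addHaar_smul volume ht0.ne', lintegral_smul_measure]
          rw [smul_eq_mul]
          refine mul_le_of_le_one_left' ?_
          rw [ENNReal.ofReal_le_one, abs_of_pos (by positivity)]
          exact inv_le_one_of_one_le₀ (one_le_pow₀ ht.1)
      _ = _ := by
          rw [setLIntegral_const, Real.volume_Icc]
          ring
  have hfin : ENNReal.ofReal R * ∫⁻ x, HH Ω u x ≠ ⊤ :=
    ENNReal.mul_ne_top ENNReal.ofReal_ne_top S.HH_fin.ne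
  have hcont : Continuous (fun x => u (l • x) - u x) :=
    (S.hc.comp (continuous_const_smul l)).sub S.hc
  have := integral_norm_eq_lintegral_enorm (μ := volume) hcont.aestronglyMeasurable
  simp only [Real.norm_eq_abs] at this
  rw [this]
  have h3 := ENNReal.toReal_mono (ENNReal.mul_ne_top ENNReal.ofReal_ne_top hfin) key
  rw [ENNReal.toReal_mul, ENNReal.toReal_ofReal (by linarith)] at h3
  linarith

end Sol
end Part7

section Part8
open scoped Topology

/-- A potential with continuous partial derivatives. -/
structure Pot (F fa fb : ℝ → ℝ → ℝ) : Prop where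
  da : ∀ a b, HasDerivAt (fun t => F t b) (fa a b) a
  db : ∀ a b, HasDerivAt (fun t => F a t) (fb a b) b
  ca : Continuous (fun p : ℝ × ℝ => fa p.1 p.2)
  cb : Continuous (fun p : ℝ × ℝ => fb p.1 p.2)
  cF : Continuous (fun p : ℝ × ℝ => F p.1 p.2)
  z : F 0 0 = 0

lemma mvt_rem {g g' : ℝ → ℝ} (hg : ∀ t, HasDerivAt g (g' t) t) {a a' k ε : ℝ}
    (hk : ∀ t ∈ uIcc a a', |g' t - k| ≤ ε) : |g a' - g a - k * (a' - a)| ≤ ε * |a' - a| := by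
  have h := Convex.norm_image_sub_le_of_norm_hasDerivWithin_le (f := fun t => g t - k * t)
    (f' := fun t => g' t - k) (s := uIcc a a') (C := ε) (x := a) (y := a')
    (fun t _ => by
      have := (hg t).sub ((hasDerivAt_id t).const_mul k)
      rw [mul_one] at this
      exact this.hasDerivWithinAt) (fun t ht => hk t ht) (convex_uIcc a a')
    left_mem_uIcc right_mem_uIcc
  simp only [Real.norm_eq_abs] at h
  convert h using 2
  ring

lemma Pot.rem {F fa fb : ℝ → ℝ → ℝ} (P : Pot F fa fb) (M : ℝ) {ε : ℝ} (hε : 0 < ε) :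
    ∃ ρ > 0, ∀ a b a' b', |a| ≤ M → |b| ≤ M → |a'| ≤ M → |b'| ≤ M → |a' - a| < ρ → |b' - b| < ρ →
      |F a' b' - F a b - fa a b * (a' - a) - fb a b * (b' - b)| ≤ ε * (|a' - a| + |b' - b|) := by
  have hK : IsCompact (Icc (-M) M ×ˢ Icc (-M) M) := isCompact_Icc.prod isCompact_Icc
  have ua := hK.uniformContinuousOn_of_continuous P.ca.continuousOn
  have ub := hK.uniformContinuousOn_of_continuous P.cb.continuousOn
  rw [Metric.uniformContinuousOn_iff] at ua ub
  obtain ⟨ρ1, h1, hh1⟩ := ua ε hε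
  obtain ⟨ρ2, h2, hh2⟩ := ub ε hε
  refine ⟨min ρ1 ρ2, lt_min h1 h2, fun a b a' b' ha hb ha' hb' haa hbb => ?_⟩
  rw [abs_le] at ha hb ha' hb'
  have key : ∀ {x y t : ℝ}, x ∈ Icc (-M) M → y ∈ Icc (-M) M → t ∈ uIcc x y →
      t ∈ Icc (-M) M ∧ |t - x| ≤ |y - x| := fun hx hy ht =>
    ⟨(convex_Icc (-M) M).ordConnected.uIcc_subset hx hy ht, abs_sub_left_of_mem_uIcc ht⟩
  have m1 := mvt_rem (g := fun t => F t b') (g' := fun t => fa t b') (k := fa a b) (ε := ε)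
    (a := a) (a' := a') (fun t => P.da t b') (fun t ht => by
      obtain ⟨k1, k2⟩ := key ha ha' ht
      have := hh1 (t, b') ⟨k1, hb'⟩ (a, b) ⟨ha, hb⟩ (by
        rw [Prod.dist_eq, max_lt_iff, Real.dist_eq, Real.dist_eq]
        exact ⟨k2.trans_lt (haa.trans_le (min_le_left _ _)), hbb.trans_le (min_le_left _ _)⟩)
      rw [Real.dist_eq] at this
      exact this.le)
  have m2 := mvt_rem (g := fun t => F a t) (g' := fun t => fb a t) (k := fb a b) (ε := ε)
    (a := b) (a' := b') (fun t => P.db a t) (fun t ht => by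
      obtain ⟨k1, k2⟩ := key hb hb' ht
      have := hh2 (a, t) ⟨ha, k1⟩ (a, b) ⟨ha, hb⟩ (by
        rw [Prod.dist_eq, max_lt_iff, Real.dist_eq, Real.dist_eq]
        refine ⟨by simpa using lt_min h1 h2 |>.trans_le (min_le_right _ _), k2.trans_lt (hbb.trans_le (min_le_right _ _))⟩)
      rw [Real.dist_eq] at this
      exact this.le)
  have e : F a' b' - F a b - fa a b * (a' - a) - fb a b * (b' - b)
    = (F a' b' - F a b' - fa a b * (a' - a)) + (F a b' - F a b - fb a b * (b' - b)) := by ring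
  rw [e, mul_add]
  exact (abs_add_le _ _).trans (add_le_add m1 m2)

namespace Sol
variable {n : ℕ} {Ω : Set (En n)} {s a κ : ℝ} {u f w : En n → ℝ}

lemma unif (T : StarDom Ω κ) (S : Sol n Ω s a u f) {ρ : ℝ} (hρ : 0 < ρ) :
    ∀ᶠ l in 𝓝[>] (1:ℝ), ∀ x, |u (l • x) - u x| < ρ := by
  have huc : UniformContinuous u := S.cu.uniformContinuous_of_continuous S.hc
  obtain ⟨R, hR⟩ := S.hb.exists_norm_le
  rw [Metric.uniformContinuous_iff] at huc
  obtain ⟨d, hd, hh⟩ := huc ρ hρ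
  have : ∀ᶠ l in 𝓝[>] (1:ℝ), (l - 1) * R < d := by
    have : Tendsto (fun l : ℝ => (l - 1) * R) (𝓝[>] 1) (𝓝 ((1 - 1) * R)) :=
      (Continuous.tendsto (by fun_prop) _).mono_left nhdsWithin_le_nhds
    simp only [sub_self, zero_mul] at this
    exact this.eventually (gt_mem_nhds hd)
  filter_upwards [this, self_mem_nhdsWithin] with l hl hl1 x
  have hl1 : 1 < l := hl1
  by_cases hx : x ∈ Ω
  · have := @hh (l • x) x (by
      rw [dist_eq_norm]
      have : l • x - x = (l - 1) • x := by module
      rw [this, norm_smul, Real.norm_of_nonneg (by linarith)]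
      refine lt_of_le_of_lt ?_ hl
      exact mul_le_mul_of_nonneg_left (hR x hx) (by linarith))
    rwa [Real.dist_eq] at this
  · rw [S.hz x hx, S.hz]
    · simpa using hρ
    · exact fun h => hx (T.shrink hl1 (subset_closure h))

lemma bdd (S : Sol n Ω s a u f) : ∃ M, ∀ x, |u x| ≤ M := S.cu.exists_bound_of_continuous S.hc

end Sol

variable {n : ℕ} {Ω : Set (En n)} {s₁ a₁ s₂ a₂ κ : ℝ} {u v : En n → ℝ} {F fa fb : ℝ → ℝ → ℝ}

/-- the pairing of the nonlinearity with the rescaled solution -/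
def GG (fa fb : ℝ → ℝ → ℝ) (u v : En n → ℝ) (l : ℝ) : ℝ :=
  (∫ x, fa (u x) (v x) * u (l • x)) + ∫ x, fb (u x) (v x) * v (l • x)

lemma Pot.int (P : Pot F fa fb) (hu : Continuous u) (cu : HasCompactSupport u)
    (hv : Continuous v) (cv : HasCompactSupport v) : Integrable (fun x => F (u x) (v x)) := by
  refine Continuous.integrable_of_hasCompactSupport (P.cF.comp (hu.prodMk hv)) ?_
  refine HasCompactSupport.intro (cu.isCompact.union cv.isCompact) fun x hx => ?_
  rw [mem_union, not_or] at hx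
  rw [image_eq_zero_of_notMem_tsupport hx.1, image_eq_zero_of_notMem_tsupport hx.2, P.z]

lemma poho_rem (T : StarDom Ω κ) (P : Pot F fa fb)
    (S1 : Sol n Ω s₁ a₁ u (fun x => fa (u x) (v x)))
    (S2 : Sol n Ω s₂ a₂ v (fun x => fb (u x) (v x))) {ε : ℝ} (hε : 0 < ε) :
    ∀ᶠ l in 𝓝[>] (1:ℝ), |((l ^ n)⁻¹ - 1) * (∫ x, F (u x) (v x)) -
      (GG fa fb u v l - GG fa fb u v 1)| ≤ ε * (l - 1) := by
  obtain ⟨C1, hC1, hh1⟩ := S1.L1_rate T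
  obtain ⟨C2, hC2, hh2⟩ := S2.L1_rate T
  obtain ⟨M1, hM1⟩ := S1.bdd
  obtain ⟨M2, hM2⟩ := S2.bdd
  have hε' : 0 < ε / (C1 + C2 + 1) := by positivity
  obtain ⟨ρ, hρ, hh⟩ := P.rem (max M1 M2) hε'
  filter_upwards [S1.unif T hρ, S2.unif T hρ, self_mem_nhdsWithin] with l hu hv hl
  have hl1 : 1 < l := hl
  have hl0 : 0 < l := by linarith
  have sc : ∀ {w : En n → ℝ}, HasCompactSupport w → HasCompactSupport (fun x => w (l • x)) :=
    fun cw => cw.comp_homeomorph (Homeomorph.smulOfNeZero l hl0.ne')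
  have hul : Continuous (fun x => u (l • x)) := S1.hc.comp (continuous_const_smul l)
  have hvl : Continuous (fun x => v (l • x)) := S2.hc.comp (continuous_const_smul l)
  have iF := P.int S1.hc S1.cu S2.hc S2.cu
  have iFl := P.int hul (sc S1.cu) hvl (sc S2.cu)
  have eF : ∫ x, F (u (l • x)) (v (l • x)) = (l ^ n)⁻¹ * ∫ x, F (u x) (v x) := by
    have := Measure.integral_comp_smul (volume : Measure (En n)) (fun x => F (u x) (v x)) l
    rw [this, finrank_euclideanSpace_fin, abs_of_pos (by positivity), smul_eq_mul]
  have j1 := cc_mul_int S1.hf hul (sc S1.cu)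
  have j2 := cc_mul_int S1.hf S1.hc S1.cu
  have j3 := cc_mul_int S2.hf hvl (sc S2.cu)
  have j4 := cc_mul_int S2.hf S2.hc S2.cu
  have e : ((l ^ n)⁻¹ - 1) * (∫ x, F (u x) (v x)) - (GG fa fb u v l - GG fa fb u v 1)
      = ∫ x, (F (u (l • x)) (v (l • x)) - F (u x) (v x)
        - (fa (u x) (v x) * u (l • x) - fa (u x) (v x) * u x)
        - (fb (u x) (v x) * v (l • x) - fb (u x) (v x) * v x)) := by
    have k1 : Integrable (fun x => F (u (l • x)) (v (l • x)) - F (u x) (v x)) := iFl.sub iF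
    have k2 : Integrable (fun x => fa (u x) (v x) * u (l • x) - fa (u x) (v x) * u x) := j1.sub j2
    have k3 : Integrable (fun x => fb (u x) (v x) * v (l • x) - fb (u x) (v x) * v x) := j3.sub j4
    have k4 : Integrable (fun x => F (u (l • x)) (v (l • x)) - F (u x) (v x)
      - (fa (u x) (v x) * u (l • x) - fa (u x) (v x) * u x)) := k1.sub k2
    rw [integral_sub k4 k3, integral_sub k1 k2, integral_sub iFl iF, integral_sub j1 j2,
      integral_sub j3 j4, eF]
    simp only [GG, one_smul]
    ring
  rw [e]
  have iu : Integrable (fun x => |u (l • x) - u x|) :=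
    ((cc_int hul (sc S1.cu)).sub (cc_int S1.hc S1.cu)).abs
  have iv : Integrable (fun x => |v (l • x) - v x|) :=
    ((cc_int hvl (sc S2.cu)).sub (cc_int S2.hc S2.cu)).abs
  rw [← Real.norm_eq_abs]
  refine (norm_integral_le_of_norm_le ((iu.add iv).const_mul (ε / (C1 + C2 + 1)))
    (Eventually.of_forall fun x => by
      have := hh (u x) (v x) (u (l • x)) (v (l • x)) ((hM1 _).trans (le_max_left _ _))
        ((hM2 _).trans (le_max_right _ _)) ((hM1 _).trans (le_max_left _ _))
        ((hM2 _).trans (le_max_right _ _)) (hu x) (hv x)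
      rw [← Real.norm_eq_abs] at this
      rw [← mul_sub, ← mul_sub]
      exact this)).trans ?_
  rw [integral_const_mul]
  simp only [Pi.add_apply]
  rw [integral_add iu iv]
  have h1 := hh1 l hl1
  have h2 := hh2 l hl1
  calc ε / (C1 + C2 + 1) * ((∫ x, |u (l • x) - u x|) + ∫ x, |v (l • x) - v x|)
      ≤ ε / (C1 + C2 + 1) * ((C1 + C2 + 1) * (l - 1)) := by
        gcongr
        nlinarith
    _ = ε * (l - 1) := by
        have : C1 + C2 + 1 ≠ 0 := by positivity
        field_simp

lemma poho_lim (T : StarDom Ω κ) (P : Pot F fa fb)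
    (S1 : Sol n Ω s₁ a₁ u (fun x => fa (u x) (v x)))
    (S2 : Sol n Ω s₂ a₂ v (fun x => fb (u x) (v x))) :
    Tendsto (fun l : ℝ => (GG fa fb u v 1 - l ^ (((n:ℝ) - 2) / 2) * GG fa fb u v l) / (l - 1))
      (𝓝[>] 1) (𝓝 (n * (∫ x, F (u x) (v x)) - ((n:ℝ) - 2) / 2 * GG fa fb u v 1)) := by
  set I := ∫ x, F (u x) (v x) with hI
  set G := GG fa fb u v with hG
  have hsl : ∀ {g : ℝ → ℝ} {g' : ℝ}, HasDerivAt g g' 1 →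
      Tendsto (fun l => (g l - g 1) / (l - 1)) (𝓝[>] 1) (𝓝 g') := fun {g g'} h => by
    have := (hasDerivAt_iff_tendsto_slope.1 h).mono_left
      (nhdsWithin_mono 1 (show Ioi (1:ℝ) ⊆ {1}ᶜ from fun t ht => ne_of_gt ht))
    refine this.congr fun l => ?_
    rw [slope_def_field]
  have d1 : Tendsto (fun l : ℝ => ((l ^ n)⁻¹ - 1) / (l - 1)) (𝓝[>] 1) (𝓝 (-(n:ℝ))) := by
    have : HasDerivAt (fun l : ℝ => (l ^ n)⁻¹) (-(n:ℝ)) 1 := by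
      have := (hasDerivAt_pow n (1:ℝ)).inv (by simp)
      refine this.congr_deriv ?_
      simp
    simpa using hsl this
  have d2 : Tendsto (fun l : ℝ => (l ^ (((n:ℝ) - 2) / 2) - 1) / (l - 1)) (𝓝[>] 1)
      (𝓝 (((n:ℝ) - 2) / 2)) := by
    have := Real.hasDerivAt_rpow_const (x := 1) (p := ((n:ℝ) - 2) / 2) (Or.inl one_ne_zero)
    simpa using hsl this
  have d3 : Tendsto (fun l : ℝ => l ^ (((n:ℝ) - 2) / 2)) (𝓝[>] 1) (𝓝 1) := by
    have := (Real.continuousAt_rpow_const 1 (((n:ℝ) - 2) / 2) (Or.inl one_ne_zero)).tendsto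
    rw [one_rpow] at this
    exact this.mono_left nhdsWithin_le_nhds
  have d4 : Tendsto (fun l : ℝ => (((l ^ n)⁻¹ - 1) * I - (G l - G 1)) / (l - 1)) (𝓝[>] 1) (𝓝 0) := by
    rw [Metric.tendsto_nhds]
    intro ε hε
    filter_upwards [poho_rem T P S1 S2 (half_pos hε), self_mem_nhdsWithin] with l h hl
    have hl' : 0 < l - 1 := sub_pos.2 hl
    rw [Real.dist_eq, sub_zero, abs_div, abs_of_pos hl', div_lt_iff₀ hl']
    refine h.trans_lt ?_
    nlinarith
  have := ((d3.mul (d4.sub (d1.mul_const I))).sub (d2.mul_const (G 1)))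
  refine (this.congr' ?_).trans_eq ?_
  · filter_upwards [self_mem_nhdsWithin] with l hl
    have hl' : l - 1 ≠ 0 := (sub_pos.2 hl).ne'
    field_simp
    ring
  · congr 1; ring

end Part8

section Part9
open scoped Topology

variable {n : ℕ} {Ω : Set (En n)} {s a s₁ a₁ s₂ a₂ κ : ℝ} {u v f : En n → ℝ}
  {F fa fb : ℝ → ℝ → ℝ}

/-- gradient energy in the boundary layer -/
def LEn (Ω : Set (En n)) (u : En n → ℝ) (l : ℝ) : ℝ := ∫ x in StarDom.layer Ω l, G2 u x

lemma LEn_nonneg (Ω : Set (En n)) (u : En n → ℝ) (l : ℝ) : 0 ≤ LEn Ω u l :=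
  integral_nonneg fun x => G2_nonneg u x

lemma Sol.main_real (T : StarDom Ω κ) (S : Sol n Ω s a u f) {l : ℝ} (hl : 1 < l) :
    LEn Ω u l + Sol.A n s a * ((1 - l ^ (2 * s - 2)) * Sol.Sf n s u) ≤
      2 * ((∫ x, f x * u x) - l ^ (((n:ℝ) - 2) / 2) * ∫ x, f x * u (l • x)) := by
  obtain ⟨L, h1, h2, h3⟩ := S.main_ineq hl (T.supp hl S.hz)
  have : LEn Ω u l ≤ L := by
    unfold LEn
    rw [integral_eq_lintegral_of_nonneg_ae (Eventually.of_forall (G2_nonneg u))]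
    · exact ENNReal.toReal_le_of_le_ofReal h2 h3
    · exact (S.G2_cont.mono fun x hx => hx.1).aestronglyMeasurable (T.layer_open l).measurableSet
  linarith

lemma frac_coef (s : ℝ) :
    Tendsto (fun l : ℝ => (1 - l ^ (2 * s - 2)) / (l - 1)) (𝓝[>] 1) (𝓝 (2 - 2 * s)) := by
  have h := (Real.hasDerivAt_rpow_const (x := 1) (p := 2 * s - 2) (Or.inl one_ne_zero)).const_sub 1
  have := (hasDerivAt_iff_tendsto_slope.1 h).mono_left
      (nhdsWithin_mono 1 (show Ioi (1:ℝ) ⊆ {1}ᶜ from fun t ht => ne_of_gt ht))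
  refine (this.congr fun l => ?_).trans_eq ?_
  · rw [slope_def_field]; simp
  · simp

lemma frac_coef_nonneg (hs : s < 1) {l : ℝ} (hl : 1 < l) : 0 ≤ 1 - l ^ (2 * s - 2) := by
  have := rpow_le_one_of_one_le_of_nonpos hl.le (by linarith : 2 * s - 2 ≤ 0)
  linarith

/-- the Pohozaev quantity -/
def PP (F fa fb : ℝ → ℝ → ℝ) (u v : En n → ℝ) : ℝ :=
  n * (∫ x, F (u x) (v x)) - ((n:ℝ) - 2) / 2 * GG fa fb u v 1

lemma poho_ineq (T : StarDom Ω κ)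
    (S1 : Sol n Ω s₁ a₁ u (fun x => fa (u x) (v x)))
    (S2 : Sol n Ω s₂ a₂ v (fun x => fb (u x) (v x))) {l : ℝ} (hl : 1 < l) :
    LEn Ω u l + LEn Ω v l + Sol.A n s₁ a₁ * ((1 - l ^ (2 * s₁ - 2)) * Sol.Sf n s₁ u)
      + Sol.A n s₂ a₂ * ((1 - l ^ (2 * s₂ - 2)) * Sol.Sf n s₂ v)
      ≤ 2 * (GG fa fb u v 1 - l ^ (((n:ℝ) - 2) / 2) * GG fa fb u v l) := by
  have h1 := S1.main_real T hl
  have h2 := S2.main_real T hl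
  simp only [GG, one_smul]
  linarith

lemma poho_nonneg (T : StarDom Ω κ) (P : Pot F fa fb)
    (S1 : Sol n Ω s₁ a₁ u (fun x => fa (u x) (v x)))
    (S2 : Sol n Ω s₂ a₂ v (fun x => fb (u x) (v x))) :
    0 ≤ PP F fa fb u v := by
  refine ge_of_tendsto (poho_lim T P S1 S2) ?_
  filter_upwards [self_mem_nhdsWithin] with l hl
  have hl : 1 < l := hl
  have h := poho_ineq T S1 S2 hl
  have := mul_nonneg S1.A_nonneg (mul_nonneg (frac_coef_nonneg S1.hs.2 hl) (Sol.Sf_nonneg n s₁ u))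
  have := mul_nonneg S2.A_nonneg (mul_nonneg (frac_coef_nonneg S2.hs.2 hl) (Sol.Sf_nonneg n s₂ v))
  have := LEn_nonneg Ω u l
  have := LEn_nonneg Ω v l
  exact div_nonneg (by linarith) (by linarith)

lemma poho_zero (T : StarDom Ω κ) (P : Pot F fa fb)
    (S1 : Sol n Ω s₁ a₁ u (fun x => fa (u x) (v x)))
    (S2 : Sol n Ω s₂ a₂ v (fun x => fb (u x) (v x))) (h0 : PP F fa fb u v = 0) :
    Sol.A n s₁ a₁ * Sol.Sf n s₁ u = 0 ∧ Sol.A n s₂ a₂ * Sol.Sf n s₂ v = 0 ∧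
    Tendsto (fun l => LEn Ω u l / (l - 1)) (𝓝[>] 1) (𝓝 0) ∧
    Tendsto (fun l => LEn Ω v l / (l - 1)) (𝓝[>] 1) (𝓝 0) := by
  have hlim := (poho_lim T P S1 S2).const_mul 2
  have e : n * (∫ x, F (u x) (v x)) - ((n:ℝ) - 2) / 2 * GG fa fb u v 1 = 0 := h0
  rw [e, mul_zero] at hlim
  have key : ∀ l : ℝ, 1 < l → ∀ X, X ≤ 2 * (GG fa fb u v 1 - l ^ (((n:ℝ) - 2) / 2) * GG fa fb u v l)
      → X / (l - 1) ≤ 2 * ((GG fa fb u v 1 - l ^ (((n:ℝ) - 2) / 2) * GG fa fb u v l) / (l - 1)) := by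
    intro l hl X hX
    rw [← mul_div_assoc]
    exact div_le_div_of_nonneg_right hX (by linarith)
  have n1 : ∀ {l : ℝ}, 1 < l →
      0 ≤ Sol.A n s₁ a₁ * ((1 - l ^ (2 * s₁ - 2)) * Sol.Sf n s₁ u) := fun {l} hl =>
    mul_nonneg S1.A_nonneg (mul_nonneg (frac_coef_nonneg S1.hs.2 hl) (Sol.Sf_nonneg n s₁ u))
  have n2 : ∀ {l : ℝ}, 1 < l →
      0 ≤ Sol.A n s₂ a₂ * ((1 - l ^ (2 * s₂ - 2)) * Sol.Sf n s₂ v) := fun {l} hl =>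
    mul_nonneg S2.A_nonneg (mul_nonneg (frac_coef_nonneg S2.hs.2 hl) (Sol.Sf_nonneg n s₂ v))
  refine ⟨?_, ?_, ?_, ?_⟩
  · have l1 : Tendsto (fun l : ℝ => Sol.A n s₁ a₁ * ((1 - l ^ (2 * s₁ - 2)) * Sol.Sf n s₁ u) / (l - 1))
        (𝓝[>] 1) (𝓝 (Sol.A n s₁ a₁ * ((2 - 2 * s₁) * Sol.Sf n s₁ u))) := by
      refine (((frac_coef s₁).mul_const (Sol.Sf n s₁ u)).const_mul (Sol.A n s₁ a₁)).congr fun l => ?_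
      ring
    have := le_of_tendsto_of_tendsto l1 hlim (by
      filter_upwards [self_mem_nhdsWithin] with l hl
      refine key l hl _ ?_
      linarith [poho_ineq T S1 S2 hl, n2 hl, LEn_nonneg Ω u l, LEn_nonneg Ω v l])
    have hp := mul_nonneg S1.A_nonneg (Sol.Sf_nonneg n s₁ u)
    nlinarith [S1.hs.2]
  · have l1 : Tendsto (fun l : ℝ => Sol.A n s₂ a₂ * ((1 - l ^ (2 * s₂ - 2)) * Sol.Sf n s₂ v) / (l - 1))
        (𝓝[>] 1) (𝓝 (Sol.A n s₂ a₂ * ((2 - 2 * s₂) * Sol.Sf n s₂ v))) := by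
      refine (((frac_coef s₂).mul_const (Sol.Sf n s₂ v)).const_mul (Sol.A n s₂ a₂)).congr fun l => ?_
      ring
    have := le_of_tendsto_of_tendsto l1 hlim (by
      filter_upwards [self_mem_nhdsWithin] with l hl
      refine key l hl _ ?_
      linarith [poho_ineq T S1 S2 hl, n1 hl, LEn_nonneg Ω u l, LEn_nonneg Ω v l])
    have hp := mul_nonneg S2.A_nonneg (Sol.Sf_nonneg n s₂ v)
    nlinarith [S2.hs.2]
  · refine tendsto_of_tendsto_of_tendsto_of_le_of_le' tendsto_const_nhds hlim ?_ ?_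
    · filter_upwards [self_mem_nhdsWithin] with l hl
      have hl : 1 < l := hl
      exact div_nonneg (LEn_nonneg _ _ _) (by linarith)
    · filter_upwards [self_mem_nhdsWithin] with l hl
      refine key l hl _ ?_
      linarith [poho_ineq T S1 S2 hl, n1 hl, n2 hl, LEn_nonneg Ω u l, LEn_nonneg Ω v l]
  · refine tendsto_of_tendsto_of_tendsto_of_le_of_le' tendsto_const_nhds hlim ?_ ?_
    · filter_upwards [self_mem_nhdsWithin] with l hl
      have hl : 1 < l := hl
      exact div_nonneg (LEn_nonneg _ _ _) (by linarith)
    · filter_upwards [self_mem_nhdsWithin] with l hl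
      refine key l hl _ ?_
      linarith [poho_ineq T S1 S2 hl, n1 hl, n2 hl, LEn_nonneg Ω u l, LEn_nonneg Ω v l]

/-- vanishing fractional energy forces the function to vanish -/
lemma Sol.zero_of_frac (S : Sol n Ω s a u f) (ha : 0 < a) (h : Sol.A n s a * Sol.Sf n s u = 0) :
    ∀ x, u x = 0 := by
  have hA : 0 < Sol.A n s a := mul_pos ha (by have := cK_pos n S.hs; positivity)
  have hSf : Sol.Sf n s u = 0 := by
    rcases mul_eq_zero.1 h with h | h
    · exact absurd h hA.ne'
    · exact h
  have hInt := (S.energy one_pos).1 ha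
  have hae := (integral_eq_zero_iff_of_nonneg
    (fun y => mul_nonneg (bb_nonneg u y) (kk_nonneg n s y)) hInt).1 hSf
  obtain ⟨R, hR0, hR⟩ := S.hb.exists_pos_norm_le
  have : Nonempty (Fin n) := ⟨⟨0, S.hn⟩⟩
  have : Nontrivial (En n) := inferInstance
  -- there is a far away point where `bb` vanishes
  have hopen : IsOpen {y : En n | 2 * R < ‖y‖} := isOpen_lt continuous_const continuous_norm
  have hne : ({y : En n | 2 * R < ‖y‖}).Nonempty := by
    obtain ⟨y, hy⟩ := exists_norm_eq (En n) (by positivity : 0 ≤ 2 * R + 1)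
    exact ⟨y, by show 2 * R < ‖y‖; linarith⟩
  have hpos : 0 < volume {y : En n | 2 * R < ‖y‖} := hopen.measure_pos volume hne
  obtain ⟨y, hy, hy0⟩ : ∃ y, 2 * R < ‖y‖ ∧ bb u u y * kk n s y = 0 := by
    by_contra hcon
    push Not at hcon
    have : {y : En n | 2 * R < ‖y‖} ⊆ {y | ¬ (bb u u y * kk n s y = (0 : En n → ℝ) y)} :=
      fun y hy => hcon y hy
    exact hpos.ne' (measure_mono_null this (ae_iff.1 hae))
  have hynorm : 0 < ‖y‖ := by linarith
  have hk : kk n s y ≠ 0 := by unfold kk; positivity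
  have hbb : bb u u y = 0 := (mul_eq_zero.1 hy0).resolve_right hk
  unfold bb at hbb
  have hc : Continuous (fun x => (u (x + y) - u x) * (u (x + y) - u x)) := by
    have := S.hc; fun_prop
  have hz := (integral_eq_zero_iff_of_nonneg (fun x => mul_self_nonneg _)
    (bb_int S.hc S.hc S.cu y)).1 hbb
  have hz' : (fun x => (u (x + y) - u x) * (u (x + y) - u x)) = fun _ => 0 :=
    (hc.ae_eq_iff_eq volume continuous_const).1 hz
  intro x
  by_cases hx : x ∈ Ω
  · have h1 := congrFun hz' x
    have h2 : u (x + y) = 0 := by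
      refine S.hz _ fun h => ?_
      have h3 := hR _ h
      have h4 := hR _ hx
      have h5 : ‖y‖ ≤ ‖x + y‖ + ‖x‖ := by
        have : y = (x + y) - x := by abel
        conv_lhs => rw [this]
        exact norm_sub_le _ _
      linarith
    simp only [h2, zero_sub, neg_mul_neg, mul_self_eq_zero] at h1
    exact h1
  · exact S.hz x hx

end Part9

section Part10
open scoped Topology Manifold ContDiff

variable {n : ℕ} {Ω : Set (En n)} {s a κ : ℝ} {u v f : En n → ℝ}

lemma ld_const (c : ℝ) (x e : En n) : lineDeriv ℝ (fun _ : En n => c) x e = 0 := by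
  unfold lineDeriv; simp

lemma exists_cutoff {K : Set (En n)} (ho : IsOpen Ω) (hK : IsCompact K) (hKΩ : K ⊆ Ω) :
    ∃ χ : En n → ℝ, ContDiff ℝ 1 χ ∧ HasCompactSupport χ ∧ tsupport χ ⊆ Ω ∧
      ∀ x ∈ K, ∀ᶠ y in 𝓝 x, χ y = 1 := by
  obtain ⟨K', hK', h1, h2⟩ := exists_compact_between hK ho hKΩ
  obtain ⟨χ, hχ1, hχ0, -⟩ := exists_contMDiffMap_one_nhds_of_subset_interior (n := 1)
    (𝓘(ℝ, En n)) hK.isClosed h1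
  have hs : tsupport χ ⊆ K' := closure_minimal (fun x hx => by
    by_contra h; exact hx (hχ0 x h)) hK'.isClosed
  refine ⟨χ, χ.contMDiff.contDiff, ?_, hs.trans h2, fun x hx => ?_⟩
  · exact hK'.of_isClosed_subset (isClosed_tsupport _) hs
  · exact (eventually_nhdsSet_iff_forall.1 hχ1) x hx

lemma ibp_compact {K : Set (En n)} (ho : IsOpen Ω) (hK : IsCompact K) (hKΩ : K ⊆ Ω)
    {g φ : En n → ℝ} (hg : ContDiffOn ℝ 1 g Ω) {C : ℝ≥0} (hφ : LipschitzWith C φ)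
    (h0 : ∀ x ∉ K, φ x = 0) (e : En n) :
    ∫ x, φ x * fderiv ℝ g x e = ∫ x, lineDeriv ℝ φ x (-e) * g x := by
  obtain ⟨χ, c1, c2, c3, c4⟩ := exists_cutoff ho hK hKΩ
  have hs : tsupport (fun x => χ x * g x) ⊆ tsupport χ :=
    closure_mono (Function.support_mul_subset_left χ g)
  have hsm : ContDiff ℝ 1 (fun x => χ x * g x) := by
    rw [contDiff_iff_contDiffAt]
    intro x
    by_cases hx : x ∈ Ω
    · exact c1.contDiffAt.mul (hg.contDiffAt (ho.mem_nhds hx))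
    · have : (fun x => χ x * g x) =ᶠ[𝓝 x] fun _ => 0 :=
        notMem_tsupport_iff_eventuallyEq.1 fun h => hx (c3 (hs h))
      exact contDiffAt_const.congr_of_eventuallyEq this
  have hcs : HasCompactSupport (fun x => χ x * g x) :=
    c2.of_isClosed_subset (isClosed_tsupport _) hs
  obtain ⟨D, hD⟩ := ContDiff.lipschitzWith_of_hasCompactSupport hcs hsm (by simp)
  have hφc : HasCompactSupport φ := HasCompactSupport.intro hK h0
  have hφs : tsupport φ ⊆ K := closure_minimal (fun x hx => by
    by_contra h; exact hx (h0 x h)) hK.isClosed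
  have key := hD.integral_lineDeriv_mul_eq (μ := volume) hφ hφc e
  calc ∫ x, φ x * fderiv ℝ g x e
      = ∫ x, lineDeriv ℝ (fun x => χ x * g x) x e * φ x := by
        congr 1; ext x
        by_cases hx : x ∈ K
        · have : (fun x => χ x * g x) =ᶠ[𝓝 x] g := by
            filter_upwards [c4 x hx] with y hy
            rw [hy, one_mul]
          rw [this.lineDeriv_eq, mul_comm, DifferentiableAt.lineDeriv_eq_fderiv]
          exact (hg.contDiffAt (ho.mem_nhds (hKΩ hx))).differentiableAt (by norm_num)
        · rw [h0 x hx]; ring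
    _ = _ := key
    _ = _ := by
        congr 1; ext x
        by_cases hx : x ∈ K
        · rw [(c4 x hx).self_of_nhds, one_mul]
        · have : φ =ᶠ[𝓝 x] fun _ => 0 := notMem_tsupport_iff_eventuallyEq.1 fun h => hx (hφs h)
          rw [this.lineDeriv_eq, ld_const]
          simp

/-- the boundary cutoff with width parameter `r` -/
def cut (Ω : Set (En n)) (r : ℝ) (x : En n) : ℝ :=
  min 1 (max 0 (4 / r * infDist x Ωᶜ - 1))

lemma cut_nonneg (r : ℝ) (x : En n) : 0 ≤ cut Ω r x := le_min zero_le_one (le_max_left _ _)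
lemma cut_le (r : ℝ) (x : En n) : cut Ω r x ≤ 1 := min_le_left _ _

lemma cut_lip {r : ℝ} (hr : 0 < r) : LipschitzWith (4 / r).toNNReal (cut Ω r) := by
  have h1 : LipschitzWith (4 / r).toNNReal (fun x => 4 / r * infDist x Ωᶜ - 1) := by
    refine LipschitzWith.of_dist_le_mul fun x y => ?_
    rw [Real.coe_toNNReal _ (by positivity), Real.dist_eq]
    have := (lipschitz_infDist_pt Ωᶜ).dist_le_mul x y
    rw [Real.dist_eq] at this
    simp only [NNReal.coe_one, one_mul] at this
    rw [show 4 / r * infDist x Ωᶜ - 1 - (4 / r * infDist y Ωᶜ - 1)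
      = 4 / r * (infDist x Ωᶜ - infDist y Ωᶜ) by ring, abs_mul, abs_of_pos (by positivity)]
    gcongr
  exact (h1.const_max 0).const_min 1

lemma cut_zero {r : ℝ} (hr : 0 < r) {x : En n} (h : infDist x Ωᶜ ≤ r / 4) : cut Ω r x = 0 := by
  unfold cut
  have : 4 / r * infDist x Ωᶜ ≤ 1 := by
    calc 4 / r * infDist x Ωᶜ ≤ 4 / r * (r / 4) := by gcongr
      _ = 1 := by field_simp
  rw [max_eq_left (by linarith)]; simp

lemma cut_one {r : ℝ} (hr : 0 < r) {x : En n} (h : r / 2 ≤ infDist x Ωᶜ) : cut Ω r x = 1 := by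
  unfold cut
  have : 2 ≤ 4 / r * infDist x Ωᶜ := by
    calc 2 = 4 / r * (r / 2) := by field_simp; norm_num
      _ ≤ _ := by gcongr
  rw [min_eq_left]
  exact le_max_of_le_right (by linarith)

lemma mem_of_dist {x : En n} (h : 0 < infDist x Ωᶜ) : x ∈ Ω := by
  by_contra hx
  have := infDist_zero_of_mem (s := Ωᶜ) hx
  linarith

lemma compl_nonempty (hn : 0 < n) (hb : IsBounded Ω) : Ωᶜ.Nonempty := by
  have : Nonempty (Fin n) := ⟨⟨0, hn⟩⟩
  by_contra h
  rw [not_nonempty_iff_eq_empty, compl_empty_iff] at h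
  rw [h] at hb
  exact NormedSpace.unbounded_univ ℝ (En n) hb

lemma cut_dist_pos (hn : 0 < n) (ho : IsOpen Ω) (hb : IsBounded Ω) {x : En n} (hx : x ∈ Ω) :
    0 < infDist x Ωᶜ :=
  (ho.isClosed_compl.notMem_iff_infDist_pos (compl_nonempty hn hb)).1 (fun h => h hx)

lemma cut_compact (hb : IsBounded Ω) {r : ℝ} (hr : 0 < r) :
    IsCompact {x : En n | r / 4 ≤ infDist x Ωᶜ} ∧ {x : En n | r / 4 ≤ infDist x Ωᶜ} ⊆ Ω := by
  have hsub : {x : En n | r / 4 ≤ infDist x Ωᶜ} ⊆ Ω := fun x hx =>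
    mem_of_dist (lt_of_lt_of_le (by positivity) (show r / 4 ≤ infDist x Ωᶜ from hx))
  exact ⟨Metric.isCompact_of_isClosed_isBounded
    (isClosed_le continuous_const (continuous_infDist_pt _)) (hb.subset hsub), hsub⟩

lemma cut_int (hb : IsBounded Ω) {r : ℝ} (hr : 0 < r) {h : En n → ℝ} (hh : ContinuousOn h Ω) :
    Integrable (fun x => cut Ω r x * h x) := by
  obtain ⟨hK, hKΩ⟩ := cut_compact hb hr
  have : IntegrableOn (fun x => cut Ω r x * h x) {x : En n | r / 4 ≤ infDist x Ωᶜ} :=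
    ((cut_lip hr).continuous.continuousOn.mul (hh.mono hKΩ)).integrableOn_compact hK
  refine this.integrable_of_forall_notMem_eq_zero fun x hx => ?_
  have : ¬ r / 4 ≤ infDist x Ωᶜ := hx
  rw [cut_zero hr (by linarith)]; ring

lemma cut_lineDeriv (T : StarDom Ω κ) {l : ℝ} (hl : 1 < l) (e : En n) {x : En n}
    (hx : x ∉ StarDom.layer Ω l) : lineDeriv ℝ (cut Ω (κ * (1 - l⁻¹))) x e = 0 := by
  have hl1 : l⁻¹ < 1 := inv_lt_one_of_one_lt₀ hl
  set r := κ * (1 - l⁻¹) with hr_def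
  have hr : 0 < r := mul_pos T.hk (by linarith)
  have hcont : Continuous fun y : En n => infDist y Ωᶜ := continuous_infDist_pt _
  rcases lt_or_ge (infDist x Ωᶜ) (r / 4) with h | h
  · have : cut Ω r =ᶠ[𝓝 x] fun _ => 0 := by
      filter_upwards [hcont.continuousAt.eventually_lt continuousAt_const h] with y hy
      exact cut_zero hr hy.le
    rw [this.lineDeriv_eq, ld_const]
  rcases lt_or_ge (r / 2) (infDist x Ωᶜ) with h' | h'
  · have : cut Ω r =ᶠ[𝓝 x] fun _ => 1 := by
      filter_upwards [continuousAt_const.eventually_lt hcont.continuousAt h'] with y hy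
      exact cut_one hr hy.le
    rw [this.lineDeriv_eq, ld_const]
  exfalso
  apply hx
  have hne : Ωᶜ.Nonempty := by
    by_contra hne
    rw [not_nonempty_iff_eq_empty] at hne
    rw [hne, infDist_empty] at h
    linarith
  obtain ⟨y, hy, hxy⟩ := (infDist_lt_iff hne).1 (show infDist x Ωᶜ < r by linarith)
  refine ⟨mem_of_dist (by linarith), T.out hl hy ?_⟩
  rwa [dist_comm, dist_eq_norm] at hxy

set_option maxHeartbeats 1000000 in
lemma cut_ibp (T : StarDom Ω κ) (S : Sol n Ω s a u f) {g : En n → ℝ} (hg : ContDiffOn ℝ 1 g Ω)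
    {C : ℝ} (hC : 0 ≤ C) (hgC : ∀ x ∈ Ω, |g x| ≤ C * (G2 u x + u x ^ 2)) (e : En n)
    {l : ℝ} (hl : 1 < l) (hl2 : l ≤ 2) :
    |∫ x, cut Ω (κ * (1 - l⁻¹)) x * fderiv ℝ g x e| ≤
      8 * C * ‖e‖ / κ * ((LEn Ω u l + ∫ x in StarDom.layer Ω l, u x ^ 2) / (l - 1)) := by
  have hl1 : l⁻¹ < 1 := inv_lt_one_of_one_lt₀ hl
  have hk := T.hk
  set r := κ * (1 - l⁻¹) with hr_def
  have hr : 0 < r := mul_pos hk (by linarith)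
  obtain ⟨hK, hKΩ⟩ := cut_compact T.hb hr
  rw [ibp_compact T.ho hK hKΩ hg (cut_lip hr) (fun x hx => cut_zero hr (by
    have : ¬ r / 4 ≤ infDist x Ωᶜ := hx
    linarith)) e]
  have hsub : StarDom.layer Ω l ⊆ Ω := fun x hx => hx.1
  have hI1 : IntegrableOn (G2 u) (StarDom.layer Ω l) := S.G2_int.mono_set hsub
  have hI2 : IntegrableOn (fun x => u x ^ 2) (StarDom.layer Ω l) :=
    ((S.hc.pow 2).integrable_of_hasCompactSupport (by
      have := S.cu
      refine this.comp_left (g := fun t : ℝ => t ^ 2) (by simp))).integrableOn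
  have e1 : ∫ x, lineDeriv ℝ (cut Ω r) x (-e) * g x
      = ∫ x in StarDom.layer Ω l, lineDeriv ℝ (cut Ω r) x (-e) * g x := by
    symm
    apply setIntegral_eq_integral_of_forall_compl_eq_zero
    intro x hx
    rw [cut_lineDeriv T hl (-e) hx, zero_mul]
  have hbd : ∀ x ∈ StarDom.layer Ω l, ‖lineDeriv ℝ (cut Ω r) x (-e) * g x‖ ≤
      4 / r * ‖e‖ * C * (G2 u x + u x ^ 2) := by
    intro x hx
    have h1 := norm_lineDeriv_le_of_lipschitz ℝ (x₀ := x) (v := -e) (cut_lip (Ω := Ω) hr)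
    rw [Real.coe_toNNReal _ (by positivity), norm_neg] at h1
    have h2 := hgC x hx.1
    rw [norm_mul, mul_assoc (4 / r * ‖e‖)]
    exact mul_le_mul h1 h2 (abs_nonneg _) (by positivity)
  rw [e1, ← Real.norm_eq_abs]
  have h3 := norm_integral_le_of_norm_le (f := fun x => lineDeriv ℝ (cut Ω r) x (-e) * g x)
    (μ := volume.restrict (StarDom.layer Ω l)) ((hI1.add hI2).const_mul (4 / r * ‖e‖ * C))
    ((ae_restrict_iff' (T.layer_open l).measurableSet).2 (Eventually.of_forall hbd))
  refine h3.trans ?_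
  rw [integral_const_mul]
  have h4 : ∫ x in StarDom.layer Ω l, (G2 u + fun x => u x ^ 2) x
      = LEn Ω u l + ∫ x in StarDom.layer Ω l, u x ^ 2 := integral_add hI1 hI2
  rw [h4]
  have hX : 0 ≤ LEn Ω u l + ∫ x in StarDom.layer Ω l, u x ^ 2 :=
    add_nonneg (LEn_nonneg _ _ _) (integral_nonneg fun x => sq_nonneg _)
  have h5 : 4 / r ≤ 8 / (κ * (l - 1)) := by
    rw [div_le_div_iff₀ hr (mul_pos hk (by linarith))]
    have : (l - 1) ≤ 2 * (1 - l⁻¹) := by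
      have : 0 < l := by linarith
      rw [show 2 * (1 - l⁻¹) = 2 * (l - 1) / l by field_simp, le_div_iff₀ this]
      nlinarith
    rw [hr_def]
    nlinarith
  calc 4 / r * ‖e‖ * C * (LEn Ω u l + ∫ x in StarDom.layer Ω l, u x ^ 2)
      ≤ 8 / (κ * (l - 1)) * ‖e‖ * C * (LEn Ω u l + ∫ x in StarDom.layer Ω l, u x ^ 2) := by
        gcongr
    _ = _ := by
        have : l - 1 ≠ 0 := by linarith
        field_simp

lemma layer_sq (T : StarDom Ω κ) (S : Sol n Ω s a u f) :
    Tendsto (fun l => (∫ x in StarDom.layer Ω l, u x ^ 2) / (l - 1)) (𝓝[>] 1) (𝓝 0) := by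
  have hB : Tendsto (fun l : ℝ => (1 - (l ^ n)⁻¹) / (l - 1)) (𝓝[>] 1) (𝓝 n) := by
    have hp := (hasDerivAt_pow n (1:ℝ)).fun_inv (by simp)
    have h := hp.const_sub 1
    have := (hasDerivAt_iff_tendsto_slope.1 h).mono_left
      (nhdsWithin_mono 1 (show Ioi (1:ℝ) ⊆ {1}ᶜ from fun t ht => ne_of_gt ht))
    refine (this.congr fun l => ?_).trans_eq ?_
    · rw [slope_def_field]; simp
    · simp
  set V := volume.real Ω
  have hV : 0 ≤ V := measureReal_nonneg
  rw [Metric.tendsto_nhds]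
  intro ε hε
  set ρ := Real.sqrt (ε / (2 * ((n + 1) * (V + 1)))) with hρd
  have hρ : 0 < ρ := Real.sqrt_pos.2 (by positivity)
  have hρ2 : ρ ^ 2 = ε / (2 * ((n + 1) * (V + 1))) := Real.sq_sqrt (by positivity)
  filter_upwards [S.unif T hρ, hB.eventually (gt_mem_nhds (show (n:ℝ) < n + 1 by linarith)),
    self_mem_nhdsWithin] with l h1 h2 hl
  have hl : 1 < l := hl
  have hl' : 0 < l - 1 := by linarith
  have hpt : ∀ x ∈ StarDom.layer Ω l, ‖u x ^ 2‖ ≤ ρ ^ 2 := by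
    intro x hx
    have := h1 x
    rw [S.hz (l • x) (fun h => hx.2 (subset_closure h)), zero_sub, abs_neg] at this
    rw [norm_pow, Real.norm_eq_abs]
    exact pow_le_pow_left₀ (abs_nonneg _) this.le 2
  have hfin : volume (StarDom.layer Ω l) < ⊤ :=
    lt_of_le_of_lt (measure_mono fun x hx => hx.1) T.vol_lt
  have h3 := norm_setIntegral_le_of_norm_le_const hfin hpt
  have h4 := T.layer_vol hl
  rw [Real.norm_eq_abs] at h3
  rw [Real.dist_eq, sub_zero, abs_div, abs_of_pos hl', div_lt_iff₀ hl']
  have h6 : 1 - (l ^ n)⁻¹ < (n + 1) * (l - 1) := by rwa [div_lt_iff₀ hl'] at h2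
  calc _ ≤ _ := h3
    _ ≤ ρ ^ 2 * ((1 - (l ^ n)⁻¹) * V) := by gcongr
    _ ≤ ρ ^ 2 * (((n + 1) * (l - 1)) * (V + 1)) := by gcongr; linarith
    _ = ε / 2 * (l - 1) := by rw [hρ2]; field_simp
    _ < ε * (l - 1) := by nlinarith

lemma cut_lim (T : StarDom Ω κ) (S : Sol n Ω s a u f)
    (hL : Tendsto (fun l => LEn Ω u l / (l - 1)) (𝓝[>] 1) (𝓝 0))
    {g : En n → ℝ} (hg : ContDiffOn ℝ 1 g Ω)
    {C : ℝ} (hC : 0 ≤ C) (hgC : ∀ x ∈ Ω, |g x| ≤ C * (G2 u x + u x ^ 2)) (e : En n) :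
    Tendsto (fun l : ℝ => ∫ x, cut Ω (κ * (1 - l⁻¹)) x * fderiv ℝ g x e) (𝓝[>] 1) (𝓝 0) := by
  have h := ((hL.add (layer_sq T S)).const_mul (8 * C * ‖e‖ / κ))
  rw [add_zero, mul_zero] at h
  refine squeeze_zero_norm' ?_ h
  have h2 : ∀ᶠ l : ℝ in 𝓝[>] 1, l ≤ 2 :=
    mem_nhdsWithin_of_mem_nhds (Iic_mem_nhds (by norm_num))
  filter_upwards [h2, self_mem_nhdsWithin] with l hl2 hl
  have := cut_ibp T S hg hC hgC e hl hl2
  rw [add_div] at this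
  exact this

lemma cut_tendsto (T : StarDom Ω κ) (hn : 0 < n) {x : En n} (hx : x ∈ Ω) :
    ∀ᶠ l : ℝ in 𝓝[>] 1, cut Ω (κ * (1 - l⁻¹)) x = 1 := by
  have hd := cut_dist_pos hn T.ho T.hb hx
  have h : Tendsto (fun l : ℝ => κ * (1 - l⁻¹)) (𝓝[>] 1) (𝓝 (κ * (1 - 1⁻¹))) :=
    ((tendsto_const_nhds.sub ((tendsto_id.mono_left nhdsWithin_le_nhds).inv₀ one_ne_zero))).const_mul κ
  have h2 : ∀ᶠ l : ℝ in 𝓝[>] 1, κ * (1 - l⁻¹) < 2 * infDist x Ωᶜ :=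
    h.eventually (gt_mem_nhds (by norm_num; exact hd))
  filter_upwards [h2, self_mem_nhdsWithin] with l h3 hl
  have hl1 : l⁻¹ < 1 := inv_lt_one_of_one_lt₀ hl
  exact cut_one (mul_pos T.hk (by linarith)) (by linarith)

end Part10

section Part11
open scoped Topology

variable {n : ℕ} {Ω : Set (En n)} {s a κ : ℝ} {u v f : En n → ℝ}

/-- exponentially weighted function -/
def ew (i0 : Fin n) (τ : ℝ) (u : En n → ℝ) (x : En n) : ℝ :=
  Real.exp (τ * EuclideanSpace.proj (𝕜 := ℝ) i0 x) * u x

/-- coordinate vector -/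
def ei (i : Fin n) : En n := EuclideanSpace.single i 1

lemma proj_ei (i0 i : Fin n) :
    EuclideanSpace.proj (𝕜 := ℝ) i0 (ei i) = if i0 = i then (1:ℝ) else 0 := by
  simp [ei]

lemma ew_c2 (i0 : Fin n) (τ : ℝ) (hu : ContDiffOn ℝ 2 u Ω) : ContDiffOn ℝ 2 (ew i0 τ u) Ω := by
  unfold ew
  refine ContDiffOn.mul ?_ hu
  exact (Real.contDiff_exp.comp
    ((contDiff_const (c := τ)).mul (EuclideanSpace.proj (𝕜 := ℝ) i0).contDiff)).contDiffOn

lemma exp_fd (i0 : Fin n) (τ : ℝ) (x : En n) :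
    HasFDerivAt (fun y : En n => Real.exp (τ * EuclideanSpace.proj (𝕜 := ℝ) i0 y))
      (Real.exp (τ * EuclideanSpace.proj (𝕜 := ℝ) i0 x) • (τ • EuclideanSpace.proj (𝕜 := ℝ) i0)) x :=
  (((EuclideanSpace.proj (𝕜 := ℝ) i0).hasFDerivAt (x := x)).const_mul τ).exp

lemma ew_fd (i0 : Fin n) (τ : ℝ) (ho : IsOpen Ω) (hu : ContDiffOn ℝ 2 u Ω) {x : En n} (hx : x ∈ Ω)
    (e : En n) : fderiv ℝ (ew i0 τ u) x e = Real.exp (τ * EuclideanSpace.proj (𝕜 := ℝ) i0 x) *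
      (fderiv ℝ u x e + τ * EuclideanSpace.proj (𝕜 := ℝ) i0 e * u x) := by
  have h := (exp_fd i0 τ x).mul (c2_diff ho hu hx)
  have h' : HasFDerivAt (ew i0 τ u) _ x := h
  rw [h'.fderiv]
  simp only [_root_.add_apply, _root_.smul_apply, smul_eq_mul]
  ring

lemma ew_fd2 (i0 : Fin n) (τ : ℝ) (ho : IsOpen Ω) (hu : ContDiffOn ℝ 2 u Ω) {x : En n} (hx : x ∈ Ω)
    (e : En n) : fderiv ℝ (fderiv ℝ (ew i0 τ u)) x e e =
      Real.exp (τ * EuclideanSpace.proj (𝕜 := ℝ) i0 x) *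
      (fderiv ℝ (fderiv ℝ u) x e e + 2 * τ * EuclideanSpace.proj (𝕜 := ℝ) i0 e * fderiv ℝ u x e
        + τ ^ 2 * (EuclideanSpace.proj (𝕜 := ℝ) i0 e) ^ 2 * u x) := by
  set c := EuclideanSpace.proj (𝕜 := ℝ) i0 e with hc
  have h1 : HasFDerivAt (fun y => fderiv ℝ (ew i0 τ u) y e) _ x :=
    (c2_diff2 ho (ew_c2 i0 τ hu) hx).clm_apply (hasFDerivAt_const e x)
  have h2 : HasFDerivAt (fun y => fderiv ℝ u y e) _ x :=
    (c2_diff2 ho hu hx).clm_apply (hasFDerivAt_const e x)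
  have h3 := (exp_fd i0 τ x).mul (h2.add ((c2_diff ho hu hx).const_mul (τ * c)))
  have h4 : (fun y => fderiv ℝ (ew i0 τ u) y e) =ᶠ[𝓝 x]
      fun y => Real.exp (τ * EuclideanSpace.proj (𝕜 := ℝ) i0 y) *
        (fderiv ℝ u y e + τ * c * u y) := by
    filter_upwards [ho.mem_nhds hx] with y hy
    rw [ew_fd i0 τ ho hu hy]
  have h5 := congrArg (fun L => L e) (h1.unique (h3.congr_of_eventuallyEq h4))
  simp only [_root_.add_apply, _root_.smul_apply, smul_eq_mul,
    ContinuousLinearMap.comp_apply, ContinuousLinearMap.flip_apply, _root_.zero_apply,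
    map_zero, add_zero, zero_add, ← hc, Pi.add_apply] at h5
  rw [h5]
  ring

lemma ew_lap (i0 : Fin n) (τ : ℝ) (S : Sol n Ω s 0 u f) {x : En n} (hx : x ∈ Ω) :
    ∑ i, fderiv ℝ (fderiv ℝ (ew i0 τ u)) x (ei i) (ei i) =
      - ew i0 τ f x + 2 * τ * fderiv ℝ (ew i0 τ u) x (ei i0) - τ ^ 2 * ew i0 τ u x := by
  have hlap : lap n u x = - f x := by
    have := S.eq x hx
    linarith
  have hlap2 : lap n u x = ∑ i, fderiv ℝ (fderiv ℝ u) x (ei i) (ei i) := by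
    unfold lap
    refine Finset.sum_congr rfl fun i _ => ?_
    have h2 : HasFDerivAt (fun y => fderiv ℝ u y (ei i)) _ x :=
      (c2_diff2 S.ho S.c2 hx).clm_apply (hasFDerivAt_const (ei i) x)
    have h3 := congrArg (fun L => L (ei i)) h2.fderiv
    simp only [_root_.add_apply, ContinuousLinearMap.comp_apply,
      ContinuousLinearMap.flip_apply, _root_.zero_apply,
      map_zero, zero_add] at h3
    exact h3
  have e1 : ∑ i, fderiv ℝ (fderiv ℝ (ew i0 τ u)) x (ei i) (ei i) =
      Real.exp (τ * EuclideanSpace.proj (𝕜 := ℝ) i0 x) *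
      (∑ i, fderiv ℝ (fderiv ℝ u) x (ei i) (ei i) + 2 * τ * fderiv ℝ u x (ei i0) + τ ^ 2 * u x) := by
    have : ∀ i, fderiv ℝ (fderiv ℝ (ew i0 τ u)) x (ei i) (ei i) =
      Real.exp (τ * EuclideanSpace.proj (𝕜 := ℝ) i0 x) *
      (fderiv ℝ (fderiv ℝ u) x (ei i) (ei i) +
        (if i0 = i then 2 * τ * fderiv ℝ u x (ei i) + τ ^ 2 * u x else 0)) := by
      intro i
      rw [ew_fd2 i0 τ S.ho S.c2 hx, proj_ei]
      split_ifs <;> ring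
    simp_rw [this]
    rw [← Finset.mul_sum, Finset.sum_add_distrib, Finset.sum_ite_eq]
    simp only [Finset.mem_univ, if_true]
    ring
  rw [e1, ← hlap2, hlap, ew_fd i0 τ S.ho S.c2 hx, proj_ei]
  simp only [if_true]
  unfold ew
  ring

lemma ew_sym (i0 : Fin n) (τ : ℝ) (ho : IsOpen Ω) (hu : ContDiffOn ℝ 2 u Ω) {x : En n} (hx : x ∈ Ω)
    (e e' : En n) : fderiv ℝ (fderiv ℝ (ew i0 τ u)) x e e' =
      fderiv ℝ (fderiv ℝ (ew i0 τ u)) x e' e := by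
  have h := ((ew_c2 i0 τ hu).contDiffAt (ho.mem_nhds hx)).isSymmSndFDerivAt (by simp)
  exact h.eq e e'

/-- first auxiliary field -/
def cg1 (i0 : Fin n) (τ : ℝ) (u : En n → ℝ) (c : ℝ) (i : Fin n) (x : En n) : ℝ :=
  c * (fderiv ℝ (ew i0 τ u) x (ei i) * fderiv ℝ (ew i0 τ u) x (ei i0))

/-- second auxiliary field -/
def cg2 (i0 : Fin n) (τ : ℝ) (u : En n → ℝ) (c : ℝ) (x : En n) : ℝ :=
  2 * (EuclideanSpace.proj (𝕜 := ℝ) i0 x * ew i0 τ u x ^ 2) +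
    c * (τ ^ 2 / 2 * ew i0 τ u x ^ 2 - 1 / 2 * ∑ i, (fderiv ℝ (ew i0 τ u) x (ei i)) ^ 2)

lemma ew_c1e (i0 : Fin n) (τ : ℝ) (ho : IsOpen Ω) (hu : ContDiffOn ℝ 2 u Ω) (e : En n) :
    ContDiffOn ℝ 1 (fun x => fderiv ℝ (ew i0 τ u) x e) Ω :=
  (c2_fderiv ho (ew_c2 i0 τ hu)).clm_apply contDiffOn_const

lemma cg1_c1 (i0 : Fin n) (τ c : ℝ) (i : Fin n) (ho : IsOpen Ω) (hu : ContDiffOn ℝ 2 u Ω) :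
    ContDiffOn ℝ 1 (cg1 i0 τ u c i) Ω :=
  contDiffOn_const.mul ((ew_c1e i0 τ ho hu _).mul (ew_c1e i0 τ ho hu _))

lemma cg2_c1 (i0 : Fin n) (τ c : ℝ) (ho : IsOpen Ω) (hu : ContDiffOn ℝ 2 u Ω) :
    ContDiffOn ℝ 1 (cg2 i0 τ u c) Ω := by
  have hw : ContDiffOn ℝ 1 (ew i0 τ u) Ω := (ew_c2 i0 τ hu).of_le (by norm_num)
  refine (contDiffOn_const.mul ((EuclideanSpace.proj (𝕜 := ℝ) i0).contDiff.contDiffOn.mul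
    (hw.pow 2))).add (contDiffOn_const.mul ((contDiffOn_const.mul (hw.pow 2)).sub
    (contDiffOn_const.mul ?_)))
  exact ContDiffOn.sum fun i _ => (ew_c1e i0 τ ho hu _).pow 2

lemma cg1_fd (i0 : Fin n) (τ c : ℝ) (i : Fin n) (ho : IsOpen Ω) (hu : ContDiffOn ℝ 2 u Ω)
    {x : En n} (hx : x ∈ Ω) : fderiv ℝ (cg1 i0 τ u c i) x (ei i) =
      c * (fderiv ℝ (fderiv ℝ (ew i0 τ u)) x (ei i) (ei i) * fderiv ℝ (ew i0 τ u) x (ei i0) +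
        fderiv ℝ (ew i0 τ u) x (ei i) * fderiv ℝ (fderiv ℝ (ew i0 τ u)) x (ei i) (ei i0)) := by
  have h1 : ∀ e, HasFDerivAt (fun y => fderiv ℝ (ew i0 τ u) y e) _ x := fun e =>
    (c2_diff2 ho (ew_c2 i0 τ hu) hx).clm_apply (hasFDerivAt_const e x)
  have h2 : HasFDerivAt (cg1 i0 τ u c i) _ x := ((h1 (ei i)).mul (h1 (ei i0))).const_mul c
  rw [h2.fderiv]
  simp only [_root_.add_apply, _root_.smul_apply, smul_eq_mul,
    ContinuousLinearMap.comp_apply, ContinuousLinearMap.flip_apply, _root_.zero_apply,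
    map_zero, zero_add]
  ring

lemma cg2_fd (i0 : Fin n) (τ c : ℝ) (ho : IsOpen Ω) (hu : ContDiffOn ℝ 2 u Ω)
    {x : En n} (hx : x ∈ Ω) : fderiv ℝ (cg2 i0 τ u c) x (ei i0) =
      2 * (ew i0 τ u x ^ 2 + EuclideanSpace.proj (𝕜 := ℝ) i0 x *
        (2 * ew i0 τ u x * fderiv ℝ (ew i0 τ u) x (ei i0))) +
      c * (τ ^ 2 * ew i0 τ u x * fderiv ℝ (ew i0 τ u) x (ei i0) -
        ∑ i, fderiv ℝ (ew i0 τ u) x (ei i) * fderiv ℝ (fderiv ℝ (ew i0 τ u)) x (ei i0) (ei i)) := by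
  have h1 : ∀ e, HasFDerivAt (fun y => fderiv ℝ (ew i0 τ u) y e) _ x := fun e =>
    (c2_diff2 ho (ew_c2 i0 τ hu) hx).clm_apply (hasFDerivAt_const e x)
  have hw := c2_diff ho (ew_c2 i0 τ hu) hx
  have hs := HasFDerivAt.fun_sum (u := Finset.univ) (fun i _ => (h1 (ei i)).pow 2)
  have h2 : HasFDerivAt (cg2 i0 τ u c) _ x :=
    (((EuclideanSpace.proj (𝕜 := ℝ) i0).hasFDerivAt.mul (hw.pow 2)).const_mul 2).add
      (((((hw.pow 2).const_mul (τ ^ 2 / 2))).sub (hs.const_mul (1 / 2))).const_mul c)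
  rw [h2.fderiv]
  simp only [_root_.add_apply, _root_.smul_apply, smul_eq_mul,
    ContinuousLinearMap.comp_apply, ContinuousLinearMap.flip_apply, _root_.zero_apply,
    map_zero, zero_add, _root_.sub_apply, _root_.sum_apply, proj_ei,
    if_true, Finset.mul_sum]
  simp only [Nat.add_one_sub_one, pow_one, nsmul_eq_mul, Nat.cast_ofNat, mul_one]
  have : ∀ i, 1 / 2 * (2 * fderiv ℝ (ew i0 τ u) x (ei i) *
      fderiv ℝ (fderiv ℝ (ew i0 τ u)) x (ei i0) (ei i)) = fderiv ℝ (ew i0 τ u) x (ei i) *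
      fderiv ℝ (fderiv ℝ (ew i0 τ u)) x (ei i0) (ei i) := fun i => by ring
  simp only [this]
  ring

lemma carl_alg {W X p y f c R τ : ℝ} (hτ : 0 < τ) (hX : |X| ≤ R) (hc : c = 4 * R ^ 2 / τ)
    (hy : y = -f * p + 2 * τ * p ^ 2) :
    W ^ 2 ≤ 2 * (W ^ 2 + X * (2 * W * p)) + c * y + R ^ 2 / τ ^ 2 * f ^ 2 := by
  have h1 : c * y = 8 * R ^ 2 * p ^ 2 - 4 * R ^ 2 * (f / τ * p) := by
    rw [hc, hy]; field_simp; ring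
  have h2 : R ^ 2 / τ ^ 2 * f ^ 2 = R ^ 2 * (f / τ) ^ 2 := by field_simp
  rw [h1, h2]
  set F := f / τ
  have hX2 : X ^ 2 ≤ R ^ 2 := by
    rw [← sq_abs X]; exact pow_le_pow_left₀ (abs_nonneg _) hX 2
  nlinarith [sq_nonneg (W + 2 * X * p), mul_nonneg (sq_nonneg R) (sq_nonneg (2 * p - F)),
    mul_nonneg (sub_nonneg.2 hX2) (sq_nonneg p)]

lemma carl_pt (i0 : Fin n) {τ R c : ℝ} (hτ : 0 < τ) (S : Sol n Ω s 0 u f)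
    (hR : ∀ x ∈ Ω, ‖x‖ ≤ R) (hc : c = 4 * R ^ 2 / τ) {x : En n} (hx : x ∈ Ω) :
    ew i0 τ u x ^ 2 ≤ fderiv ℝ (cg2 i0 τ u c) x (ei i0) +
      ∑ i, fderiv ℝ (cg1 i0 τ u c i) x (ei i) + R ^ 2 / τ ^ 2 * ew i0 τ f x ^ 2 := by
  rw [cg2_fd i0 τ c S.ho S.c2 hx]
  simp_rw [cg1_fd i0 τ c _ S.ho S.c2 hx, ew_sym i0 τ S.ho S.c2 hx _ (ei i0)]
  rw [← Finset.mul_sum, Finset.sum_add_distrib, ← Finset.sum_mul, ew_lap i0 τ S hx]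
  have hX : |EuclideanSpace.proj (𝕜 := ℝ) i0 x| ≤ R :=
    (by simpa using PiLp.norm_apply_le x i0 : |EuclideanSpace.proj (𝕜 := ℝ) i0 x| ≤ ‖x‖).trans
      (hR x hx)
  have := carl_alg (W := ew i0 τ u x) (p := fderiv ℝ (ew i0 τ u) x (ei i0)) (f := ew i0 τ f x)
    hτ hX hc rfl
  refine this.trans (le_of_eq ?_)
  ring

lemma ew_bounds (i0 : Fin n) {τ R : ℝ} (hτ : 0 < τ) (S : Sol n Ω s a u f)
    (hR : ∀ x ∈ Ω, ‖x‖ ≤ R) {x : En n} (hx : x ∈ Ω) :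
    ew i0 τ u x ^ 2 ≤ Real.exp (τ * R) ^ 2 * (G2 u x + u x ^ 2) ∧
    ∑ i, (fderiv ℝ (ew i0 τ u) x (ei i)) ^ 2 ≤
      2 * Real.exp (τ * R) ^ 2 * (1 + τ ^ 2) * (G2 u x + u x ^ 2) := by
  have hX : |EuclideanSpace.proj (𝕜 := ℝ) i0 x| ≤ R :=
    (by simpa using PiLp.norm_apply_le x i0 : |EuclideanSpace.proj (𝕜 := ℝ) i0 x| ≤ ‖x‖).trans
      (hR x hx)
  have hE : Real.exp (τ * EuclideanSpace.proj (𝕜 := ℝ) i0 x) ^ 2 ≤ Real.exp (τ * R) ^ 2 := by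
    have := (abs_le.1 hX).2
    gcongr
  have hG := G2_nonneg u x
  have hu := sq_nonneg (u x)
  constructor
  · unfold ew
    rw [mul_pow]
    gcongr
    linarith
  · have h1 : ∀ i, (fderiv ℝ (ew i0 τ u) x (ei i)) ^ 2 ≤ 2 * Real.exp (τ * R) ^ 2 *
        ((fderiv ℝ u x (ei i)) ^ 2 + if i0 = i then τ ^ 2 * u x ^ 2 else 0) := by
      intro i
      rw [ew_fd i0 τ S.ho S.c2 hx, proj_ei, mul_pow]
      calc _ ≤ Real.exp (τ * R) ^ 2 * (fderiv ℝ u x (ei i) +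
            τ * (if i0 = i then (1:ℝ) else 0) * u x) ^ 2 := by gcongr
        _ ≤ Real.exp (τ * R) ^ 2 * (2 *
          ((fderiv ℝ u x (ei i)) ^ 2 + if i0 = i then τ ^ 2 * u x ^ 2 else 0)) := by
            gcongr
            split_ifs
            · nlinarith [sq_nonneg (fderiv ℝ u x (ei i) - τ * u x)]
            · nlinarith [sq_nonneg (fderiv ℝ u x (ei i))]
        _ = _ := by ring
    calc _ ≤ ∑ i, 2 * Real.exp (τ * R) ^ 2 *
        ((fderiv ℝ u x (ei i)) ^ 2 + if i0 = i then τ ^ 2 * u x ^ 2 else 0) :=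
          Finset.sum_le_sum fun i _ => h1 i
      _ = 2 * Real.exp (τ * R) ^ 2 * (G2 u x + τ ^ 2 * u x ^ 2) := by
          rw [← Finset.mul_sum, Finset.sum_add_distrib, Finset.sum_ite_eq]
          simp only [Finset.mem_univ, if_true]
          rfl
      _ ≤ _ := by
          rw [mul_assoc (2 * Real.exp (τ * R) ^ 2)]
          gcongr
          nlinarith [mul_nonneg (sq_nonneg τ) hG]

lemma cg1_bound (i0 : Fin n) {τ R c : ℝ} (hτ : 0 < τ) (hc : 0 ≤ c) (S : Sol n Ω s a u f)
    (hR : ∀ x ∈ Ω, ‖x‖ ≤ R) (i : Fin n) {x : En n} (hx : x ∈ Ω) :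
    |cg1 i0 τ u c i x| ≤ c * (2 * Real.exp (τ * R) ^ 2 * (1 + τ ^ 2)) * (G2 u x + u x ^ 2) := by
  obtain ⟨-, h⟩ := ew_bounds i0 hτ S hR hx
  have h1 : ∀ j, (fderiv ℝ (ew i0 τ u) x (ei j)) ^ 2 ≤
      2 * Real.exp (τ * R) ^ 2 * (1 + τ ^ 2) * (G2 u x + u x ^ 2) := fun j =>
    (Finset.single_le_sum (f := fun j => (fderiv ℝ (ew i0 τ u) x (ei j)) ^ 2)
      (fun _ _ => sq_nonneg _) (Finset.mem_univ j)).trans h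
  unfold cg1
  rw [abs_mul, abs_of_nonneg hc, mul_assoc c]
  gcongr
  rw [abs_le]
  have a1 := h1 i
  have a2 := h1 i0
  constructor
  · nlinarith [sq_nonneg (fderiv ℝ (ew i0 τ u) x (ei i) + fderiv ℝ (ew i0 τ u) x (ei i0))]
  · nlinarith [sq_nonneg (fderiv ℝ (ew i0 τ u) x (ei i) - fderiv ℝ (ew i0 τ u) x (ei i0))]

lemma cg2_bound (i0 : Fin n) {τ R c : ℝ} (hτ : 0 < τ) (hc : 0 ≤ c) (hR0 : 0 ≤ R)
    (S : Sol n Ω s a u f) (hR : ∀ x ∈ Ω, ‖x‖ ≤ R) {x : En n} (hx : x ∈ Ω) :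
    |cg2 i0 τ u c x| ≤ (2 * R * Real.exp (τ * R) ^ 2 + c * (τ ^ 2 / 2 * Real.exp (τ * R) ^ 2 +
      1 / 2 * (2 * Real.exp (τ * R) ^ 2 * (1 + τ ^ 2)))) * (G2 u x + u x ^ 2) := by
  obtain ⟨h0, h⟩ := ew_bounds i0 hτ S hR hx
  have hX : |EuclideanSpace.proj (𝕜 := ℝ) i0 x| ≤ R :=
    (by simpa using PiLp.norm_apply_le x i0 : |EuclideanSpace.proj (𝕜 := ℝ) i0 x| ≤ ‖x‖).trans
      (hR x hx)
  have hs : 0 ≤ ∑ i, (fderiv ℝ (ew i0 τ u) x (ei i)) ^ 2 :=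
    Finset.sum_nonneg fun _ _ => sq_nonneg _
  unfold cg2
  set w2 := ew i0 τ u x ^ 2
  have hw2 : 0 ≤ w2 := sq_nonneg _
  set Q := G2 u x + u x ^ 2
  set M := Real.exp (τ * R) ^ 2
  set SS := ∑ i, (fderiv ℝ (ew i0 τ u) x (ei i)) ^ 2
  calc _ ≤ |2 * (EuclideanSpace.proj (𝕜 := ℝ) i0 x * w2)| +
        |c * (τ ^ 2 / 2 * w2 - 1 / 2 * SS)| := abs_add_le _ _
    _ ≤ 2 * (R * (M * Q)) + c * (τ ^ 2 / 2 * (M * Q) + 1 / 2 * (2 * M * (1 + τ ^ 2) * Q)) := by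
        refine add_le_add ?_ ?_
        · rw [abs_mul, abs_mul, abs_of_nonneg hw2, abs_two]
          gcongr
        · rw [abs_mul, abs_of_nonneg hc]
          gcongr
          refine (abs_sub _ _).trans ?_
          rw [abs_of_nonneg (by positivity), abs_of_nonneg (by positivity)]
          gcongr
    _ = _ := by ring

lemma ew_cont (i0 : Fin n) (τ : ℝ) (hf : Continuous f) : Continuous (ew i0 τ f) :=
  (Real.continuous_exp.comp (continuous_const.mul
    (EuclideanSpace.proj (𝕜 := ℝ) i0).continuous)).mul hf

lemma ew_int (i0 : Fin n) (τ : ℝ) (hf : Continuous f) (hb : IsBounded Ω) :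
    IntegrableOn (fun x => ew i0 τ f x ^ 2) Ω :=
  (((ew_cont i0 τ hf).pow 2).continuousOn.integrableOn_compact hb.isCompact_closure).mono_set
    subset_closure

lemma carleman (i0 : Fin n) {τ R : ℝ} (hτ : 0 < τ) (hR0 : 0 ≤ R) (T : StarDom Ω κ)
    (S : Sol n Ω s 0 u f) (hL : Tendsto (fun l => LEn Ω u l / (l - 1)) (𝓝[>] 1) (𝓝 0))
    (hR : ∀ x ∈ Ω, ‖x‖ ≤ R) :
    ∫ x in Ω, ew i0 τ u x ^ 2 ≤ R ^ 2 / τ ^ 2 * ∫ x in Ω, ew i0 τ f x ^ 2 := by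
  obtain ⟨c, hc⟩ : ∃ c, c = 4 * R ^ 2 / τ := ⟨_, rfl⟩
  have hc0 : 0 ≤ c := by rw [hc]; positivity
  have l2 := cut_lim T S hL (cg2_c1 i0 τ c S.ho S.c2) (by positivity)
    (fun x hx => cg2_bound i0 hτ hc0 hR0 S hR hx) (ei i0)
  have l1 : ∀ i, Tendsto (fun l : ℝ => ∫ x, cut Ω (κ * (1 - l⁻¹)) x *
      fderiv ℝ (cg1 i0 τ u c i) x (ei i)) (𝓝[>] 1) (𝓝 0) := fun i =>
    cut_lim T S hL (cg1_c1 i0 τ c i S.ho S.c2) (by positivity)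
    (fun x hx => cg1_bound i0 hτ hc0 S hR i hx) (ei i)
  have l3 := (l2.add (tendsto_finsetSum Finset.univ fun i _ => l1 i)).add_const
    (R ^ 2 / τ ^ 2 * ∫ x in Ω, ew i0 τ f x ^ 2)
  simp only [Finset.sum_const_zero, zero_add] at l3
  have hwI := ew_int i0 τ S.hc T.hb
  have l0 : Tendsto (fun l : ℝ => ∫ x in Ω, cut Ω (κ * (1 - l⁻¹)) x * ew i0 τ u x ^ 2) (𝓝[>] 1)
      (𝓝 (∫ x in Ω, ew i0 τ u x ^ 2)) := by
    refine tendsto_integral_filter_of_dominated_convergence (fun x => ew i0 τ u x ^ 2) ?_ ?_ hwI ?_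
    · filter_upwards [self_mem_nhdsWithin] with l hl
      have hl1 : l⁻¹ < 1 := inv_lt_one_of_one_lt₀ hl
      exact (((cut_lip (mul_pos T.hk (by linarith))).continuous.mul
        ((ew_cont i0 τ S.hc).pow 2))).aestronglyMeasurable
    · refine Eventually.of_forall fun l => Eventually.of_forall fun x => ?_
      rw [norm_mul, Real.norm_eq_abs, Real.norm_eq_abs, abs_of_nonneg (cut_nonneg _ _),
        abs_of_nonneg (sq_nonneg (ew i0 τ u x))]
      exact mul_le_of_le_one_left (sq_nonneg _) (cut_le _ _)
    · refine (ae_restrict_iff' T.ho.measurableSet).2 (Eventually.of_forall fun x hx => ?_)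
      refine tendsto_const_nhds.congr' ?_
      filter_upwards [cut_tendsto T S.hn hx] with l hl
      rw [hl, one_mul]
  refine le_of_tendsto_of_tendsto l0 l3 ?_
  filter_upwards [self_mem_nhdsWithin] with l hl
  have hl1 : l⁻¹ < 1 := inv_lt_one_of_one_lt₀ hl
  have hr : 0 < κ * (1 - l⁻¹) := mul_pos T.hk (by linarith)
  set r := κ * (1 - l⁻¹)
  have hcg2 : ContinuousOn (fun x => fderiv ℝ (cg2 i0 τ u c) x (ei i0)) Ω :=
    ((cg2_c1 i0 τ c S.ho S.c2).continuousOn_fderiv_of_isOpen S.ho le_rfl).clm_apply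
      continuousOn_const
  have hcg1 : ∀ i, ContinuousOn (fun x => fderiv ℝ (cg1 i0 τ u c i) x (ei i)) Ω := fun i =>
    ((cg1_c1 i0 τ c i S.ho S.c2).continuousOn_fderiv_of_isOpen S.ho le_rfl).clm_apply
      continuousOn_const
  have I2 := cut_int T.hb hr hcg2
  have I1 := fun i => cut_int T.hb hr (hcg1 i)
  have Is : Integrable (fun x => ∑ i, cut Ω r x * fderiv ℝ (cg1 i0 τ u c i) x (ei i)) :=
    integrable_finsetSum _ fun i _ => I1 i
  have I0 := cut_int T.hb hr ((ew_cont i0 τ S.hc).pow 2).continuousOn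
  have If := ew_int i0 τ S.hf T.hb
  have hout : ∀ x ∉ Ω, cut Ω r x = 0 := fun x hx => cut_zero hr (by
    rw [infDist_zero_of_mem (s := Ωᶜ) hx]; positivity)
  have E2 : ∫ x, cut Ω r x * fderiv ℝ (cg2 i0 τ u c) x (ei i0) =
      ∫ x in Ω, cut Ω r x * fderiv ℝ (cg2 i0 τ u c) x (ei i0) :=
    (setIntegral_eq_integral_of_forall_compl_eq_zero fun x hx => by rw [hout x hx, zero_mul]).symm
  have E1 : ∑ i, ∫ x, cut Ω r x * fderiv ℝ (cg1 i0 τ u c i) x (ei i) =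
      ∫ x in Ω, ∑ i, cut Ω r x * fderiv ℝ (cg1 i0 τ u c i) x (ei i) := by
    rw [integral_finsetSum _ fun i _ => (I1 i).integrableOn]
    refine Finset.sum_congr rfl fun i _ => ?_
    exact (setIntegral_eq_integral_of_forall_compl_eq_zero
      fun x hx => by rw [hout x hx, zero_mul]).symm
  have I3 : IntegrableOn (fun x => cut Ω r x * fderiv ℝ (cg2 i0 τ u c) x (ei i0) +
      ∑ i, cut Ω r x * fderiv ℝ (cg1 i0 τ u c i) x (ei i)) Ω :=
    I2.integrableOn.add Is.integrableOn
  rw [E2, E1, ← integral_const_mul, ← integral_add I2.integrableOn Is.integrableOn,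
    ← integral_add I3 (If.const_mul _)]
  refine setIntegral_mono_on I0.integrableOn (I3.add (If.const_mul _)) T.ho.measurableSet fun x hx => ?_
  rw [← Finset.mul_sum]
  have h1 := mul_le_mul_of_nonneg_left (carl_pt i0 hτ S hR hc hx) (cut_nonneg (Ω := Ω) r x)
  have h2 := mul_le_of_le_one_left
    (mul_nonneg (by positivity : 0 ≤ R ^ 2 / τ ^ 2) (sq_nonneg (ew i0 τ f x))) (cut_le (Ω := Ω) r x)
  linarith

end Part11

section Part12
open scoped Topology

variable {n : ℕ} {Ω : Set (En n)} {s a s₁ a₁ s₂ a₂ κ : ℝ} {u v f g : En n → ℝ}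

lemma unique_cont (T : StarDom Ω κ) (S1 : Sol n Ω s₁ 0 u f) (S2 : Sol n Ω s₂ 0 v g)
    (hL1 : Tendsto (fun l => LEn Ω u l / (l - 1)) (𝓝[>] 1) (𝓝 0))
    (hL2 : Tendsto (fun l => LEn Ω v l / (l - 1)) (𝓝[>] 1) (𝓝 0))
    {K : ℝ} (hK : 0 ≤ K) (h : ∀ x ∈ Ω, f x ^ 2 + g x ^ 2 ≤ K * (u x ^ 2 + v x ^ 2)) :
    ∀ x ∈ Ω, u x = 0 := by
  obtain ⟨R, hR⟩ := T.hb.exists_norm_le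
  have hR' : ∀ x ∈ Ω, ‖x‖ ≤ |R| := fun x hx => (hR x hx).trans (le_abs_self R)
  let i0 : Fin n := ⟨0, S1.hn⟩
  obtain ⟨τ, hτd⟩ : ∃ τ, τ = 2 * |R| ^ 2 * K + 1 := ⟨_, rfl⟩
  have hnn : 0 ≤ |R| ^ 2 * K := by positivity
  have hτ : 0 < τ := by rw [hτd]; linarith
  have c1 := carleman i0 hτ (abs_nonneg R) T S1 hL1 hR'
  have c2 := carleman i0 hτ (abs_nonneg R) T S2 hL2 hR'
  have Iu := ew_int i0 τ S1.hc T.hb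
  have Iv := ew_int i0 τ S2.hc T.hb
  have If := ew_int i0 τ S1.hf T.hb
  have Ig := ew_int i0 τ S2.hf T.hb
  have c3 : (∫ x in Ω, ew i0 τ f x ^ 2) + ∫ x in Ω, ew i0 τ g x ^ 2 ≤
      K * ((∫ x in Ω, ew i0 τ u x ^ 2) + ∫ x in Ω, ew i0 τ v x ^ 2) := by
    rw [← integral_add If Ig, ← integral_add Iu Iv, ← integral_const_mul]
    refine setIntegral_mono_on (If.add Ig) ((Iu.add Iv).const_mul K) T.ho.measurableSet
      fun x hx => ?_
    have := mul_le_mul_of_nonneg_left (h x hx)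
      (sq_nonneg (Real.exp (τ * EuclideanSpace.proj (𝕜 := ℝ) i0 x)))
    unfold ew
    simp only [mul_pow]
    linarith
  have pu : 0 ≤ ∫ x in Ω, ew i0 τ u x ^ 2 := integral_nonneg fun x => sq_nonneg _
  have pv : 0 ≤ ∫ x in Ω, ew i0 τ v x ^ 2 := integral_nonneg fun x => sq_nonneg _
  have c4 : |R| ^ 2 / τ ^ 2 * K ≤ 1 / 2 := by
    rw [div_mul_eq_mul_div, div_le_iff₀ (by positivity)]
    have : τ ≤ τ ^ 2 := by nlinarith
    linarith
  have c5 : (∫ x in Ω, ew i0 τ u x ^ 2) = 0 := by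
    have := mul_le_mul_of_nonneg_left c3 (by positivity : 0 ≤ |R| ^ 2 / τ ^ 2)
    rw [← mul_assoc] at this
    have := mul_le_mul_of_nonneg_right c4 (add_nonneg pu pv)
    nlinarith
  rw [setIntegral_eq_zero_iff_of_nonneg_ae (Eventually.of_forall fun x => sq_nonneg _) Iu] at c5
  have c6 := Measure.eqOn_open_of_ae_eq c5 T.ho ((ew_cont i0 τ S1.hc).pow 2).continuousOn
    continuousOn_const
  intro x hx
  have c7 : ew i0 τ u x ^ 2 = 0 := c6 hx
  have c8 : ew i0 τ u x = 0 := by simpa using c7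
  unfold ew at c8
  exact (mul_eq_zero.1 c8).resolve_left (Real.exp_pos _).ne'

/-- component of the nonlinearity -/
def nfa (p α β l δ a b : ℝ) : ℝ := l * |a| ^ (p - 2) * a + δ * α * |a| ^ (α - 2) * a * |b| ^ β

/-- the potential -/
def nF (p q α β l₁ l₂ δ a b : ℝ) : ℝ :=
  l₁ / p * |a| ^ p + l₂ / q * |b| ^ q + δ * (|a| ^ α * |b| ^ β)

variable {p q α β l l₁ l₂ δ : ℝ}

lemma abs_pow_mul (hp : 1 < p) (x : ℝ) : |x| ^ (p - 2) * x * x = |x| ^ p := by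
  rcases eq_or_ne x 0 with rfl | hx
  · simp [(by linarith : p ≠ 0)]
  · have h0 : |x| ≠ 0 := abs_ne_zero.2 hx
    rw [mul_assoc, ← abs_mul_abs_self x, ← mul_assoc, ← Real.rpow_add_one h0,
      ← Real.rpow_add_one h0]
    ring_nf

lemma cont_pow (hp : 1 < p) : Continuous fun x : ℝ => |x| ^ (p - 2) * x := by
  have h := (contDiff_norm_rpow (E := ℝ) hp).continuous_deriv le_rfl
  have h2 : deriv (fun x : ℝ => ‖x‖ ^ p) = fun x => p * (|x| ^ (p - 2) * x) := by
    ext x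
    rw [← mul_assoc]
    exact (hasDerivAt_abs_rpow x hp).deriv
  rw [h2] at h
  have h3 := h.const_smul p⁻¹
  refine h3.congr fun x => ?_
  show p⁻¹ * (p * (|x| ^ (p - 2) * x)) = _
  rw [inv_mul_cancel_left₀ (by linarith)]

lemma cont_abs (hp : 1 < p) : Continuous fun x : ℝ => |x| ^ p :=
  continuous_abs.rpow_const fun _ => Or.inr (by linarith)

lemma nfa_cont (hp : 1 < p) (hα : 1 < α) (hβ : 1 < β) :
    Continuous fun z : ℝ × ℝ => nfa p α β l δ z.1 z.2 := by
  have h1 := (cont_pow hp).comp (continuous_fst (X := ℝ) (Y := ℝ))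
  have h2 := (cont_pow hα).comp (continuous_fst (X := ℝ) (Y := ℝ))
  have h3 := (cont_abs hβ).comp (continuous_snd (X := ℝ) (Y := ℝ))
  refine ((h1.const_mul l).add ((h2.mul h3).const_mul (δ * α))).congr fun z => ?_
  show l * (|z.1| ^ (p - 2) * z.1) + δ * α * ((|z.1| ^ (α - 2) * z.1) * |z.2| ^ β) = _
  simp only [nfa]
  ring

lemma nfa_mul (hp : 1 < p) (hα : 1 < α) (a b : ℝ) :
    nfa p α β l δ a b * a = l * |a| ^ p + δ * α * (|a| ^ α * |b| ^ β) := by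
  rw [← abs_pow_mul hp a, ← abs_pow_mul hα a]
  unfold nfa
  ring

lemma nF_pot (hα : 1 < α) (hβ : 1 < β) (hp : 1 < p) (hq : 1 < q) :
    Pot (nF p q α β l₁ l₂ δ) (nfa p α β l₁ δ) (fun a b => nfa q β α l₂ δ b a) where
  da a b := by
    have h1 := (hasDerivAt_abs_rpow a hp).const_mul (l₁ / p)
    have h2 := ((hasDerivAt_abs_rpow a hα).mul_const (|b| ^ β)).const_mul δ
    refine ((h1.add_const (l₂ / q * |b| ^ q)).add h2).congr_deriv ?_
    unfold nfa
    have : p ≠ 0 := by linarith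
    field_simp
  db a b := by
    have h1 := (hasDerivAt_abs_rpow b hq).const_mul (l₂ / q)
    have h2 := ((hasDerivAt_abs_rpow b hβ).const_mul (|a| ^ α)).const_mul δ
    refine ((h1.const_add (l₁ / p * |a| ^ p)).add h2).congr_deriv ?_
    unfold nfa
    have : q ≠ 0 := by linarith
    field_simp
  ca := nfa_cont hp hα hβ
  cb := (nfa_cont (l := l₂) (δ := δ) hq hβ hα).comp continuous_swap
  cF := by
    have h1 := (cont_abs hp).comp (continuous_fst (X := ℝ) (Y := ℝ))
    have h2 := (cont_abs hq).comp (continuous_snd (X := ℝ) (Y := ℝ))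
    have h3 := (cont_abs hα).comp (continuous_fst (X := ℝ) (Y := ℝ))
    have h4 := (cont_abs hβ).comp (continuous_snd (X := ℝ) (Y := ℝ))
    exact ((h1.const_mul _).add (h2.const_mul _)).add ((h3.mul h4).const_mul _)
  z := by
    unfold nF
    simp [(by linarith : p ≠ 0), (by linarith : q ≠ 0), (by linarith : α ≠ 0)]

lemma pow_int (hp : 1 < p) (hu : Continuous u) (cu : HasCompactSupport u) :
    Integrable fun x => |u x| ^ p :=
  ((cont_abs hp).comp hu).integrable_of_hasCompactSupport
    (cu.comp_left (g := fun t : ℝ => |t| ^ p) (by simp [(by linarith : p ≠ 0)]))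

lemma mix_int (hα : 1 < α) (hβ : 1 < β) (hu : Continuous u) (cu : HasCompactSupport u)
    (hv : Continuous v) : Integrable fun x => |u x| ^ α * |v x| ^ β :=
  (((cont_abs hα).comp hu).mul ((cont_abs hβ).comp hv)).integrable_of_hasCompactSupport
    (HasCompactSupport.mul_right
      (cu.comp_left (g := fun t : ℝ => |t| ^ α) (by simp [(by linarith : α ≠ 0)])))

lemma nPP (hn : 3 ≤ n) (hα : 1 < α) (hβ : 1 < β) (hp : 1 < p) (hq : 1 < q)
    (hu : Continuous u) (cu : HasCompactSupport u) (hv : Continuous v) (cv : HasCompactSupport v) :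
    PP (nF p q α β l₁ l₂ δ) (nfa p α β l₁ δ) (fun a b => nfa q β α l₂ δ b a) u v =
      -((n:ℝ) - 2) / 2 * (1 / p * (l₁ * (p - 2 * n / ((n:ℝ) - 2))) * ∫ x, |u x| ^ p) +
      -((n:ℝ) - 2) / 2 * (1 / q * (l₂ * (q - 2 * n / ((n:ℝ) - 2))) * ∫ x, |v x| ^ q) +
      -((n:ℝ) - 2) / 2 * (δ * (α + β - 2 * n / ((n:ℝ) - 2)) * ∫ x, |u x| ^ α * |v x| ^ β) := by
  have hn' : (3:ℝ) ≤ n := by exact_mod_cast hn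
  have hn2 : (n:ℝ) - 2 ≠ 0 := by linarith
  have hp0 : p ≠ 0 := by linarith
  have hq0 : q ≠ 0 := by linarith
  have Iu := pow_int hp hu cu
  have Iv := pow_int hq hv cv
  have Im := mix_int hα hβ hu cu hv
  have e1 : ∫ x, nF p q α β l₁ l₂ δ (u x) (v x) = l₁ / p * (∫ x, |u x| ^ p) +
      l₂ / q * (∫ x, |v x| ^ q) + δ * ∫ x, |u x| ^ α * |v x| ^ β := by
    unfold nF
    have I1 : Integrable fun x => l₁ / p * |u x| ^ p + l₂ / q * |v x| ^ q :=
      (Iu.const_mul _).add (Iv.const_mul _)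
    rw [integral_add I1 (Im.const_mul δ), integral_add (Iu.const_mul _) (Iv.const_mul _),
      integral_const_mul, integral_const_mul, integral_const_mul]
  have e2 : ∫ x, nfa p α β l₁ δ (u x) (v x) * u x = l₁ * (∫ x, |u x| ^ p) +
      δ * α * ∫ x, |u x| ^ α * |v x| ^ β := by
    simp_rw [nfa_mul hp hα]
    rw [integral_add (Iu.const_mul _) (Im.const_mul _), integral_const_mul, integral_const_mul]
  have e3 : ∫ x, nfa q β α l₂ δ (v x) (u x) * v x = l₂ * (∫ x, |v x| ^ q) +
      δ * β * ∫ x, |u x| ^ α * |v x| ^ β := by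
    simp_rw [nfa_mul hq hβ, mul_comm (|v _| ^ β)]
    rw [integral_add (Iv.const_mul _) (Im.const_mul _), integral_const_mul, integral_const_mul]
  unfold PP GG
  simp only [one_smul]
  rw [e1, e2, e3]
  field_simp
  ring

lemma int_zero {h : En n → ℝ} (hc : Continuous h) (h0 : ∀ x, 0 ≤ h x) (hi : Integrable h)
    (hz : ∫ x, h x = 0) : ∀ x, h x = 0 := by
  rw [integral_eq_zero_iff_of_nonneg h0 hi] at hz
  have := (hc.ae_eq_iff_eq volume continuous_const).1 hz
  exact fun x => congrFun this x

lemma pow_zero_imp (hp : 1 < p) (hu : Continuous u) (cu : HasCompactSupport u)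
    (hz : ∫ x, |u x| ^ p = 0) : ∀ x, u x = 0 := fun x => by
  have := int_zero ((cont_abs hp).comp hu) (fun x => by show 0 ≤ |u x| ^ p; positivity) (pow_int hp hu cu) hz x
  have h2 : |u x| = 0 := ((Real.rpow_eq_zero_iff_of_nonneg (abs_nonneg _)).1 this).1
  exact abs_eq_zero.1 h2

lemma sys_terms (hn : 3 ≤ n) (hα : 1 < α) (hβ : 1 < β) (hp : 1 < p) (hq : 1 < q)
    (T : StarDom Ω κ)
    (S1 : Sol n Ω s₁ a₁ u (fun x => nfa p α β l₁ δ (u x) (v x)))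
    (S2 : Sol n Ω s₂ a₂ v (fun x => nfa q β α l₂ δ (v x) (u x)))
    (h1 : 0 ≤ δ * ((α + β) - 2 * n / ((n : ℝ) - 2)))
    (h2 : 0 ≤ l₁ * (p - 2 * n / ((n : ℝ) - 2)))
    (h3 : 0 ≤ l₂ * (q - 2 * n / ((n : ℝ) - 2))) :
    PP (nF p q α β l₁ l₂ δ) (nfa p α β l₁ δ) (fun a b => nfa q β α l₂ δ b a) u v = 0 ∧
    l₁ * (p - 2 * n / ((n : ℝ) - 2)) * (∫ x, |u x| ^ p) = 0 ∧
    l₂ * (q - 2 * n / ((n : ℝ) - 2)) * (∫ x, |v x| ^ q) = 0 ∧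
    δ * ((α + β) - 2 * n / ((n : ℝ) - 2)) * (∫ x, |u x| ^ α * |v x| ^ β) = 0 := by
  have hPP := poho_nonneg T (nF_pot (l₁ := l₁) (l₂ := l₂) (δ := δ) hα hβ hp hq) S1 S2
  have e := nPP (l₁ := l₁) (l₂ := l₂) (δ := δ) hn hα hβ hp hq S1.hc S1.cu S2.hc S2.cu
  have hn' : (3:ℝ) ≤ n := by exact_mod_cast hn
  have U : 0 ≤ ∫ x, |u x| ^ p := integral_nonneg fun x => by positivity
  have V : 0 ≤ ∫ x, |v x| ^ q := integral_nonneg fun x => by positivity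
  have M : 0 ≤ ∫ x, |u x| ^ α * |v x| ^ β := integral_nonneg fun x => by positivity
  have x1 : 0 ≤ 1 / p * (l₁ * (p - 2 * n / ((n:ℝ) - 2))) * ∫ x, |u x| ^ p :=
    mul_nonneg (mul_nonneg (by positivity) h2) U
  have x2 : 0 ≤ 1 / q * (l₂ * (q - 2 * n / ((n:ℝ) - 2))) * ∫ x, |v x| ^ q :=
    mul_nonneg (mul_nonneg (by positivity) h3) V
  have x3 : 0 ≤ δ * (α + β - 2 * n / ((n:ℝ) - 2)) * ∫ x, |u x| ^ α * |v x| ^ β := mul_nonneg h1 M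
  set X1 := 1 / p * (l₁ * (p - 2 * n / ((n:ℝ) - 2))) * ∫ x, |u x| ^ p with hX1
  set X2 := 1 / q * (l₂ * (q - 2 * n / ((n:ℝ) - 2))) * ∫ x, |v x| ^ q with hX2
  set X3 := δ * (α + β - 2 * n / ((n:ℝ) - 2)) * ∫ x, |u x| ^ α * |v x| ^ β with hX3
  have z1 : X1 = 0 := by nlinarith
  have z2 : X2 = 0 := by nlinarith
  have z3 : X3 = 0 := by nlinarith
  refine ⟨by rw [e, z1, z2, z3]; ring, ?_, ?_, z3⟩
  · rw [hX1, mul_assoc] at z1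
    exact (mul_eq_zero.1 z1).resolve_left (by positivity)
  · rw [hX2, mul_assoc] at z2
    exact (mul_eq_zero.1 z2).resolve_left (by positivity)

lemma pow_bound {t m B : ℝ} (ht : 1 ≤ t) (hm : 0 ≤ m) (hmB : m ≤ B) :
    m ^ t ≤ B ^ (t - 1) * m := by
  rcases hm.eq_or_lt with rfl | hm
  · simp [Real.zero_rpow (by linarith : t ≠ 0)]
  · calc m ^ t = m ^ (t - 1) * m := by rw [← Real.rpow_add_one hm.ne']; ring_nf
      _ ≤ _ := by gcongr

lemma abs_pow_abs (hp : 1 < p) (x : ℝ) : |x| ^ (p - 2) * |x| = |x| ^ (p - 1) := by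
  rcases eq_or_ne x 0 with rfl | hx
  · simp [Real.zero_rpow (by linarith : p - 1 ≠ 0)]
  · rw [← Real.rpow_add_one (abs_ne_zero.2 hx)]; ring_nf

lemma nfa_bound (hα : 1 < α) (hβ : 1 < β) (hp : 1 < p) (hl : l = 0 ∨ 2 ≤ p)
    (hδ : δ = 0 ∨ 2 ≤ α + β) {B : ℝ} (hB : 0 ≤ B) :
    ∃ C, 0 ≤ C ∧ ∀ a b, |a| ≤ B → |b| ≤ B → nfa p α β l δ a b ^ 2 ≤ C * (a ^ 2 + b ^ 2) := by
  refine ⟨(|l| * B ^ (p - 1 - 1) + |δ * α| * B ^ (α - 1 + β - 1)) ^ 2, sq_nonneg _, fun a b ha hb => ?_⟩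
  obtain ⟨m, hm⟩ : ∃ m, m = max |a| |b| := ⟨_, rfl⟩
  have hma : |a| ≤ m := hm ▸ le_max_left _ _
  have hmb : |b| ≤ m := hm ▸ le_max_right _ _
  have hm0 : 0 ≤ m := (abs_nonneg a).trans hma
  have hmB : m ≤ B := hm ▸ max_le ha hb
  have hm2 : m ^ 2 ≤ a ^ 2 + b ^ 2 := by
    rcases max_choice |a| |b| with h | h <;> rw [hm, h, sq_abs] <;> nlinarith [sq_nonneg a, sq_nonneg b]
  have t1 : |l * |a| ^ (p - 2) * a| ≤ |l| * B ^ (p - 1 - 1) * m := by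
    rw [abs_mul, abs_mul, abs_of_nonneg (by positivity : 0 ≤ |a| ^ (p - 2)), mul_assoc, mul_assoc,
      abs_pow_abs hp]
    rcases hl with rfl | hl
    · simp
    · gcongr
      calc |a| ^ (p - 1) ≤ m ^ (p - 1) := by gcongr
        _ ≤ _ := pow_bound (by linarith) hm0 hmB
  have t2 : |δ * α * |a| ^ (α - 2) * a * |b| ^ β| ≤ |δ * α| * B ^ (α - 1 + β - 1) * m := by
    rw [abs_mul, abs_mul, abs_mul (δ * α), abs_of_nonneg (by positivity : 0 ≤ |a| ^ (α - 2)),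
      abs_of_nonneg (by positivity : 0 ≤ |b| ^ β), mul_assoc |δ * α|, abs_pow_abs hα, mul_assoc,
      mul_assoc]
    rcases hδ with rfl | hδ
    · simp
    · refine mul_le_mul_of_nonneg_left ?_ (abs_nonneg _)
      calc |a| ^ (α - 1) * |b| ^ β ≤ m ^ (α - 1) * m ^ β := by gcongr
        _ = m ^ (α - 1 + β) := by rw [Real.rpow_add_of_nonneg hm0 (by linarith) (by linarith)]
        _ ≤ _ := pow_bound (by linarith) hm0 hmB
  have t3 : |nfa p α β l δ a b| ≤
      (|l| * B ^ (p - 1 - 1) + |δ * α| * B ^ (α - 1 + β - 1)) * m := by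
    unfold nfa
    refine (abs_add_le _ _).trans ?_
    rw [add_mul]
    exact add_le_add t1 t2
  calc nfa p α β l δ a b ^ 2 = |nfa p α β l δ a b| ^ 2 := (sq_abs _).symm
    _ ≤ _ := pow_le_pow_left₀ (abs_nonneg _) t3 2
    _ = (|l| * B ^ (p - 1 - 1) + |δ * α| * B ^ (α - 1 + β - 1)) ^ 2 * m ^ 2 := by ring
    _ ≤ _ := by gcongr

lemma no_pos (hn : 3 ≤ n) (hα : 1 < α) (hβ : 1 < β) (hp : 1 < p) (hq : 1 < q)
    (T : StarDom Ω κ)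
    (S1 : Sol n Ω s₁ a₁ u (fun x => nfa p α β l₁ δ (u x) (v x)))
    (S2 : Sol n Ω s₂ a₂ v (fun x => nfa q β α l₂ δ (v x) (u x)))
    (h1 : 0 ≤ δ * ((α + β) - 2 * n / ((n : ℝ) - 2)))
    (h2 : 0 ≤ l₁ * (p - 2 * n / ((n : ℝ) - 2)))
    (h3 : 0 ≤ l₂ * (q - 2 * n / ((n : ℝ) - 2)))
    (hne : Ω.Nonempty) : ¬ ∀ x ∈ Ω, 0 < u x := by
  intro hpos
  obtain ⟨x0, hx0⟩ := hne
  have hn' : (3:ℝ) ≤ n := by exact_mod_cast hn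
  have hcrit : 2 < 2 * n / ((n : ℝ) - 2) := by
    rw [lt_div_iff₀ (by linarith)]; linarith
  have hu0 : ¬ ∀ x, u x = 0 := fun h => by
    have := hpos x0 hx0
    rw [h x0] at this
    exact lt_irrefl _ this
  obtain ⟨hPP, z1, z2, z3⟩ := sys_terms hn hα hβ hp hq T S1 S2 h1 h2 h3
  obtain ⟨A1, A2, L1, L2⟩ :=
    poho_zero T (nF_pot (l₁ := l₁) (l₂ := l₂) (δ := δ) hα hβ hp hq) S1 S2 hPP
  have ha1 : a₁ = 0 := by
    rcases S1.ha.eq_or_lt with h | h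
    · exact h.symm
    · exact absurd (S1.zero_of_frac h A1) hu0
  subst ha1
  have hU : l₁ = 0 ∨ 2 ≤ p := by
    rcases mul_eq_zero.1 z1 with h | h
    · rcases mul_eq_zero.1 h with h | h
      · exact Or.inl h
      · right; linarith
    · exact absurd (pow_zero_imp hp S1.hc S1.cu h) hu0
  obtain ⟨B1, hB1⟩ := S1.bdd
  obtain ⟨B2, hB2⟩ := S2.bdd
  have b1 : ∀ x, |u x| ≤ max B1 B2 := fun x => (hB1 x).trans (le_max_left _ _)
  have b2 : ∀ x, |v x| ≤ max B1 B2 := fun x => (hB2 x).trans (le_max_right _ _)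
  have hB : 0 ≤ max B1 B2 := (abs_nonneg _).trans (b1 x0)
  by_cases hv : ∀ x, v x = 0
  · obtain ⟨C, hC, hb⟩ := nfa_bound (l := l₁) (δ := 0) hα hβ hp hU (Or.inl rfl) hB
    have := unique_cont T S1 S1 L1 L1 hC (fun x hx => by
      have e := hb (u x) (v x) (b1 x) (b2 x)
      have e2 : nfa p α β l₁ 0 (u x) (v x) = nfa p α β l₁ δ (u x) (v x) := by
        unfold nfa
        rw [hv x]
        simp [Real.zero_rpow (by linarith : β ≠ 0)]
      rw [e2] at e
      have e3 : v x ^ 2 = 0 := by rw [hv x]; ring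
      rw [e3] at e
      nlinarith)
    have h := hpos x0 hx0
    rw [this x0 hx0] at h
    exact lt_irrefl _ h
  · have ha2 : a₂ = 0 := by
      rcases S2.ha.eq_or_lt with h | h
      · exact h.symm
      · exact absurd (S2.zero_of_frac h A2) hv
    subst ha2
    have hV : l₂ = 0 ∨ 2 ≤ q := by
      rcases mul_eq_zero.1 z2 with h | h
      · rcases mul_eq_zero.1 h with h | h
        · exact Or.inl h
        · right; linarith
      · exact absurd (pow_zero_imp hq S2.hc S2.cu h) hv
    have hM : δ = 0 ∨ 2 ≤ α + β := by
      rcases mul_eq_zero.1 z3 with h | h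
      · rcases mul_eq_zero.1 h with h | h
        · exact Or.inl h
        · right; linarith
      · exfalso
        apply hv
        have hz := int_zero (((cont_abs hα).comp S1.hc).mul ((cont_abs hβ).comp S2.hc))
          (fun x => by simp only [Function.comp, Pi.mul_apply]; positivity)
          (mix_int hα hβ S1.hc S1.cu S2.hc) h
        intro x
        by_cases hx : x ∈ Ω
        · have hz' : |u x| ^ α * |v x| ^ β = 0 := hz x
          have hux : |u x| ^ α ≠ 0 := (Real.rpow_pos_of_pos (abs_pos.2 (hpos x hx).ne') _).ne'
          have := (mul_eq_zero.1 hz').resolve_left hux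
          exact abs_eq_zero.1 ((Real.rpow_eq_zero_iff_of_nonneg (abs_nonneg _)).1 this).1
        · exact S2.hz x hx
    obtain ⟨C, hC, hb⟩ := nfa_bound (l := l₁) (δ := δ) hα hβ hp hU hM hB
    obtain ⟨C', hC', hb'⟩ := nfa_bound (l := l₂) (δ := δ) hβ hα hq hV (by rwa [add_comm]) hB
    have := unique_cont T S1 S2 L1 L2 (add_nonneg hC hC') (fun x hx => by
      have e := hb (u x) (v x) (b1 x) (b2 x)
      have e' := hb' (v x) (u x) (b2 x) (b1 x)
      linarith)
    have h := hpos x0 hx0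
    rw [this x0 hx0] at h
    exact lt_irrefl _ h

lemma lap_shift (u : En n → ℝ) (z x : En n) : lap n (fun y => u (y + z)) x = lap n u (x + z) := by
  unfold lap
  refine Finset.sum_congr rfl fun i _ => ?_
  have : (fun y => fderiv ℝ (fun y => u (y + z)) y (EuclideanSpace.single i 1)) =
      fun y => (fun y' => fderiv ℝ u y' (EuclideanSpace.single i 1)) (y + z) := by
    ext y
    rw [fderiv_comp_add_right]
  rw [this]
  exact congrArg (fun L : En n →L[ℝ] ℝ => L (EuclideanSpace.single i 1))
    (fderiv_comp_add_right (𝕜 := ℝ) (f := fun y' => fderiv ℝ u y' (EuclideanSpace.single i 1)) z)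

lemma fracLap_shift (u : En n → ℝ) (z x : En n) :
    fracLap n s (fun y => u (y + z)) x = fracLap n s u (x + z) := by
  unfold fracLap
  congr 2
  ext y
  beta_reduce
  rw [add_right_comm x y z, sub_add_eq_add_sub]

lemma Sol.mk_shift (D : C2Domain n) (z : En n) (hn : 0 < n) (hu2 : ContDiffOn ℝ 2 u D.carrier)
    (huc : Continuous u) (hz : ∀ x ∉ D.carrier, u x = 0) (hf : Continuous f)
    (hs : s ∈ Ioo (0:ℝ) 1) (ha : 0 ≤ a)
    (heq : ∀ x ∈ D.carrier, -lap n u x + a * fracLap n s u x = f x) {κ : ℝ}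
    (T : StarDom {x | x + z ∈ D.carrier} κ) :
    Sol n {x | x + z ∈ D.carrier} s a (fun x => u (x + z)) (fun x => f (x + z)) where
  hn := hn
  ho := T.ho
  hb := T.hb
  c2 := hu2.comp (contDiff_id.add contDiff_const).contDiffOn fun x hx => hx
  hc := huc.comp (continuous_add_const z)
  hz x hx := hz _ hx
  hf := hf.comp (continuous_add_const z)
  hs := hs
  ha := ha
  eq x hx := by
    rw [lap_shift, fracLap_shift]
    exact heq _ hx

end Part12

/-- Corollary 1.4, nonexistence for systems in star-shaped domains:
for the coupled system with power nonlinearities in a bounded strictly star-shaped C²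
domain, under the sign conditions `δ[(α+β)-2*] ≥ 0`, `λ₁(p-2*) ≥ 0`, `λ₂(q-2*) ≥ 0`:
if the last two are strict then `u ≡ 0 ≡ v` in `ℝⁿ`; moreover neither `u` nor `v` can
be strictly positive in `Ω`. -/
theorem nonexistence_system_starshaped (n : ℕ) (hn : 3 ≤ n) (s₁ s₂ a₁ a₂ : ℝ)
    (hs₁ : s₁ ∈ Set.Ioo (0:ℝ) 1) (hs₂ : s₂ ∈ Set.Ioo (0:ℝ) 1)
    (ha₁ : 0 ≤ a₁) (ha₂ : 0 ≤ a₂)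
    (D : C2Domain n) (hD : D.StrictlyStarShaped)
    (α β p q lam₁ lam₂ δ : ℝ)
    (hα : 1 < α) (hβ : 1 < β) (hp : 1 < p) (hq : 1 < q)
    (u v : En n → ℝ)
    (hu2 : ContDiffOn ℝ 2 u D.carrier) (huc : Continuous u)
    (hv2 : ContDiffOn ℝ 2 v D.carrier) (hvc : Continuous v)
    (hequ : ∀ x ∈ D.carrier, -lap n u x + a₁ * fracLap n s₁ u x
      = lam₁ * |u x| ^ (p - 2) * u x + δ * α * |u x| ^ (α - 2) * u x * |v x| ^ β)
    (heqv : ∀ x ∈ D.carrier, -lap n v x + a₂ * fracLap n s₂ v x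
      = lam₂ * |v x| ^ (q - 2) * v x + δ * β * |u x| ^ α * |v x| ^ (β - 2) * v x)
    (hzu : ∀ x ∉ D.carrier, u x = 0) (hzv : ∀ x ∉ D.carrier, v x = 0)
    (h1 : 0 ≤ δ * ((α + β) - 2 * n / ((n : ℝ) - 2)))
    (h2 : 0 ≤ lam₁ * (p - 2 * n / ((n : ℝ) - 2)))
    (h3 : 0 ≤ lam₂ * (q - 2 * n / ((n : ℝ) - 2))) :
    (0 < lam₁ * (p - 2 * n / ((n : ℝ) - 2)) →
      0 < lam₂ * (q - 2 * n / ((n : ℝ) - 2)) →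
      (∀ x, u x = 0) ∧ (∀ x, v x = 0)) ∧
    ¬ (∀ x ∈ D.carrier, 0 < u x) ∧ ¬ (∀ x ∈ D.carrier, 0 < v x) := by
  obtain ⟨z, hz⟩ := hD
  obtain ⟨κ, T⟩ := C2Domain.star D hz
  have hne : ({x | x + z ∈ D.carrier} : Set (En n)).Nonempty := ⟨0, by
    show (0:En n) + z ∈ D.carrier
    rw [zero_add]; exact hz.1⟩
  have S1 : Sol n {x | x + z ∈ D.carrier} s₁ a₁ (fun x => u (x + z))
      (fun x => nfa p α β lam₁ δ (u (x + z)) (v (x + z))) :=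
    Sol.mk_shift (f := fun x => nfa p α β lam₁ δ (u x) (v x)) D z (by omega) hu2 huc hzu
      ((nfa_cont hp hα hβ).comp (huc.prodMk hvc)) hs₁ ha₁ (fun x hx => hequ x hx) T
  have S2 : Sol n {x | x + z ∈ D.carrier} s₂ a₂ (fun x => v (x + z))
      (fun x => nfa q β α lam₂ δ (v (x + z)) (u (x + z))) :=
    Sol.mk_shift (f := fun x => nfa q β α lam₂ δ (v x) (u x)) D z (by omega) hv2 hvc hzv
      ((nfa_cont hq hβ hα).comp (hvc.prodMk huc)) hs₂ ha₂ (fun x hx => by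
        rw [heqv x hx]
        unfold nfa
        ring) T
  refine ⟨fun k2 k3 => ?_, fun hpos => ?_, fun hpos => ?_⟩
  · obtain ⟨-, z1, z2, -⟩ := sys_terms hn hα hβ hp hq T S1 S2 h1 h2 h3
    have y1 := pow_zero_imp hp S1.hc S1.cu ((mul_eq_zero.1 z1).resolve_left k2.ne')
    have y2 := pow_zero_imp hq S2.hc S2.cu ((mul_eq_zero.1 z2).resolve_left k3.ne')
    exact ⟨fun x => by simpa using y1 (x - z), fun x => by simpa using y2 (x - z)⟩
  · exact no_pos hn hα hβ hp hq T S1 S2 h1 h2 h3 hne fun x hx => hpos _ hx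
  · exact no_pos hn hβ hα hq hp T S2 S1 (by rwa [add_comm β α]) h3 h2 hne fun x hx => hpos _ hx
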